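/- arXiv:2306.03420 — 5 statements merged into one kernel-verified Lean document; each statement's English description precedes it below -/
import Mathlib

section
/- Let p be a prime and let n ≥ 1 be a natural number. In the polynomial ring 𝔽_p[X] one has (X + 1)^n = X^n + 1 if and only if n is a power of p, i.e., if and only if there exists m ∈ ℕ with n = p^m. -/
/-!
If `(X + 1) ^ n = X ^ n + 1`, the coefficients of `(X + 1) ^ n` vanish off the degrees `0` and `n`.
In characteristic `p`, write `n = p ^ k * m` with `p ∤ m` and look at degree `p ^ k`: by Lucas'
theorem its coefficient is `m.choose 1 = m`, which is nonzero modulo `p`, so `p ^ k = n`.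
In characteristic zero the coefficient `n` in degree `1` already forces `n = 1`.
-/

section

open Polynomial

theorem natCast_choose_eq_zero_of_X_add_one_pow_eq {R : Type*} [Semiring R] {n k : ℕ}
    (h : (X + 1 : R[X]) ^ n = X ^ n + 1) (hk : k ≠ 0) (hkn : k ≠ n) : (n.choose k : R) = 0 := by
  rw [← coeff_X_add_one_pow, h, coeff_add, coeff_X_pow, coeff_one, if_neg hkn, if_neg hk, add_zero]

theorem exists_eq_expChar_pow_of_natCast_choose_eq_zero {R : Type*} [AddMonoidWithOne R] {p n : ℕ}
    [hR : ExpChar R p] (hn : n ≠ 0) (h : ∀ k, k ≠ 0 → k ≠ n → (n.choose k : R) = 0) :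
    ∃ m, n = p ^ m := by
  obtain _ | hp := hR
  · suffices n = 1 from ⟨0, this⟩
    by_contra hn_one
    have hcoeff : (n.choose 1 : R) = 0 := h 1 one_ne_zero (Ne.symm hn_one)
    exact hn (by simpa using hcoeff)
  · have : Fact p.Prime := ⟨hp⟩
    refine ⟨_, Choose.eq_pow_multiplicity_of_choose_modEq_zero_nat hn.pos fun k hk ↦ ?_⟩
    obtain ⟨hk_pos, hk_le⟩ := Finset.mem_Icc.mp hk
    exact Nat.modEq_zero_iff_dvd.mpr <|
      (CharP.cast_eq_zero_iff R p _).mp <| h k (by lia) (by lia)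

theorem one_add_one_ne_one_of_expChar (R : Type*) [AddMonoidWithOne R] (p : ℕ)
    [hR : ExpChar R p] : (1 + 1 : R) ≠ 1 := by
  intro h
  obtain _ | hp := hR
  · exact absurd (by exact_mod_cast h : 1 + 1 = 1) (by decide)
  · -- Addition in `R` is not assumed cancellative, but `p - 1` acts as a right negative of `1`.
    have one_add_pred : (1 + (p - 1 : ℕ) : R) = 0 := by
      rw [← Nat.cast_one, ← Nat.cast_add, Nat.add_sub_of_le hp.one_le, CharP.cast_eq_zero]
    have one_eq_zero : ((1 : ℕ) : R) = 0 := calc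
      ((1 : ℕ) : R) = 1 + (1 + (p - 1 : ℕ)) := by rw [one_add_pred, add_zero, Nat.cast_one]
      _ = 1 + (p - 1 : ℕ) := by rw [← add_assoc, h]
      _ = 0 := one_add_pred
    exact hp.one_lt.ne' (Nat.dvd_one.mp <| (CharP.cast_eq_zero_iff R p 1).mp one_eq_zero)

theorem ne_zero_of_X_add_one_pow_eq {R : Type*} [Semiring R] (p : ℕ) [ExpChar R p] {n : ℕ}
    (h : (X + 1 : R[X]) ^ n = X ^ n + 1) : n ≠ 0 := by
  rintro rfl
  rw [pow_zero, pow_zero] at h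
  exact one_add_one_ne_one_of_expChar R[X] p h.symm

theorem freshman_dream_iff_pow_of_prime_general {R : Type*} [Semiring R] (p : ℕ) [ExpChar R p]
    (n : ℕ) : (X + 1 : R[X]) ^ n = X ^ n + 1 ↔ ∃ m : ℕ, n = p ^ m := by
  constructor
  · intro h
    exact exists_eq_expChar_pow_of_natCast_choose_eq_zero (ne_zero_of_X_add_one_pow_eq p h)
      fun _ ↦ natCast_choose_eq_zero_of_X_add_one_pow_eq h
  · rintro ⟨m, rfl⟩
    rw [add_pow_expChar_pow_of_commute p m (Commute.one_right X), one_pow]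

end

/-- Let `p` be a prime and `n ≥ 1`. In `𝔽_p[X]` one has `(X + 1)^n = X^n + 1`
if and only if `n` is a power of `p`. -/
theorem freshman_dream_iff_pow_of_prime (p : ℕ) (hp : p.Prime) (n : ℕ) (hn : 1 ≤ n) :
    (Polynomial.X + 1 : Polynomial (ZMod p)) ^ n = Polynomial.X ^ n + 1 ↔
      ∃ m : ℕ, n = p ^ m :=
  have : Fact p.Prime := ⟨hp⟩
  freshman_dream_iff_pow_of_prime_general p n
end

section
/- Let p be a prime, let L = 𝔽_p(t) be the field of rational functions in one variable t over 𝔽_p, and let n ∈ ℤ. Then (t + 1)^n = t^n + 1 holds in L (with integer exponents interpreted as zpow on the nonzero elements t and t + 1) if and only if there exists m ∈ ℕ with n = p^m. -/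
/-!
As `t` is transcendental, polynomial identities in `t` can be checked in `R[X]`. For `n > 0`, write
`n = p ^ m * r` with `r` nonzero in `R`. The iterated Frobenius reduces the identity for `n` to the
identity for `r`, in which the coefficient of `X` forces `r = 1`. For a negative exponent `-k`,
clearing denominators gives `X ^ k = (X ^ k + 1) * (X + 1) ^ k`, which fails at `X = 0`.
-/

open Polynomial

theorem nontrivial_of_expChar (R : Type*) [NonAssocSemiring R] (p : ℕ) [ExpChar R p] :
    Nontrivial R := by
  cases ‹ExpChar R p› with
  | zero => infer_instance
  | prime hp => exact CharP.nontrivial_of_char_ne_one hp.ne_one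

theorem exists_eq_expChar_pow_mul_and_natCast_ne_zero (R : Type*) [AddMonoidWithOne R]
    (p : ℕ) [ExpChar R p] {n : ℕ} (hn : n ≠ 0) :
    ∃ m r : ℕ, n = p ^ m * r ∧ (r : R) ≠ 0 := by
  cases ‹ExpChar R p› with
  | zero => exact ⟨0, n, by simp, Nat.cast_ne_zero.mpr hn⟩
  | prime hp =>
    obtain ⟨m, r, hr, hnr⟩ := Nat.exists_eq_pow_mul_and_not_dvd hn p hp.ne_one
    exact ⟨m, r, hnr, mt (CharP.cast_eq_zero_iff R p r).mp hr⟩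

theorem eq_one_or_natCast_eq_zero_of_X_add_one_pow_eq {R : Type*} [Semiring R] {n : ℕ}
    (h : (X + 1 : R[X]) ^ n = X ^ n + 1) : n = 1 ∨ (n : R) = 0 := by
  refine or_iff_not_imp_left.mpr fun hn ↦ ?_
  have hcoeff : (n : R) = ((X : R[X]) ^ n + 1).coeff 1 := by
    rw [← h, coeff_X_add_one_pow, Nat.choose_one_right]
  simpa [coeff_X_pow, coeff_one, Ne.symm hn] using hcoeff

theorem X_add_one_pow_expChar_pow_mul_eq_iff {R : Type*} [CommSemiring R] (p : ℕ) [ExpChar R p]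
    (m r : ℕ) :
    (X + 1 : R[X]) ^ (p ^ m * r) = X ^ (p ^ m * r) + 1 ↔ (X + 1 : R[X]) ^ r = X ^ r + 1 := by
  rw [pow_mul, pow_mul, add_pow_expChar_pow, one_pow,
    ← expand_inj (f := (X + 1) ^ r) (expChar_pow_pos R p m)]
  simp only [map_pow, map_add, map_one, expand_X]

theorem X_add_one_pow_eq_iff_exists_expChar_pow {R : Type*} [CommRing R] (p : ℕ) [ExpChar R p]
    {n : ℕ} :
    (X + 1 : R[X]) ^ n = X ^ n + 1 ↔ ∃ m : ℕ, n = p ^ m := by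
  constructor
  · intro h
    have : Nontrivial R := nontrivial_of_expChar R p
    have hn : n ≠ 0 := by
      rintro rfl
      simp at h
    obtain ⟨m, r, rfl, hr⟩ := exists_eq_expChar_pow_mul_and_natCast_ne_zero R p hn
    rw [X_add_one_pow_expChar_pow_mul_eq_iff] at h
    have hr_one : r = 1 := (eq_one_or_natCast_eq_zero_of_X_add_one_pow_eq h).resolve_right hr
    exact ⟨m, by rw [hr_one, mul_one]⟩
  · rintro ⟨m, rfl⟩
    simpa using (X_add_one_pow_expChar_pow_mul_eq_iff (R := R) p m 1).mpr (by simp)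

section Transcendental

variable {R L : Type*} [CommRing R]

theorem add_one_pow_eq_iff_X_add_one_pow_eq [Ring L] [Algebra R L] {t : L}
    (ht : Transcendental R t) (n : ℕ) :
    (t + 1) ^ n = t ^ n + 1 ↔ (X + 1 : R[X]) ^ n = X ^ n + 1 := by
  rw [← (transcendental_iff_injective.mp ht).eq_iff]
  simp only [map_pow, map_add, map_one, aeval_X]

variable [DivisionRing L] [Algebra R L] {t : L}

theorem nonneg_of_add_one_zpow_eq (ht : Transcendental R t) {n : ℤ}
    (h : (t + 1) ^ n = t ^ n + 1) : 0 ≤ n := by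
  by_contra! hn
  obtain ⟨k, rfl⟩ := Int.exists_eq_neg_ofNat hn.le
  have : Nontrivial R := (algebraMap R L).domain_nontrivial
  have ht_zero : t ≠ 0 := fun h0 ↦ ht (h0 ▸ isAlgebraic_zero)
  have ht_add_one : t + 1 ≠ 0 := fun h0 ↦
    ht (eq_neg_of_add_eq_zero_left h0 ▸ isAlgebraic_one.neg)
  have h_cleared : t ^ k = (t ^ k + 1) * (t + 1) ^ k := by
    rw [zpow_neg, zpow_neg, zpow_natCast, zpow_natCast] at h
    calc
      t ^ k = t ^ k * ((t + 1) ^ k)⁻¹ * (t + 1) ^ k :=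
        (inv_mul_cancel_right₀ (pow_ne_zero k ht_add_one) _).symm
      _ = t ^ k * ((t ^ k)⁻¹ + 1) * (t + 1) ^ k := by rw [h]
      _ = (t ^ k + 1) * (t + 1) ^ k := by
        rw [mul_add, mul_inv_cancel₀ (pow_ne_zero k ht_zero), mul_one, add_comm]
  have h_poly : (X : R[X]) ^ k = (X ^ k + 1) * (X + 1) ^ k :=
    transcendental_iff_injective.mp ht (by simpa using h_cleared)
  have hk : k ≠ 0 := by lia
  simpa [hk] using congrArg (eval 0) h_poly

theorem zpow_freshman_dream_iff_pow_of_prime_general (p : ℕ) [ExpChar R p]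
    (ht : Transcendental R t) (n : ℤ) :
    (t + 1) ^ n = t ^ n + 1 ↔ ∃ m : ℕ, n = (p : ℤ) ^ m := by
  obtain hn | hn := lt_or_ge n 0
  · refine iff_of_false (fun h ↦ hn.not_ge (nonneg_of_add_one_zpow_eq ht h)) ?_
    rintro ⟨m, rfl⟩
    exact hn.not_ge (by positivity)
  · lift n to ℕ using hn
    simp only [zpow_natCast]
    rw [add_one_pow_eq_iff_X_add_one_pow_eq ht, X_add_one_pow_eq_iff_exists_expChar_pow p]
    norm_cast

end Transcendental

/-- Let `p` be a prime, `L = 𝔽_p(t)` the rational function field over `𝔽_p`, and `n : ℤ`.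
Then `(t + 1)^n = t^n + 1` in `L` (integer exponents) iff `n = p^m` for some `m : ℕ`. -/
theorem zpow_freshman_dream_iff_pow_of_prime (p : ℕ) (hp : p.Prime) (n : ℤ) :
    haveI : Fact p.Prime := ⟨hp⟩
    ((RatFunc.X : RatFunc (ZMod p)) + 1) ^ n = (RatFunc.X : RatFunc (ZMod p)) ^ n + 1 ↔
      ∃ m : ℕ, n = (p : ℤ) ^ m := by
  have : Fact p.Prime := ⟨hp⟩
  exact zpow_freshman_dream_iff_pow_of_prime_general p
    (RatFunc.transcendental_X (K := ZMod p)) n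
end

section
/- (Main theorem, torus case.) Let K be an algebraically closed field of characteristic p > 0, let N ≥ 1, let X be a subvariety of (Kˣ)^N, and let Γ be a finitely generated subgroup of (Kˣ)^N. Then the intersection X ∩ Γ is a union of finitely many groupless F-sets in Γ together with finitely many generalized F-sets in Γ. -/
/-- `X` is a subvariety of the torus `(Kˣ)^N`: the common zero set in `(Kˣ)^N` of a
family of polynomials in `N` variables over `K`. -/
def IsTorusSubvariety (K : Type*) [Field K] {N : ℕ} (X : Set (Fin N → Kˣ)) : Prop :=
  ∃ 𝒮 : Set (MvPolynomial (Fin N) K),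
    X = {x | ∀ f ∈ 𝒮, MvPolynomial.eval (fun i => (x i : K)) f = 0}

/-- `S` is a groupless `F`-set in the subgroup `Γ` of `(Kˣ)^N`: a subset of `Γ` of the
form `{α₀ · ∏_{i=1}^r F_q^{k·n_i}(α_i) : n_1, …, n_r ∈ ℕ}` for some `r ≥ 0`, `k ≥ 1`,
a power `q = p^a` of `p`, and `α₀, …, α_r ∈ (Kˣ)^N`, where `F_q : x ↦ x^q` is the
`q`-power Frobenius of the torus. -/
def IsGrouplessFSet {K : Type*} [Field K] (p : ℕ) {N : ℕ}
    (Γ : Subgroup (Fin N → Kˣ)) (S : Set (Fin N → Kˣ)) : Prop :=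
  S ⊆ ↑Γ ∧ ∃ (a : ℕ), 1 ≤ a ∧ ∃ (r k : ℕ), 1 ≤ k ∧
    ∃ (α₀ : Fin N → Kˣ) (α : Fin r → Fin N → Kˣ),
      S = {g | ∃ n : Fin r → ℕ, g = α₀ * ∏ i : Fin r, (α i) ^ ((p ^ a) ^ (k * n i))}

/-- The homomorphism of tori `(Kˣ)^N → (Kˣ)^M` given by the monomial map associated to
an integer matrix `A`. -/
def monomialMap {K : Type*} [Field K] {N M : ℕ} (A : Fin M → Fin N → ℤ) :
    (Fin N → Kˣ) →* (Fin M → Kˣ) where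
  toFun x := fun i => ∏ j, x j ^ A i j
  map_one' := by
    funext i
    simp
  map_mul' x y := by
    funext i
    simp [mul_zpow, Finset.prod_mul_distrib]

/-- `S` is a generalized `F`-set in the subgroup `Γ` of `(Kˣ)^N`: a set of the form
`(π|_Γ)⁻¹(S₀)` where `π : (Kˣ)^N → (Kˣ)^M` is a surjective homomorphism of tori with
`M < N` (so the kernel of `π` has positive dimension) and `S₀` is a groupless `F`-set
in the subgroup `π(Γ)` of `(Kˣ)^M`. -/
def IsGeneralizedFSet {K : Type*} [Field K] (p : ℕ) {N : ℕ}
    (Γ : Subgroup (Fin N → Kˣ)) (S : Set (Fin N → Kˣ)) : Prop :=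
  ∃ (M : ℕ), M < N ∧ ∃ A : Fin M → Fin N → ℤ,
    Function.Surjective (monomialMap (K := K) A) ∧
      ∃ S₀ : Set (Fin M → Kˣ), IsGrouplessFSet p (Γ.map (monomialMap (K := K) A)) S₀ ∧
        S = {g | g ∈ Γ ∧ monomialMap (K := K) A g ∈ S₀}

/-!
Write `Γ` additively. On `Γ`, the condition `x ∈ X` says that the vector `v x` of the values at `x`
of finitely many characters, taken in a finitely generated field `k`, lies in a subspace `V`. The
set `Z = {x | v x ∈ V}` is analysed by induction on `V`.

For each `n`, the classes of `Γ` modulo `p ^ n` whose vectors in `V` span a proper subspace are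
covered by the induction hypothesis. If a class spans `V`, then up to values of characters `V` is
spanned by vectors of `p ^ n`-th powers in `k`, and the coefficients of its reduced echelon basis
are `p ^ n`-th powers up to values of differences of characters. Hence, if the induction hypothesis
never covers all of `Z`, these coefficients form a point `a` that is divisible by every `p ^ n`
modulo the image of a homomorphism `Φ`. As the `p`-saturation in `kˣ` of a finitely generated group
is finitely generated, `a` is then fixed modulo this image by some `q = p ^ κ`, say
`a = q • a + Φ c`. The equations of `Z` say that certain sums of coordinates of `a - Φ x` are `1`,
which is invariant under Frobenius; so `y ↦ q • y + Φ c` maps `Φ '' Z` into itself, and every point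
outside a part known by induction is the image of another one. Thus `Φ '' Z` consists of forward
orbits of the known part and of finitely many points.

An orbit of a set `g₀ + ∑ (1 + q + ⋯ + q ^ (n i - 1)) • g i + H` lies in such a set with one more
`g i`, still inside `Z` because a subspace mapped into itself by an injective semilinear map is
equal to its image. Finally, if `H` is finite these sets are unions of groupless `F`-sets; otherwise
`H` may be replaced by its Zariski closure, the kernel of a monomial map to a smaller torus.
-/

open Function Set

/-- The finite unions of sets with the property `P`. An inductive predicate is used so that
statements about such unions can be proved one piece at a time. -/
inductive IsFiniteUnion {α : Type*} (P : Set α → Prop) : Set α → Prop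
  | empty : IsFiniteUnion P ∅
  | of {S : Set α} (hS : P S) : IsFiniteUnion P S
  | union {S T : Set α} (hS : IsFiniteUnion P S) (hT : IsFiniteUnion P T) :
    IsFiniteUnion P (S ∪ T)

namespace IsFiniteUnion

variable {α β ι : Type*} {P : Set α → Prop} {Q : Set β → Prop} {S : Set α}

theorem biUnion {I : Set ι} (hI : I.Finite) {S : ι → Set α}
    (hS : ∀ i ∈ I, IsFiniteUnion P (S i)) : IsFiniteUnion P (⋃ i ∈ I, S i) := by
  induction I, hI using Set.Finite.induction_on with
  | empty => simpa using empty
  | insert _ _ ih =>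
    rw [biUnion_insert]
    exact (hS _ (mem_insert _ _)).union (ih fun i hi => hS i (mem_insert_of_mem _ hi))

theorem iUnion [Finite ι] {S : ι → Set α} (hS : ∀ i, IsFiniteUnion P (S i)) :
    IsFiniteUnion P (⋃ i, S i) := by
  simpa using biUnion finite_univ fun i _ => hS i

theorem image (hS : IsFiniteUnion P S) (f : α → β)
    (hf : ∀ T, P T → IsFiniteUnion Q (f '' T)) : IsFiniteUnion Q (f '' S) := by
  induction hS with
  | empty => simpa using empty
  | of hT => exact hf _ hT
  | union _ _ ihS ihT => simpa only [image_union] using ihS.union ihT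

theorem preimage (hS : IsFiniteUnion P S) (f : β → α)
    (hf : ∀ T, P T → IsFiniteUnion Q (f ⁻¹' T)) : IsFiniteUnion Q (f ⁻¹' S) := by
  induction hS with
  | empty => exact empty
  | of hT => exact hf _ hT
  | union _ _ ihS ihT => exact ihS.union ihT

theorem exists_between (hS : IsFiniteUnion P S) {u : α → Set β} {W : Set β}
    (h : ∀ T ⊆ S, P T → ∃ T', IsFiniteUnion Q T' ∧ T' ⊆ W ∧ ∀ x ∈ T, u x ⊆ T') :
    ∃ S', IsFiniteUnion Q S' ∧ S' ⊆ W ∧ ∀ x ∈ S, u x ⊆ S' := by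
  induction hS with
  | empty => exact ⟨∅, empty, empty_subset _, by simp⟩
  | of hT => exact h _ subset_rfl hT
  | union _ _ ihS ihT =>
    obtain ⟨S', hS', hSW, huS⟩ := ihS fun T hT => h T (hT.trans subset_union_left)
    obtain ⟨T', hT', hTW, huT⟩ := ihT fun T hT => h T (hT.trans subset_union_right)
    refine ⟨S' ∪ T', hS'.union hT', union_subset hSW hTW, ?_⟩
    rintro x (hx | hx)
    · exact (huS x hx).trans subset_union_left
    · exact (huT x hx).trans subset_union_right

theorem exists_fin (hS : IsFiniteUnion P S) :
    ∃ (n : ℕ) (T : Fin n → Set α), (∀ i, P (T i)) ∧ S = ⋃ i, T i := by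
  induction hS with
  | empty => exact ⟨0, Fin.elim0, fun i => i.elim0, by simp⟩
  | of hT => exact ⟨1, fun _ => _, fun _ => hT, (iUnion_const _).symm⟩
  | union _ _ ihS ihT =>
    obtain ⟨m, F, hF, rfl⟩ := ihS
    obtain ⟨n, G, hG, rfl⟩ := ihT
    refine ⟨m + n, Fin.append F G, ?_, ?_⟩
    · simpa [Fin.forall_fin_add] using ⟨hF, hG⟩
    · refine compl_injective (Set.ext fun x => ?_)
      simp [Fin.forall_fin_add]

end IsFiniteUnion

/-- The geometric sum `1 + q + ⋯ + q ^ (n - 1)`. It replaces the fraction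
`(q ^ n - 1) / (q - 1)` of the literature, so that no division by `q - 1` is needed. -/
def geomSum (q n : ℕ) : ℕ := ∑ i ∈ Finset.range n, q ^ i

@[simp] theorem geomSum_zero (q : ℕ) : geomSum q 0 = 0 := by simp [geomSum]

@[simp] theorem geomSum_one (q : ℕ) : geomSum q 1 = 1 := by simp [geomSum]

theorem geomSum_add (q m n : ℕ) : geomSum q (m + n) = geomSum q m + q ^ m * geomSum q n := by
  simp only [geomSum, Finset.sum_range_add, Finset.mul_sum, pow_add]

theorem geomSum_succ (q n : ℕ) : geomSum q (n + 1) = 1 + q * geomSum q n := by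
  rw [add_comm, geomSum_add, geomSum_one, pow_one]

theorem geomSum_mul (q m n : ℕ) : geomSum q (m * n) = geomSum q m * geomSum (q ^ m) n := by
  induction n with
  | zero => simp
  | succ n ih =>
    rw [mul_add_one, geomSum_add, geomSum_add, ih, geomSum_one, ← pow_mul]
    ring

theorem geomSum_mul_sub_one_add_one {q : ℕ} (hq : q ≠ 0) (n : ℕ) :
    geomSum q n * (q - 1) + 1 = q ^ n := by
  obtain ⟨q, rfl⟩ := Nat.exists_eq_add_one_of_ne_zero hq
  exact geom_sum_mul_add q n

section Twist

variable {A B : Type*} [AddCommGroup A] [AddCommGroup B]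

/-- The affine map `x ↦ q • x + c`: the `q`-power Frobenius of a torus followed by a translation,
in additive notation. -/
def twist (q : ℕ) (c x : A) : A := q • x + c

theorem twist_twist (q q' : ℕ) (c c' x : A) :
    twist q c (twist q' c' x) = twist (q * q') (q • c' + c) x := by
  simp only [twist]
  module

theorem twist_iterate (q : ℕ) (c : A) (n : ℕ) :
    (twist q c)^[n] = twist (q ^ n) (geomSum q n • c) := by
  induction n with
  | zero => ext; simp [twist]
  | succ n ih =>
    ext x
    rw [iterate_succ_apply', ih, twist_twist, pow_succ', geomSum_succ]
    congr 1
    module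

theorem map_twist (f : A →+ B) (q : ℕ) (c x : A) : f (twist q c x) = twist q (f c) (f x) := by
  simp [twist]

/-- A set `Z` is Frobenius rigid when every set `T` mapped into itself by some `x ↦ p ^ n • x + c`
lies in `Z` as soon as its image does. Linear conditions on characters define such sets, and
rigidity allows enlarging nested subsets of `Z` by Frobenius orbits without leaving `Z`. -/
def IsFrobeniusRigid (p : ℕ) (Z : Set A) : Prop :=
  ∀ (n : ℕ) (c : A) (T : Set A), MapsTo (twist (p ^ n) c) T T → MapsTo (twist (p ^ n) c) T Z →
    T ⊆ Z

theorem IsFrobeniusRigid.pow {p : ℕ} {Z : Set A} (hZ : IsFrobeniusRigid p Z) (κ : ℕ) :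
    IsFrobeniusRigid (p ^ κ) Z := by
  intro n c T hT hTZ
  rw [← pow_mul] at hT hTZ
  exact hZ _ c T hT hTZ

theorem IsFrobeniusRigid.of_preimage {p : ℕ} {f : A →+ B} (hf : Surjective f) {Z : Set B}
    (hZ : IsFrobeniusRigid p (f ⁻¹' Z)) : IsFrobeniusRigid p Z := by
  intro n c T hT hTZ
  obtain ⟨c, rfl⟩ := hf c
  rw [← hf.preimage_subset_preimage_iff]
  exact hZ n c _ (fun x hx => by simpa only [mem_preimage, map_twist] using hT hx)
    fun x hx => by simpa only [mem_preimage, map_twist] using hTZ hx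

end Twist

section Nested

variable {A B : Type*} [AddCommGroup A] [AddCommGroup B] {q : ℕ}

/-- The elementary nested sets. If `g i = (q - 1) • α i` then `geomSum q (n i) • g i` is equal to
`q ^ n i • α i - α i`, so for a prime power `q` and `H = ⊥` these are groupless `F`-sets, up to the
roots `α i`, which need not lie in `A`. -/
def nestedSet (q : ℕ) {r : ℕ} (g₀ : A) (g : Fin r → A) (H : AddSubgroup A) : Set A :=
  {x | ∃ n : Fin r → ℕ, ∃ η ∈ H, x = g₀ + ∑ i, geomSum q (n i) • g i + η}

theorem mem_nestedSet {r : ℕ} {g₀ : A} {g : Fin r → A} {H : AddSubgroup A} {x : A} :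
    x ∈ nestedSet q g₀ g H ↔ ∃ n : Fin r → ℕ, ∃ η ∈ H, x = g₀ + ∑ i, geomSum q (n i) • g i + η :=
  Iff.rfl

/-- The `q`-nested sets (Derksen's terminology): finite unions of elementary ones. -/
def IsNested (q : ℕ) : Set A → Prop :=
  IsFiniteUnion fun S => ∃ (r : ℕ) (g₀ : A) (g : Fin r → A) (H : AddSubgroup A),
    S = nestedSet q g₀ g H

/-- The sets that are `p ^ κ`-nested for some exponent `κ ≠ 0`. -/
def IsPNested (p : ℕ) (S : Set A) : Prop := ∃ κ ≠ 0, IsNested (p ^ κ) S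

theorem isNested_nestedSet {r : ℕ} (g₀ : A) (g : Fin r → A) (H : AddSubgroup A) :
    IsNested q (nestedSet q g₀ g H) :=
  .of ⟨r, g₀, g, H, rfl⟩

theorem isNested_singleton (x : A) : IsNested q {x} := by
  convert isNested_nestedSet x Fin.elim0 ⊥
  ext y
  simp [nestedSet]

theorem IsNested.of_finite {S : Set A} (hS : S.Finite) : IsNested q S := by
  rw [← biUnion_of_singleton S]
  exact .biUnion hS fun x _ => isNested_singleton x

theorem add_mem_nestedSet {r : ℕ} {g₀ : A} {g : Fin r → A} {H : AddSubgroup A} {x η : A}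
    (hx : x ∈ nestedSet q g₀ g H) (hη : η ∈ H) : x + η ∈ nestedSet q g₀ g H := by
  obtain ⟨n, η', hη', rfl⟩ := hx
  exact ⟨n, η' + η, H.add_mem hη' hη, add_assoc _ _ _⟩

theorem nestedSet_eq_iUnion_bot {r : ℕ} (g₀ : A) (g : Fin r → A) (H : AddSubgroup A) :
    nestedSet q g₀ g H = ⋃ η : H, nestedSet q (g₀ + η) g ⊥ := by
  ext x
  simp only [mem_nestedSet, mem_iUnion, AddSubgroup.mem_bot, exists_eq_left, add_zero,
    Subtype.exists, exists_prop, add_right_comm g₀]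
  exact ⟨fun ⟨n, η, hη, hx⟩ => ⟨η, hη, n, hx⟩, fun ⟨η, hη, n, hx⟩ => ⟨n, η, hη, hx⟩⟩

theorem nestedSet_eq_iUnion_pow {r m : ℕ} (hm : m ≠ 0) (g₀ : A) (g : Fin r → A)
    (H : AddSubgroup A) :
    nestedSet q g₀ g H = ⋃ ρ : Fin r → Fin m, nestedSet (q ^ m)
      (g₀ + ∑ i, geomSum q (ρ i) • g i) (fun i => (q ^ (ρ i : ℕ) * geomSum q m) • g i) H := by
  have key (ρ : Fin r → Fin m) (n : Fin r → ℕ) (η : A) :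
      g₀ + ∑ i, geomSum q (ρ i + m * n i) • g i + η = g₀ + ∑ i, geomSum q (ρ i) • g i +
        ∑ i, geomSum (q ^ m) (n i) • (q ^ (ρ i : ℕ) * geomSum q m) • g i + η := by
    rw [add_assoc g₀ (∑ i, geomSum q (ρ i) • g i), ← Finset.sum_add_distrib]
    congr! 3 with i
    rw [geomSum_add, geomSum_mul]
    module
  ext x
  simp only [mem_nestedSet, mem_iUnion]
  constructor
  · rintro ⟨n, η, hη, rfl⟩
    refine ⟨fun i => ⟨n i % m, Nat.mod_lt _ hm.bot_lt⟩, fun i => n i / m, η, hη, ?_⟩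
    rw [← key]
    simp only [Nat.mod_add_div]
  · rintro ⟨ρ, n, η, hη, rfl⟩
    exact ⟨fun i => ρ i + m * n i, η, hη, (key ρ n η).symm⟩

theorem IsNested.pow {S : Set A} (hS : IsNested q S) {m : ℕ} (hm : m ≠ 0) :
    IsNested (q ^ m) S := by
  rw [← image_id S]
  refine hS.image id ?_
  rintro _ ⟨r, g₀, g, H, rfl⟩
  rw [image_id, nestedSet_eq_iUnion_pow hm]
  exact .iUnion fun ρ => isNested_nestedSet _ _ _

theorem image_nestedSet (f : A →+ B) (c : B) {r : ℕ} (g₀ : A) (g : Fin r → A)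
    (H : AddSubgroup A) :
    (fun x => f x + c) '' nestedSet q g₀ g H = nestedSet q (f g₀ + c) (f ∘ g) (H.map f) := by
  ext y
  constructor
  · rintro ⟨_, ⟨n, η, hη, rfl⟩, rfl⟩
    refine ⟨n, f η, ⟨η, hη, rfl⟩, ?_⟩
    simp only [map_add, map_sum, map_nsmul, comp_apply]
    abel
  · rintro ⟨n, _, ⟨η, hη, rfl⟩, rfl⟩
    refine ⟨_, ⟨n, η, hη, rfl⟩, ?_⟩
    simp only [map_add, map_sum, map_nsmul, comp_apply]
    abel

theorem IsNested.image {S : Set A} (hS : IsNested q S) (f : A →+ B) (c : B) :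
    IsNested q ((fun x => f x + c) '' S) := by
  refine IsFiniteUnion.image hS _ ?_
  rintro _ ⟨r, g₀, g, H, rfl⟩
  exact image_nestedSet f c g₀ g H ▸ isNested_nestedSet _ _ _

theorem preimage_nestedSet (f : A →+ B) {r : ℕ} (g₀ : A) (g : Fin r → A) (H : AddSubgroup B) :
    f ⁻¹' nestedSet q (f g₀) (f ∘ g) H = nestedSet q g₀ g (H.comap f) := by
  ext x
  constructor
  · rintro ⟨n, η, hη, hx⟩
    refine ⟨n, x - (g₀ + ∑ i, geomSum q (n i) • g i), ?_, by abel⟩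
    simpa [hx] using hη
  · rintro ⟨n, η, hη, rfl⟩
    exact ⟨n, f η, hη, by simp⟩

theorem IsNested.preimage {S : Set B} (hS : IsNested q S) {f : A →+ B} (hf : Surjective f) :
    IsNested q (f ⁻¹' S) := by
  refine IsFiniteUnion.preimage hS _ ?_
  rintro _ ⟨r, g₀, g, H, rfl⟩
  obtain ⟨g₀, rfl⟩ := hf g₀
  obtain ⟨g, rfl⟩ := hf.comp_left g
  exact preimage_nestedSet f g₀ g H ▸ isNested_nestedSet _ _ _

theorem IsPNested.iUnion {ι : Type*} [Finite ι] {p : ℕ} {S : ι → Set A}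
    (hS : ∀ i, IsPNested p (S i)) : IsPNested p (⋃ i, S i) := by
  have := Fintype.ofFinite ι
  choose κ hκ hS using hS
  refine ⟨∏ i, κ i, Finset.prod_ne_zero_iff.2 fun i _ => hκ i, .iUnion fun i => ?_⟩
  obtain ⟨m, hm⟩ := Finset.dvd_prod_of_mem κ (Finset.mem_univ i)
  have hm' : m ≠ 0 := by
    rintro rfl
    simp [Finset.prod_eq_zero_iff, hκ] at hm
  rw [hm, pow_mul]
  exact (hS i).pow hm'

end Nested

section Dynamics

variable {A : Type*} [AddCommGroup A] {q : ℕ} {c : A} {Z Y : Set A}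

theorem mem_nestedSet_cons {r : ℕ} {g₀ g' : A} {g : Fin r → A} {H : AddSubgroup A} {x : A} :
    x ∈ nestedSet q g₀ (Fin.cons g' g) H ↔ ∃ n, x - geomSum q n • g' ∈ nestedSet q g₀ g H := by
  simp only [mem_nestedSet, Fin.exists_fin_succ_pi, Fin.sum_univ_succ, Fin.cons_zero, Fin.cons_succ,
    sub_eq_iff_eq_add]
  congr! 7
  exact Eq.congr_right (by abel)

theorem twist_sub_mem_nestedSet {r : ℕ} {g₀ : A} {g : Fin r → A} {H : AddSubgroup A} {x : A}
    (hx : x ∈ nestedSet q g₀ g H) :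
    twist q c x - (twist q c g₀ - g₀ - ∑ i, g i) ∈ nestedSet q g₀ g H := by
  obtain ⟨n, η, hη, rfl⟩ := hx
  refine ⟨fun i => n i + 1, q • η, H.nsmul_mem hη q, ?_⟩
  simp only [twist, geomSum_succ, add_smul, one_smul, mul_smul, Finset.sum_add_distrib, smul_add,
    Finset.smul_sum]
  abel

theorem twist_iterate_sub_mem {S : Set A} {g' : A}
    (hS : ∀ x ∈ S, twist q c x - g' ∈ S) {x : A} (hx : x ∈ S) (n : ℕ) :
    (twist q c)^[n] x - geomSum q n • g' ∈ S := by
  induction n with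
  | zero => simpa using hx
  | succ n ih =>
    convert hS _ ih using 1
    rw [iterate_succ_apply', geomSum_succ]
    simp only [twist]
    module

theorem IsFrobeniusRigid.exists_nestedSet_orbit (hZ : IsFrobeniusRigid q Z)
    (hφ : MapsTo (twist q c) Z Z) {r : ℕ} {g₀ : A} {g : Fin r → A} {H : AddSubgroup A}
    (hS : nestedSet q g₀ g H ⊆ Z) :
    ∃ g' : A, nestedSet q g₀ (Fin.cons g' g) H ⊆ Z ∧
      ∀ x ∈ nestedSet q g₀ g H, ∀ n, (twist q c)^[n] x ∈ nestedSet q g₀ (Fin.cons g' g) H := by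
  set S := nestedSet q g₀ g H
  obtain ⟨g', hg'⟩ : ∃ g', ∀ x ∈ S, twist q c x - g' ∈ S := ⟨_, fun _ => twist_sub_mem_nestedSet⟩
  refine ⟨g', fun x hx => ?_,
    fun x hx n => mem_nestedSet_cons.2 ⟨n, twist_iterate_sub_mem hg' hx n⟩⟩
  obtain ⟨n, hn⟩ := mem_nestedSet_cons.1 hx
  let T : Set A := {y | y - geomSum q n • g' ∈ S}
  have hψ (y : A) : twist (q ^ n) (geomSum q n • c - q ^ n • geomSum q n • g') y =
      (twist q c)^[n] (y - geomSum q n • g') := by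
    rw [twist_iterate]
    simp only [twist]
    module
  refine hZ n (geomSum q n • c - q ^ n • geomSum q n • g') T (fun y hy => ?_) (fun y hy => ?_) hn
  · rw [hψ]
    exact twist_iterate_sub_mem hg' hy n
  · rw [hψ]
    exact hφ.iterate n (hS hy)

theorem IsNested.exists_orbit (hY : IsNested q Y) (hZ : IsFrobeniusRigid q Z)
    (hφ : MapsTo (twist q c) Z Z) (hYZ : Y ⊆ Z) :
    ∃ Y', IsNested q Y' ∧ Y' ⊆ Z ∧ ∀ x ∈ Y, range (fun n => (twist q c)^[n] x) ⊆ Y' := by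
  refine hY.exists_between ?_
  rintro _ hT ⟨r, g₀, g, H, rfl⟩
  obtain ⟨g', hg'Z, hg'⟩ := hZ.exists_nestedSet_orbit hφ (hT.trans hYZ)
  exact ⟨_, isNested_nestedSet _ _ _, hg'Z, fun x hx => range_subset_iff.2 (hg' x hx)⟩

theorem subset_iUnion_image_union_image_iterate {α : Type*} {φ : α → α} {Y Z : Set α}
    (h : Z ⊆ Y ∪ φ '' Z) (m : ℕ) : Z ⊆ (⋃ i : Fin m, φ^[i] '' Y) ∪ φ^[m] '' Z := by
  induction m with
  | zero => simp
  | succ m ih =>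
    intro z hz
    rcases ih hz with hz | ⟨x, hx, rfl⟩
    · obtain ⟨i, hi⟩ := mem_iUnion.1 hz
      exact .inl (mem_iUnion.2 ⟨i.castSucc, hi⟩)
    · rcases h hx with hx | ⟨y, hy, rfl⟩
      · exact .inl (mem_iUnion.2 ⟨Fin.last m, x, hx, rfl⟩)
      · exact .inr ⟨y, hy, rfl⟩

theorem IsNested.of_subset_union_image (hZ : IsFrobeniusRigid q Z) (hφ : MapsTo (twist q c) Z Z)
    (hYZ : Y ⊆ Z) (hY : IsNested q Y) (hZY : Z ⊆ Y ∪ twist q c '' Z)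
    (hfin : (⋂ n, range (twist q c)^[n]).Finite) : IsNested q Z := by
  obtain ⟨Y', hY', hY'Z, horbit⟩ := hY.exists_orbit hZ hφ hYZ
  have hZ_eq : Z = Y' ∪ (Z ∩ ⋂ n, range (twist q c)^[n]) := by
    refine Subset.antisymm (fun z hz => ?_) (union_subset hY'Z inter_subset_left)
    by_cases hzY : z ∈ Y'
    · exact .inl hzY
    · refine .inr ⟨hz, mem_iInter.2 fun n => ?_⟩
      rcases subset_iUnion_image_union_image_iterate hZY n hz with hz' | ⟨x, -, hx⟩
      · obtain ⟨i, x, hx, rfl⟩ := mem_iUnion.1 hz'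
        exact absurd (horbit x hx ⟨i, rfl⟩) hzY
      · exact ⟨x, hx⟩
  rw [hZ_eq]
  exact hY'.union (IsNested.of_finite (hfin.inter_of_right Z))

theorem IsPNested.of_subset_union_image {p κ : ℕ} (hκ : κ ≠ 0) (hZ : IsFrobeniusRigid p Z)
    (hφ : MapsTo (twist (p ^ κ) c) Z Z) (hYZ : Y ⊆ Z) (hY : IsPNested p Y)
    (hZY : Z ⊆ Y ∪ twist (p ^ κ) c '' Z) (hfin : (⋂ n, range (twist (p ^ κ) c)^[n]).Finite) :
    IsPNested p Z := by
  obtain ⟨m, hm, hY⟩ := hY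
  set φ := twist (p ^ κ) c
  have hφm : φ^[m] = twist (p ^ (κ * m)) (geomSum (p ^ κ) m • c) := by rw [twist_iterate, pow_mul]
  have hfin_m : (⋂ n, range (φ^[m])^[n]).Finite := by
    refine hfin.subset (subset_iInter fun n => (iInter_subset _ n).trans ?_)
    obtain ⟨k, hk⟩ := Nat.le.dest (Nat.le_mul_of_pos_left n hm.bot_lt)
    rw [← iterate_mul, ← hk, iterate_add]
    exact range_comp_subset_range _ _
  have hY_m : IsNested (p ^ (κ * m)) (⋃ i : Fin m, φ^[i] '' Y) := by
    refine .iUnion fun i => ?_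
    rw [mul_comm, pow_mul, twist_iterate]
    exact (hY.pow hκ).image (nsmulAddMonoidHom _) _
  rw [hφm] at hfin_m
  refine ⟨κ * m, mul_ne_zero hκ hm, .of_subset_union_image (hZ.pow _) ?_ ?_ hY_m ?_ hfin_m⟩
  · exact hφm ▸ hφ.iterate m
  · exact iUnion_subset fun i => (image_mono hYZ).trans (hφ.iterate i).image_subset
  · exact hφm ▸ subset_iUnion_image_union_image_iterate hZY m

end Dynamics

theorem pow_smul_iff {M X : Type*} [Monoid M] [MulAction M X] {m : M} {P : X → Prop}
    (h : ∀ x, P (m • x) ↔ P x) (n : ℕ) (x : X) : P (m ^ n • x) ↔ P x := by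
  induction n with
  | zero => simp
  | succ n ih => rw [pow_succ', mul_smul, h, ih]

section FinitelyGenerated

variable {T : Type*} [AddCommGroup T] [Module.Finite ℤ T]

theorem exists_coprime_smul_eq_zero {p : ℕ} {t : T} (ht : ∀ n, ∃ y, p ^ n • y = t) :
    ∃ m : ℕ, m.Coprime p ∧ m • t = 0 := by
  obtain ⟨⟨r, hr⟩, hrt⟩ : ∃ r : Ideal.span {(p : ℤ)}, (r : ℤ) • t = t := by
    rw [← Ideal.mem_iInf_smul_pow_eq_bot_iff, Submodule.mem_iInf]
    intro n
    obtain ⟨y, rfl⟩ := ht n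
    rw [← natCast_zsmul, Ideal.span_singleton_pow]
    exact Submodule.smul_mem_smul (Ideal.mem_span_singleton.2 (by simp)) trivial
  obtain ⟨x, rfl⟩ := Ideal.mem_span_singleton'.1 hr
  refine ⟨(1 - x * p).natAbs, ?_, ?_⟩
  · exact Int.isCoprime_iff_gcd_eq_one.1 ⟨1, x, by rw [one_mul, sub_add_cancel]⟩
  · rw [← natCast_zsmul, Int.natCast_natAbs, abs_zsmul_eq_zero, sub_smul, one_smul, hrt, sub_self]

theorem exists_pow_smul_eq_self {p : ℕ} (hp : p ≠ 1) {t : T} (ht : ∀ n, ∃ y, p ^ n • y = t) :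
    ∃ κ ≠ 0, p ^ κ • t = t := by
  obtain ⟨m, hmp, hm⟩ := exists_coprime_smul_eq_zero ht
  have hm0 : m ≠ 0 := by
    rintro rfl
    exact hp ((Nat.coprime_zero_left p).1 hmp)
  refine ⟨m.totient, (Nat.totient_pos.2 hm0.bot_lt).ne', ?_⟩
  have h := (Nat.ModEq.pow_totient hmp.symm).of_dvd (addOrderOf_dvd_of_nsmul_eq_zero hm)
  simpa using nsmul_eq_nsmul_iff_modEq.2 h

variable (T) in
theorem exists_pow_smul_eq_zero_of_pow_smul_eq_zero (p : ℕ) :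
    ∃ s, ∀ (n : ℕ) (x : T), p ^ n • x = 0 → p ^ s • x = 0 := by
  let f : Module.End ℤ T := p
  have hf (n : ℕ) (x : T) : (f ^ n) x = p ^ n • x := by
    rw [← Nat.cast_pow, Module.End.natCast_apply]
  obtain ⟨s, hs⟩ := Filter.eventually_atTop.1 f.eventually_iSup_ker_pow_eq
  refine ⟨s, fun n x hx => ?_⟩
  rw [← hf, ← LinearMap.mem_ker] at hx ⊢
  rw [← hs s le_rfl]
  exact Submodule.mem_iSup_of_mem n hx

theorem exists_descent {p : ℕ} (hp : p ≠ 1) {t : T} (ht : ∀ n, ∃ y, p ^ n • y = t) :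
    ∃ κ ≠ 0, p ^ κ • t = t ∧ ∃ s, ∀ y, p ^ (κ + s) • y = t → p ^ s • y = t := by
  obtain ⟨κ, hκ, hκt⟩ := exists_pow_smul_eq_self hp ht
  obtain ⟨s, hs⟩ := exists_pow_smul_eq_zero_of_pow_smul_eq_zero T p
  refine ⟨κ, hκ, hκt, s, fun y hy => ?_⟩
  obtain ⟨y', hy'⟩ := ht s
  have h : p ^ (κ + s) • (y - y') = 0 := by
    rw [smul_sub, hy, pow_add, mul_smul, hy', hκt, sub_self]
  rw [← sub_eq_zero, ← hs _ _ h, smul_sub, hy']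

theorem finite_setOf_forall_exists_pow_smul_eq {p : ℕ} (hp : p ≠ 1) :
    {t : T | ∀ n, ∃ y, p ^ n • y = t}.Finite := by
  have : Finite (Submodule.torsion ℤ T) :=
    Module.finite_of_fg_torsion _ (Submodule.torsion_isTorsion)
  refine (Set.toFinite (Submodule.torsion ℤ T : Set T)).subset fun t ht => ?_
  obtain ⟨m, hmp, hm⟩ := exists_coprime_smul_eq_zero ht
  have hm0 : m ≠ 0 := by
    rintro rfl
    exact hp ((Nat.coprime_zero_left p).1 hmp)
  exact (Submodule.mem_torsion_iff t).2
    ⟨⟨m, mem_nonZeroDivisors_of_ne_zero (Nat.cast_ne_zero.2 hm0)⟩, by simpa using hm⟩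

end FinitelyGenerated

section Saturation

/-- Every finitely generated subgroup of `C` is contained in a finitely generated one that is
closed under division by `p`. -/
def HasFGSaturations (p : ℕ) (C : Type*) [AddCommGroup C] : Prop :=
  ∀ R : Submodule ℤ C, R.FG → ∃ B : Submodule ℤ C, R ≤ B ∧ B.FG ∧ ∀ c, p • c ∈ B → c ∈ B

variable {p : ℕ}

theorem HasFGSaturations.pi {ι : Type*} [Finite ι] {C : ι → Type*} [∀ i, AddCommGroup (C i)]
    (h : ∀ i, HasFGSaturations p (C i)) : HasFGSaturations p (∀ i, C i) := by
  intro R hR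
  choose B hRB hB hBp using fun i => h i (R.map (LinearMap.proj i)) (hR.map _)
  exact ⟨Submodule.pi univ B, fun c hc i _ => hRB i ⟨c, hc, rfl⟩, Submodule.fg_pi hB,
    fun c hc i _ => hBp i _ (hc i trivial)⟩

variable {C : Type*} [AddCommGroup C]

theorem exists_hom_eq_zero_of_fg {R : Submodule ℤ C} (hR : R.FG) :
    ∃ (s : ℕ) (w : C →ₗ[ℤ] Fin s → ℤ), ∀ x ∈ R, w x = 0 → ∀ f : C →ₗ[ℤ] ℤ, f x = 0 := by
  have : Module.Finite ℤ R := .of_fg hR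
  obtain ⟨s, g, hg⟩ := Submodule.fg_iff_exists_fin_generating_family.1
    (IsNoetherian.noetherian (LinearMap.range (LinearMap.lcomp ℤ ℤ R.subtype)))
  have hmem (i : Fin s) : ∃ f, LinearMap.lcomp ℤ ℤ R.subtype f = g i := by
    rw [← LinearMap.mem_range, ← hg]
    exact Submodule.subset_span ⟨i, rfl⟩
  choose w hw using hmem
  refine ⟨s, LinearMap.pi w, fun x hx hwx f => ?_⟩
  have hle : Submodule.span ℤ (range g) ≤ LinearMap.ker (LinearMap.applyₗ (R := ℤ) ⟨x, hx⟩) := by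
    rw [Submodule.span_le]
    rintro _ ⟨i, rfl⟩
    rw [← hw i]
    exact congrFun hwx i
  exact hle (hg ▸ LinearMap.mem_range_self _ f)

/-- The elements of `C` having a multiple by a power of `p` in `R`. -/
def primeSaturation (p : ℕ) (R : Submodule ℤ C) : Submodule ℤ C :=
  AddSubgroup.toIntSubmodule
    { carrier := {c | ∃ n, p ^ n • c ∈ R}
      zero_mem' := ⟨0, by simp⟩
      neg_mem' := fun ⟨n, hn⟩ => ⟨n, by simpa using hn⟩
      add_mem' := by
        rintro c d ⟨m, hm⟩ ⟨n, hn⟩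
        refine ⟨m + n, ?_⟩
        rw [smul_add, pow_add, mul_smul, mul_smul, smul_comm]
        exact R.add_mem (R.nsmul_mem hm _) (R.nsmul_mem hn _) }

theorem exists_smul_eq_zero_of_fg {D : Submodule ℤ C} (hD : D.FG)
    (htor : ∀ x ∈ D, IsOfFinAddOrder x) : ∃ e ≠ 0, ∀ x ∈ D, e • x = 0 := by
  have : AddGroup.FG D := Module.Finite.iff_addGroup_fg.1 (.of_fg hD)
  have : Finite D := AddCommGroup.finite_of_fg_isAddTorsion D fun x =>
    (AddSubmonoid.isOfFinAddOrder_coe (H := D.toAddSubmonoid)).1 (htor x x.2)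
  refine ⟨Nat.card D, Nat.card_pos.ne', fun x hx => ?_⟩
  exact congrArg Subtype.val (card_nsmul_eq_zero' (x := (⟨x, hx⟩ : D)))

theorem primeSaturation_fg (hp : ∀ c : C, p • c = 0 → c = 0)
    (hfin : ∀ n ≠ 0, {c : C | n • c = 0}.Finite)
    (htor : ∀ c : C, (∀ f : C →ₗ[ℤ] ℤ, f c = 0) → IsOfFinAddOrder c)
    {R : Submodule ℤ C} (hR : R.FG) : (primeSaturation p R).FG := by
  obtain ⟨s, w, hw⟩ := exists_hom_eq_zero_of_fg hR
  have hD : (R ⊓ LinearMap.ker w).FG := hR.of_le inf_le_left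
  obtain ⟨e, he, heD⟩ := exists_smul_eq_zero_of_fg hD fun x hx => htor x (hw x hx.1 hx.2)
  refine Submodule.fg_of_fg_map_of_fg_inf_ker w (IsNoetherian.noetherian _) ?_
  have hsub : ((primeSaturation p R ⊓ LinearMap.ker w : Submodule ℤ C) : Set C) ⊆
      {c | e • c = 0} := by
    rintro c ⟨⟨n, hn⟩, hwc⟩
    refine (pow_smul_iff (P := (· = 0)) (fun c => ⟨hp c, fun hc => by rw [hc, smul_zero]⟩) n _).1 ?_
    rw [smul_comm]
    exact heD _ ⟨hn, (LinearMap.ker w).nsmul_mem hwc _⟩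
  rw [← Submodule.span_eq (primeSaturation p R ⊓ LinearMap.ker w)]
  exact Submodule.fg_span ((hfin e he).subset hsub)

theorem HasFGSaturations.of_hom_int (hp : ∀ c : C, p • c = 0 → c = 0)
    (hfin : ∀ n ≠ 0, {c : C | n • c = 0}.Finite)
    (htor : ∀ c : C, (∀ f : C →ₗ[ℤ] ℤ, f c = 0) → IsOfFinAddOrder c) : HasFGSaturations p C := by
  refine fun R hR => ⟨primeSaturation p R, fun c hc => ⟨0, by simpa using hc⟩,
    primeSaturation_fg hp hfin htor hR, ?_⟩
  rintro c ⟨n, hn⟩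
  exact ⟨n + 1, by rwa [pow_succ, mul_smul]⟩

end Saturation

section Descent

variable {A C : Type*} [AddCommGroup A] [AddCommGroup C] {p : ℕ} {Φ : A →+ C} {a : C} {W : Set C}

theorem sub_twist {q : ℕ} {a c : C} (hc : a = twist q c a) (x : C) :
    a - twist q c x = q • (a - x) := by
  nth_rw 1 [hc]
  simp only [twist]
  module

theorem sub_twist_iterate {q : ℕ} {a c : C} (hc : a = twist q c a) (n : ℕ) (x : C) :
    a - (twist q c)^[n] x = q ^ n • (a - x) := by
  rw [twist_iterate, sub_twist]
  rw [← twist_iterate]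
  exact (iterate_fixed hc.symm n).symm

theorem finite_iInter_range_twist_iterate [Module.Finite ℤ C] {q : ℕ} (hq : q ≠ 1) {c : A}
    (hc : a = twist q (Φ c) a) : (⋂ n, range (twist q (Φ.rangeRestrict c))^[n]).Finite := by
  have hval (n : ℕ) (b : Φ.range) :
      ((twist q (Φ.rangeRestrict c))^[n] b : C) = (twist q (Φ c))^[n] b :=
    Semiconj.iterate_right (f := ((↑) : Φ.range → C)) (fun _ => rfl) n b
  refine ((finite_setOf_forall_exists_pow_smul_eq hq).preimage
    (f := fun b : Φ.range => a - b) ?_).subset fun b hb n => ?_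
  · exact (sub_right_injective.comp Subtype.val_injective).injOn
  · obtain ⟨b', rfl⟩ := mem_iInter.1 hb n
    exact ⟨a - b', by beta_reduce; rw [hval, sub_twist_iterate hc]⟩

theorem exists_twist_of_forall_exists_pow_smul_eq [Module.Finite ℤ C] (hp : p ≠ 1)
    (h : ∀ n, ∃ x y, p ^ n • y = a - Φ x) :
    ∃ κ ≠ 0, ∃ c, a = twist (p ^ κ) (Φ c) a ∧
      ∃ N, ∀ x y, p ^ N • y = a - Φ x → ∃ x', Φ x = twist (p ^ κ) (Φ c) (Φ x') := by
  have : AddGroup.FG C := Module.Finite.iff_addGroup_fg.1 inferInstance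
  have : Module.Finite ℤ (C ⧸ Φ.range) := Module.Finite.iff_addGroup_fg.2 inferInstance
  have hmk {x y : C} : (x : C ⧸ Φ.range) = y ↔ ∃ z, Φ z = y - x := by
    rw [QuotientAddGroup.eq, neg_add_eq_sub, AddMonoidHom.mem_range]
  have hpow {n : ℕ} {x : A} {y : C} (hy : p ^ n • y = a - Φ x) :
      p ^ n • (y : C ⧸ Φ.range) = a := by
    rw [← QuotientAddGroup.mk_nsmul, hmk]
    exact ⟨x, by rw [hy, sub_sub_cancel]⟩
  obtain ⟨κ, hκ, hκa, s, hs⟩ := exists_descent hp (t := (a : C ⧸ Φ.range)) fun n =>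
    let ⟨_, y, hy⟩ := h n
    ⟨y, hpow hy⟩
  obtain ⟨c, hc⟩ := hmk.1 ((QuotientAddGroup.mk_nsmul _ a (p ^ κ)).trans hκa)
  have hfix : a = twist (p ^ κ) (Φ c) a := by rw [twist, hc, add_sub_cancel]
  refine ⟨κ, hκ, c, hfix, κ + s, fun x y hy => ?_⟩
  obtain ⟨x', hx'⟩ := hmk.1 ((QuotientAddGroup.mk_nsmul _ y (p ^ s)).trans (hs y (hpow hy)))
  refine ⟨x', sub_right_injective (b := a) ?_⟩
  beta_reduce
  rw [sub_twist hfix, hx', sub_sub_cancel, ← hy, pow_add, mul_smul]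

theorem IsPNested.of_descent_of_finite [Module.Finite ℤ C] (hp : p ≠ 1)
    (hW : ∀ b, p • b ∈ W ↔ b ∈ W) (hZ : IsFrobeniusRigid p {x | a - Φ x ∈ W}) {Y : ℕ → Set A}
    (hY : ∀ n, IsPNested p (Y n)) (hYZ : ∀ n, Y n ⊆ {x | a - Φ x ∈ W})
    (hdiv : ∀ n, ∀ x ∉ Y n, a - Φ x ∈ W → ∃ y, p ^ n • y = a - Φ x)
    (hne : ∀ n, ¬ {x | a - Φ x ∈ W} ⊆ Y n) : IsPNested p {x | a - Φ x ∈ W} := by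
  obtain ⟨κ, hκ, c, hfix, N, hN⟩ := exists_twist_of_forall_exists_pow_smul_eq hp (Φ := Φ) (a := a)
    fun n =>
      let ⟨x, hxW, hxY⟩ := not_subset.1 (hne n)
      ⟨x, hdiv n x hxY hxW⟩
  have hsurj : Surjective Φ.rangeRestrict := Φ.rangeRestrict_surjective
  let Z' : Set Φ.range := {b | a - b ∈ W}
  have htwist (b : Φ.range) : twist (p ^ κ) (Φ.rangeRestrict c) b ∈ Z' ↔ b ∈ Z' := by
    have h := pow_smul_iff (P := (· ∈ W)) hW κ (a - b)
    rwa [← sub_twist hfix] at h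
  suffices IsPNested p Z' by
    obtain ⟨m, hm, hnested⟩ := this
    exact ⟨m, hm, hnested.preimage hsurj⟩
  refine .of_subset_union_image (Y := Φ.rangeRestrict '' Y N) hκ
    (.of_preimage hsurj hZ) (fun b hb => (htwist b).2 hb) (image_subset_iff.2 (hYZ N)) ?_ ?_
    (finite_iInter_range_twist_iterate (by simp [hp, hκ]) hfix)
  · obtain ⟨m, hm, hnested⟩ := hY N
    exact ⟨m, hm, by simpa using hnested.image Φ.rangeRestrict 0⟩
  · intro b hb
    obtain ⟨x, rfl⟩ := hsurj b
    by_cases hx : x ∈ Y N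
    · exact .inl ⟨x, hx, rfl⟩
    · obtain ⟨y, hy⟩ := hdiv N x hx hb
      obtain ⟨x', hx'⟩ := hN x y hy
      have heq : twist (p ^ κ) (Φ.rangeRestrict c) (Φ.rangeRestrict x') = Φ.rangeRestrict x :=
        Subtype.ext hx'.symm
      exact .inr ⟨_, (htwist _).1 (heq ▸ hb), heq⟩

theorem IsPNested.of_descent [Module.Finite ℤ A] (hp : p ≠ 1) (hC : HasFGSaturations p C)
    (hW : ∀ b, p • b ∈ W ↔ b ∈ W) (hZ : IsFrobeniusRigid p {x | a - Φ x ∈ W}) {Y : ℕ → Set A}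
    (hY : ∀ n, IsPNested p (Y n)) (hYZ : ∀ n, Y n ⊆ {x | a - Φ x ∈ W})
    (hdiv : ∀ n, ∀ x ∉ Y n, a - Φ x ∈ W → ∃ y, p ^ n • y = a - Φ x)
    (hne : ∀ n, ¬ {x | a - Φ x ∈ W} ⊆ Y n) : IsPNested p {x | a - Φ x ∈ W} := by
  obtain ⟨B, hRB, hB, hBp⟩ := hC (LinearMap.range Φ.toIntLinearMap ⊔ Submodule.span ℤ {a})
    (.sup (Submodule.fg_range _) (Submodule.fg_span_singleton a))
  have : Module.Finite ℤ B := .of_fg hB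
  have haB : a ∈ B := hRB (Submodule.mem_sup_right (Submodule.mem_span_singleton_self a))
  have hΦB (x : A) : Φ x ∈ B := hRB (Submodule.mem_sup_left ⟨x, rfl⟩)
  have hdivB (n : ℕ) (y : C) : p ^ n • y ∈ B ↔ y ∈ B :=
    pow_smul_iff (P := (· ∈ B)) (fun y => ⟨hBp y, fun hy => B.nsmul_mem hy p⟩) n y
  refine IsPNested.of_descent_of_finite (C := B) (Φ := Φ.codRestrict B hΦB)
    (a := ⟨a, haB⟩) (W := {b | (b : C) ∈ W}) hp (fun b => hW b) hZ hY hYZ (fun n x hx hxW => ?_) hne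
  obtain ⟨y, hy⟩ := hdiv n x hx hxW
  exact ⟨⟨y, (hdivB n y).1 (hy ▸ B.sub_mem haB (hΦB x))⟩, Subtype.ext hy⟩

end Descent

section FunctionFields

open IntermediateField

variable {F k : Type*} [Field F] [Field k] [Algebra F k]

theorem exists_transcendental_isAlgebraic_adjoin_simple {x : k} (hx : Transcendental F x) :
    ∃ L : IntermediateField F k, Transcendental L x ∧ Algebra.IsAlgebraic L⟮x⟯ k := by
  have hind : AlgebraicIndepOn F id ({x} : Set k) :=
    (algebraicIndependent_singleton_iff (x := fun i : ({x} : Set k) => (i : k)) ⟨x, rfl⟩).2 hx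
  obtain ⟨s, hxs, hs⟩ := exists_isTranscendenceBasis_superset hind
  rw [singleton_subset_iff] at hxs
  refine ⟨adjoin F (s \ {x}), fun halg => ?_, ?_⟩
  · have htr : Transcendental (Algebra.adjoin F (s \ {x})) x := by
      have himage : s \ {x} = ((↑) : s → k) '' {i : s | (i : k) ≠ x} := by
        ext y
        simp [and_comm]
      rw [himage]
      exact hs.1.transcendental_adjoin (i := ⟨x, hxs⟩) (by simp)
    open algebraAdjoinAdjoin in
    exact htr ((IsFractionRing.isAlgebraic_iff (Algebra.adjoin F (s \ {x})) _ k).2 halg)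
  · change Algebra.IsAlgebraic ((adjoin (adjoin F (s \ {x})) {x}).restrictScalars F) k
    rw [adjoin_adjoin_left, sdiff_union_of_subset (singleton_subset_iff.2 hxs)]
    exact Subtype.range_coe (s := s) ▸ hs.isAlgebraic_field

/-- The degree of nonzero rational functions as a homomorphism to `ℤ`, which does
not kill any positive power of `X`. -/
noncomputable def degreeHom (L : Type*) [Field L] : (RatFunc L)ˣ →* Multiplicative ℤ where
  toFun u := .ofAdd (u : RatFunc L).intDegree
  map_one' := by simp
  map_mul' u v := by simp [RatFunc.intDegree_mul u.ne_zero v.ne_zero]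

theorem degreeHom_X_pow_ne_one (L : Type*) [Field L] {n : ℕ} (hn : n ≠ 0) :
    degreeHom L (Units.mk0 RatFunc.X RatFunc.X_ne_zero ^ n) ≠ 1 := by
  have hX : degreeHom L (Units.mk0 RatFunc.X RatFunc.X_ne_zero) = .ofAdd 1 := by simp [degreeHom]
  rw [map_pow, hX, ← ofAdd_nsmul]
  simpa using hn

theorem exists_hom_int_ne_one_of_transcendental [Algebra.EssFiniteType F k] {x : kˣ}
    (hx : Transcendental F (x : k)) : ∃ w : kˣ →* Multiplicative ℤ, w x ≠ 1 := by
  obtain ⟨L, hxL, halg⟩ := exists_transcendental_isAlgebraic_adjoin_simple hx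
  have : Algebra.EssFiniteType L k := .of_comp F L k
  have : Algebra.EssFiniteType L⟮(x : k)⟯ k := .of_comp L _ k
  have : Module.Finite L⟮(x : k)⟯ k := Algebra.finite_of_essFiniteType_of_isAlgebraic
  let e : RatFunc L ≃ₐ[L] L⟮(x : k)⟯ := RatFunc.algEquivOfTranscendental (x : k) hxL
  let f : kˣ →* (RatFunc L)ˣ := (Units.map e.symm.toMonoidHom).comp (Units.map (Algebra.norm _))
  have hf : f x = Units.mk0 RatFunc.X RatFunc.X_ne_zero ^ Module.finrank L⟮(x : k)⟯ k := by
    have hnorm : Algebra.norm L⟮(x : k)⟯ (x : k) = e RatFunc.X ^ Module.finrank L⟮(x : k)⟯ k := by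
      rw [← Algebra.norm_algebraMap]
      simp [e, RatFunc.algEquivOfTranscendental_X]
    ext
    simp [f, hnorm]
  refine ⟨(degreeHom L).comp f, ?_⟩
  rw [MonoidHom.comp_apply, hf]
  exact degreeHom_X_pow_ne_one L Module.finrank_pos.ne'

theorem isOfFinOrder_of_isAlgebraic [Finite F] {x : kˣ} (hx : IsAlgebraic F (x : k)) :
    IsOfFinOrder x := by
  have : FiniteDimensional F F⟮(x : k)⟯ := adjoin.finiteDimensional hx.isIntegral
  have : Finite F⟮(x : k)⟯ := Module.finite_of_finite F
  let y : F⟮(x : k)⟯ˣ := Units.mk0 (AdjoinSimple.gen F (x : k)) (by simp [← Subtype.coe_inj])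
  have hy : Units.map (algebraMap F⟮(x : k)⟯ k).toMonoidHom y = x := Units.ext rfl
  rw [← hy]
  exact MonoidHom.isOfFinOrder _ (isOfFinOrder_of_finite y)

end FunctionFields

theorem finite_setOf_smul_eq_zero_units (k : Type*) [Field k] {n : ℕ} (hn : n ≠ 0) :
    {c : Additive kˣ | n • c = 0}.Finite := by
  have : NeZero n := ⟨hn⟩
  exact .of_equiv (rootsOfUnity n k) (Additive.ofMul.subtypeEquiv fun c => Iff.rfl)

theorem eq_zero_of_expChar_smul_units_eq_zero {k : Type*} [Field k] (p : ℕ) [ExpChar k p]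
    (c : Additive kˣ) (hc : p • c = 0) : c = 0 := by
  refine Additive.toMul.injective (Units.ext (frobenius_inj k p ?_))
  simpa [frobenius_def] using congrArg (fun c : Additive kˣ => (c.toMul : k)) hc

theorem hasFGSaturations_units (p : ℕ) (F k : Type*) [Field F] [Field k] [Algebra F k] [Finite F]
    [ExpChar k p] [Algebra.EssFiniteType F k] :
    HasFGSaturations p (Additive kˣ) := by
  refine .of_hom_int (eq_zero_of_expChar_smul_units_eq_zero p)
    (fun n hn => finite_setOf_smul_eq_zero_units k hn) fun c hc => ?_
  refine isOfFinAddOrder_ofMul_iff (x := c.toMul).2 ?_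
  by_contra hx
  obtain ⟨w, hw⟩ := exists_hom_int_ne_one_of_transcendental (F := F)
    (x := c.toMul) (fun halg => hx (isOfFinOrder_of_isAlgebraic halg))
  exact hw (hc (MonoidHom.toAdditiveLeft w).toIntLinearMap)

section Echelon

variable {K E : Type*} [Field K] {V : Submodule K (E → K)} {J : Finset E} {u : E → E → K}

/-- The vectors `u j`, for `j` in the set `J` of pivots, form a reduced echelon basis of `V`.
The vectors `u e` with `e ∉ J` are junk. -/
structure IsEchelon (V : Submodule K (E → K)) (J : Finset E) (u : E → E → K) : Prop where
  mem : ∀ j ∈ J, u j ∈ V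
  apply_self : ∀ j ∈ J, u j j = 1
  apply_of_ne : ∀ j ∈ J, ∀ i ∈ J, i ≠ j → u j i = 0
  eq_zero : ∀ v ∈ V, (∀ j ∈ J, v j = 0) → v = 0

theorem exists_isEchelon [Finite E] (V : Submodule K (E → K)) : ∃ J u, IsEchelon V J u := by
  classical
  have := Fintype.ofFinite E
  obtain ⟨J, hJ⟩ := exists_minimal_of_wellFoundedLT
    (fun J : Finset E => ∀ v ∈ V, (∀ j ∈ J, v j = 0) → v = 0)
    ⟨Finset.univ, fun v _ h => funext fun j => h j (Finset.mem_univ j)⟩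
  have hpivot : ∀ j ∈ J, ∃ u ∈ V, u j = 1 ∧ ∀ i ∈ J, i ≠ j → u i = 0 := by
    intro j hj
    have hnot := hJ.not_prop_of_lt (Finset.erase_ssubset hj)
    push Not at hnot
    obtain ⟨w, hw, hw0, hwne⟩ := hnot
    have hw0' (i : E) (hi : i ∈ J) (hij : i ≠ j) : w i = 0 := hw0 i (Finset.mem_erase.2 ⟨hij, hi⟩)
    have hwj : w j ≠ 0 := fun h0 => hwne <| hJ.prop w hw fun i hi => by
      rcases eq_or_ne i j with rfl | hij
      exacts [h0, hw0' i hi hij]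
    exact ⟨(w j)⁻¹ • w, V.smul_mem _ hw, inv_mul_cancel₀ hwj, fun i hi hij => by
      simp [hw0' i hi hij]⟩
  choose! u hu hself hne using hpivot
  exact ⟨J, u, hu, hself, hne, hJ.prop⟩

theorem IsEchelon.eq_of_forall_apply_eq (h : IsEchelon V J u) {v w : E → K} (hv : v ∈ V)
    (hw : w ∈ V) (hvw : ∀ j ∈ J, v j = w j) : v = w :=
  sub_eq_zero.1 <| h.eq_zero _ (V.sub_mem hv hw) fun j hj => sub_eq_zero.2 (hvw j hj)

theorem IsEchelon.mem_iff (h : IsEchelon V J u) {v : E → K} :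
    v ∈ V ↔ ∀ e, v e = ∑ j ∈ J, u j e * v j := by
  have hmem : ∑ j ∈ J, v j • u j ∈ V := V.sum_mem fun j hj => V.smul_mem _ (h.mem j hj)
  have happly (e : E) : (∑ j ∈ J, v j • u j) e = ∑ j ∈ J, u j e * v j := by
    simp [mul_comm]
  simp only [← happly, ← funext_iff]
  refine ⟨fun hv => h.eq_of_forall_apply_eq hv hmem fun i hi => ?_, fun hv => hv ▸ hmem⟩
  rw [happly, Finset.sum_eq_single_of_mem i hi fun j hj hji => by
    rw [h.apply_of_ne j hj i hi hji.symm, zero_mul], h.apply_self i hi, one_mul]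

variable {L : Type*} [Field L] {c : E → K}

theorem retraction_mem_span [Algebra L K] (π : K →ₗ[L] L) (hc : ∀ e, c e ≠ 0) {T : Set (E → L)}
    {w : E → K} (hw : w ∈ Submodule.span K ((fun t e => c e * algebraMap L K (t e)) '' T)) :
    (fun e => c e * algebraMap L K (π (w e / c e))) ∈
      Submodule.span K ((fun t e => c e * algebraMap L K (t e)) '' T) := by
  suffices ∀ a : K, (fun e => c e * algebraMap L K (π (a * w e / c e))) ∈
      Submodule.span K ((fun t e => c e * algebraMap L K (t e)) '' T) by
    simpa using this 1
  induction hw using Submodule.span_induction with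
  | mem w hw =>
    obtain ⟨t, ht, rfl⟩ := hw
    intro a
    convert Submodule.smul_mem _ (algebraMap L K (π a))
      (Submodule.subset_span (mem_image_of_mem _ ht)) using 1
    ext e
    have hπ : π (a * (c e * algebraMap L K (t e)) / c e) = t e * π a := by
      rw [← smul_eq_mul (t e), ← map_smul, Algebra.smul_def]
      congr 1
      field_simp [hc e]
    simp only [hπ, map_mul, Pi.smul_apply, smul_eq_mul]
    ring
  | zero => exact fun a => by convert Submodule.zero_mem _; simp
  | add v w _ _ hv hw =>
    intro a
    convert Submodule.add_mem _ (hv a) (hw a) using 1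
    ext e
    simp [mul_add, add_div]
  | smul b w _ hw =>
    intro a
    simpa only [Pi.smul_apply, smul_eq_mul, ← mul_assoc] using hw (a * b)

theorem IsEchelon.exists_mul_eq_mul (h : IsEchelon V J u) (i : L →+* K) (hc : ∀ e, c e ≠ 0)
    {T : Set (E → L)} (hV : V = Submodule.span K ((fun t e => c e * i (t e)) '' T)) {j : E}
    (hj : j ∈ J) (e : E) : ∃ x, c j * u j e = c e * i x := by
  let := i.toAlgebra
  obtain ⟨π, hπ⟩ := LinearMap.exists_leftInverse_of_injective (Algebra.linearMap L K)
    (LinearMap.ker_eq_bot.2 (algebraMap L K).injective)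
  have hπ1 : i (π 1) = 1 := by
    simpa using congrArg i (LinearMap.congr_fun hπ 1)
  -- Applied coordinatewise, an `L`-linear retraction of `K` onto `L` preserves `V`, and therefore
  -- fixes its reduced echelon basis, up to the factors `c e`.
  have hmem : c j • u j ∈ V := V.smul_mem _ (h.mem j hj)
  have hret : (fun e => c e * i (π ((c j • u j) e / c e))) ∈ V := by
    rw [hV] at hmem ⊢
    exact retraction_mem_span π hc hmem
  refine ⟨_, congrFun (h.eq_of_forall_apply_eq hmem hret fun e he => ?_) e⟩
  rcases eq_or_ne e j with rfl | hej
  · simp [h.apply_self e hj, hc e, hπ1]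
  · simp [h.apply_of_ne j hj e he hej]

end Echelon

section Semilinear

variable {K M : Type*} [Field K] [AddCommGroup M] [Module K M] [FiniteDimensional K M]

theorem subset_of_mapsTo_semilinearMap {σ : K ≃+* K} {ψ : M →ₛₗ[(σ : K →+* K)] M}
    (hψ : Injective ψ) {T : Set M} {V : Submodule K M} (hT : MapsTo ψ T T) (hV : MapsTo ψ T V) :
    T ⊆ V := by
  let W := Submodule.span K T
  have hWW : W.map ψ ≤ W := by
    rw [Submodule.map_span]
    exact Submodule.span_mono hT.image_subset
  have hWV : W.map ψ ≤ V := by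
    rw [Submodule.map_span]
    exact Submodule.span_le.2 hV.image_subset
  have : RingHomInvPair (σ : K →+* K) (σ.symm : K →+* K) := .of_ringEquiv σ
  have : RingHomInvPair (σ.symm : K →+* K) (σ : K →+* K) := .of_ringEquiv σ.symm
  let e : W ≃ₛₗ[(σ : K →+* K)] W.map ψ :=
    Submodule.equivMapOfInjective (σ₂₁ := (σ.symm : K →+* K)) ψ hψ W
  have hrank := rank_eq_of_equiv_equiv σ e.toAddEquiv σ.bijective (map_smulₛₗ e)
  have heq : W.map ψ = W := Submodule.eq_of_le_of_finrank_eq hWW (congrArg _ hrank.symm)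
  exact fun t ht => hWV (heq.ge (Submodule.subset_span ht))

end Semilinear

section Characters

variable {k A E : Type*} (K : Type*) [Field k] [Field K] [Algebra k K] [AddCommGroup A]

/-- The value in `K` of an element of `kˣ`, the latter being written additively. -/
def unitVal (x : Additive kˣ) : K := algebraMap k K x.toMul

variable {K}

theorem unitVal_ne_zero (x : Additive kˣ) : unitVal K x ≠ 0 := by simp [unitVal]

theorem unitVal_injective : Injective (unitVal K : Additive kˣ → K) :=
  (algebraMap k K).injective.comp (Units.val_injective.comp Additive.toMul.injective)

theorem unitVal_add (x y : Additive kˣ) : unitVal K (x + y) = unitVal K x * unitVal K y := by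
  simp [unitVal]

theorem unitVal_sub (x y : Additive kˣ) : unitVal K (x - y) = unitVal K x / unitVal K y := by
  rw [eq_div_iff (unitVal_ne_zero y), ← unitVal_add, sub_add_cancel]

theorem unitVal_nsmul (n : ℕ) (x : Additive kˣ) : unitVal K (n • x) = unitVal K x ^ n := by
  simp [unitVal]

variable (K) in
/-- The vector of the values in `K` of a family of characters of `A`. -/
def charVec (χ : E → A →+ Additive kˣ) (x : A) (e : E) : K := unitVal K (χ e x)

variable {χ : E → A →+ Additive kˣ} {V : Submodule K (E → K)} {x y z : A} {p m : ℕ}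

theorem charVec_ne_zero (e : E) : charVec K χ x e ≠ 0 := unitVal_ne_zero _

theorem charVec_add : charVec K χ (x + y) = charVec K χ x * charVec K χ y := by
  ext
  simp [charVec, unitVal_add]

theorem charVec_nsmul : charVec K χ (m • x) = charVec K χ x ^ m := by
  ext
  simp [charVec, unitVal_nsmul]

theorem isFrobeniusRigid_setOf_charVec_mem [Finite E] [ExpChar K p] [PerfectRing K p] :
    IsFrobeniusRigid p {x | charVec K χ x ∈ V} := by
  intro n c T hT hTV
  let σ := iterateFrobeniusEquiv K p n
  let ψ : (E → K) →ₛₗ[(σ : K →+* K)] (E → K) :=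
    { toFun := fun v e => charVec K χ c e * σ (v e)
      map_add' := fun v w => by
        ext
        simp [mul_add]
      map_smul' := fun a v => by
        ext
        simp [mul_left_comm] }
  have hψ (x : A) : ψ (charVec K χ x) = charVec K χ (twist (p ^ n) c x) := by
    rw [twist, charVec_add, charVec_nsmul, mul_comm]
    rfl
  have hψ_inj : Injective ψ := fun v w hvw => funext fun e =>
    σ.injective (mul_left_cancel₀ (charVec_ne_zero e) (congrFun hvw e))
  refine image_subset_iff.1 (subset_of_mapsTo_semilinearMap hψ_inj (T := charVec K χ '' T) ?_ ?_)
  · rintro _ ⟨x, hx, rfl⟩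
    exact ⟨_, hT hx, (hψ x).symm⟩
  · rintro _ ⟨x, hx, rfl⟩
    exact hψ x ▸ hTV hx

section ResidueClasses

variable (χ V) in
/-- The span of the vectors of characters lying in `V`, for the points of a given class modulo
`m`. -/
def classSpan (m : ℕ) (t : A ⧸ (nsmulAddMonoidHom (α := A) m).range) : Submodule K (E → K) :=
  Submodule.span K (charVec K χ '' {x | charVec K χ x ∈ V ∧ (x : A ⧸ _) = t})

theorem classSpan_mk : classSpan χ V m (z : A ⧸ _) = Submodule.span K
    ((fun y => charVec K χ z * charVec K χ y ^ m) '' {y | charVec K χ (z + m • y) ∈ V}) := by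
  have hclass : {x | charVec K χ x ∈ V ∧ (x : A ⧸ (nsmulAddMonoidHom (α := A) m).range) = z} =
      (fun y => z + m • y) '' {y | charVec K χ (z + m • y) ∈ V} := by
    ext x
    constructor
    · rintro ⟨hx, hxz⟩
      obtain ⟨y, hy⟩ := QuotientAddGroup.eq.1 hxz.symm
      obtain rfl : z + m • y = x := eq_neg_add_iff_add_eq.1 hy
      exact ⟨y, hx, rfl⟩
    · rintro ⟨y, hy, rfl⟩
      exact ⟨hy, Eq.symm (QuotientAddGroup.eq.2 ⟨y, (neg_add_cancel_left z (m • y)).symm⟩)⟩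
  simp only [classSpan, hclass, image_image, charVec_add, charVec_nsmul]

theorem classSpan_le (t : A ⧸ (nsmulAddMonoidHom (α := A) m).range) : classSpan χ V m t ≤ V :=
  Submodule.span_le.2 (image_subset_iff.2 fun _ hx => hx.1)

variable (χ V) in
/-- The points of `{x | charVec K χ x ∈ V}` that are caught by the spans of the classes modulo `m`
spanning a proper subspace of `V`. -/
def lowerPart (m : ℕ) : Set A :=
  ⋃ t : {t // classSpan χ V m t < V}, {x | charVec K χ x ∈ classSpan χ V m t}

theorem lowerPart_subset : lowerPart χ V m ⊆ {x | charVec K χ x ∈ V} :=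
  iUnion_subset fun t _ hx => classSpan_le t.1 hx

theorem classSpan_eq_of_notMem_lowerPart (hx : charVec K χ x ∈ V) (hxl : x ∉ lowerPart χ V m) :
    classSpan χ V m x = V := by
  by_contra hne
  exact hxl (mem_iUnion.2 ⟨⟨x, (classSpan_le _).lt_of_ne hne⟩,
    Submodule.subset_span ⟨x, ⟨hx, rfl⟩, rfl⟩⟩)

theorem finite_quotient_range_nsmul [Module.Finite ℤ A] (hm : m ≠ 0) :
    Finite (A ⧸ (nsmulAddMonoidHom (α := A) m).range) := by
  have : AddGroup.FG A := Module.Finite.iff_addGroup_fg.1 inferInstance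
  refine AddCommGroup.finite_of_fg_isAddTorsion _ fun t => ?_
  obtain ⟨x, rfl⟩ := QuotientAddGroup.mk_surjective t
  refine isOfFinAddOrder_iff_nsmul_eq_zero.2 ⟨m, hm.bot_lt, ?_⟩
  rw [← QuotientAddGroup.mk_nsmul, QuotientAddGroup.eq_zero_iff]
  exact ⟨x, rfl⟩

theorem isPNested_lowerPart [Module.Finite ℤ A] (hm : m ≠ 0)
    (hV : ∀ V' < V, IsPNested p {x | charVec K χ x ∈ V'}) : IsPNested p (lowerPart χ V m) := by
  have := finite_quotient_range_nsmul (A := A) hm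
  exact .iUnion fun t => hV _ t.2

variable {J : Finset E} {u : E → E → K}

theorem IsEchelon.exists_unitVal_eq [ExpChar K p] (h : IsEchelon V J u) {n : ℕ}
    (hz : classSpan χ V (p ^ n) z = V) {j e : E} (hj : j ∈ J) (hje : u j e ≠ 0) :
    ∃ y, unitVal K (χ e z - χ j z + p ^ n • y) = u j e := by
  let i : k →+* K := (iterateFrobenius K p n).comp (algebraMap k K)
  have hspan : V = Submodule.span K ((fun t e => charVec K χ z e * i (t e)) ''
      ((fun y e => ((χ e y).toMul : k)) '' {y | charVec K χ (z + p ^ n • y) ∈ V})) := by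
    rw [image_image]
    exact hz.symm.trans classSpan_mk
  obtain ⟨x, hx⟩ := h.exists_mul_eq_mul i (fun _ => charVec_ne_zero _) hspan hj e
  have hx0 : x ≠ 0 := by
    rintro rfl
    simp [charVec_ne_zero, hje] at hx
  refine ⟨.ofMul (Units.mk0 x hx0), ?_⟩
  rw [unitVal_add, unitVal_sub, div_mul_eq_mul_div, div_eq_iff (unitVal_ne_zero _),
    unitVal_nsmul, mul_comm (u j e)]
  exact hx.symm

end ResidueClasses

end Characters

section LinearRelations

variable {k K A E : Type*} [Field k] [Field K] [Algebra k K] [AddCommGroup A]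
  {χ : E → A →+ Additive kˣ} {V : Submodule K (E → K)} {x y : A} {p : ℕ}

/-- The differences of characters `χ e - χ j`, for `j ∈ S e`. They are to be compared with the
entries `u j e` of an echelon basis. -/
def diffHom (χ : E → A →+ Additive kˣ) (S : E → Finset E) : A →+ ∀ e, S e → Additive kˣ :=
  .pi fun e => .pi fun j => χ e - χ j

theorem sum_unitVal_nsmul_eq_one_iff [ExpChar K p] {ι : Type*} [Fintype ι]
    {b : ι → Additive kˣ} : ∑ i, unitVal K ((p • b) i) = 1 ↔ ∑ i, unitVal K (b i) = 1 := by
  simp only [Pi.smul_apply, unitVal_nsmul]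
  rw [← sum_pow_char, ← frobenius_def]
  exact map_eq_one_iff _ (frobenius_inj K p)

variable {J : Finset E} {u : E → E → K} {S : E → Finset E} {a : ∀ e, S e → Additive kˣ}

theorem IsEchelon.charVec_mem_iff (h : IsEchelon V J u) (hS : ∀ e j, j ∈ S e ↔ j ∈ J ∧ u j e ≠ 0)
    (ha : ∀ e j, unitVal K (a e j) = u j e) :
    charVec K χ x ∈ V ↔ ∀ e, ∑ j, unitVal K ((a - diffHom χ S x) e j) = 1 := by
  refine h.mem_iff.trans (forall_congr' fun e => ?_)
  have hterm (j : S e) : unitVal K ((a - diffHom χ S x) e j) =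
      u j e * charVec K χ x j / charVec K χ x e := by
    change unitVal K (a e j - (χ e x - χ j x)) = _
    rw [unitVal_sub, unitVal_sub, ha, div_div_eq_mul_div]
    rfl
  have hsum : ∑ j : S e, u j e * charVec K χ x j = ∑ j ∈ J, u j e * charVec K χ x j := by
    rw [Finset.sum_coe_sort (S e) fun j => u j e * charVec K χ x j]
    exact Finset.sum_subset (fun j hj => ((hS e j).1 hj).1) fun j hj hjS => by
      simp [show u j e = 0 by simpa [hS, hj] using hjS]
  rw [Finset.sum_congr rfl fun j _ => hterm j, ← Finset.sum_div, hsum,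
    div_eq_one_iff_eq (charVec_ne_zero e), eq_comm]

theorem exists_pow_smul_eq_sub_diffHom [ExpChar K p] (h : IsEchelon V J u)
    (hS : ∀ e j, j ∈ S e ↔ j ∈ J ∧ u j e ≠ 0) (ha : ∀ e j, unitVal K (a e j) = u j e) {n : ℕ}
    (hx : classSpan χ V (p ^ n) x = V) : ∃ y, p ^ n • y = a - diffHom χ S x := by
  choose y hy using fun (e : E) (j : S e) =>
    h.exists_unitVal_eq hx ((hS e j).1 j.2).1 ((hS e j).1 j.2).2
  refine ⟨y, funext₂ fun e j => eq_sub_of_add_eq' (unitVal_injective (K := K) ?_)⟩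
  exact (hy e j).trans (ha e j).symm

variable [Module.Finite ℤ A] [Finite E] [ExpChar K p] [PerfectRing K p]

theorem isPNested_setOf_charVec_mem (hp : p ≠ 1) (hk : HasFGSaturations p (Additive kˣ))
    (χ : E → A →+ Additive kˣ) (V : Submodule K (E → K)) :
    IsPNested p {x | charVec K χ x ∈ V} := by
  classical
  induction V using WellFoundedLT.induction with | ind V ih
  have hlower (n : ℕ) : IsPNested p (lowerPart χ V (p ^ n)) :=
    isPNested_lowerPart (pow_ne_zero n (expChar_ne_zero K p)) ih
  by_cases hne : ∃ n, {x | charVec K χ x ∈ V} ⊆ lowerPart χ V (p ^ n)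
  · obtain ⟨n, hn⟩ := hne
    exact hn.antisymm lowerPart_subset ▸ hlower n
  push Not at hne
  have hspan (n : ℕ) (x : A) (hx : x ∉ lowerPart χ V (p ^ n)) (hxV : charVec K χ x ∈ V) :=
    classSpan_eq_of_notMem_lowerPart hxV hx
  obtain ⟨J, u, h⟩ := exists_isEchelon V
  let S (e : E) : Finset E := {j ∈ J | u j e ≠ 0}
  have hS (e j : E) : j ∈ S e ↔ j ∈ J ∧ u j e ≠ 0 := Finset.mem_filter
  obtain ⟨x₀, hx₀V, hx₀⟩ := not_subset.1 (hne 0)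
  choose y hy using fun (e : E) (j : S e) =>
    h.exists_unitVal_eq (hspan 0 x₀ hx₀ hx₀V) ((hS e j).1 j.2).1 ((hS e j).1 j.2).2
  set a : ∀ e, S e → Additive kˣ := fun e j => χ e x₀ - χ j x₀ + p ^ 0 • y e j
  have hZ : {x | charVec K χ x ∈ V} =
      {x | a - diffHom χ S x ∈ {b | ∀ e, ∑ j, unitVal K (b e j) = 1}} :=
    ext fun x => h.charVec_mem_iff hS hy
  have hrigid := isFrobeniusRigid_setOf_charVec_mem (p := p) (χ := χ) (V := V)
  have hsub (n : ℕ) := lowerPart_subset (χ := χ) (V := V) (m := p ^ n)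
  rw [hZ] at hrigid hsub hne ⊢
  refine .of_descent hp (.pi fun _ => .pi fun _ => hk)
    (fun b => forall_congr' fun e => sum_unitVal_nsmul_eq_one_iff) hrigid hlower hsub
    (fun n x hx hxW => ?_) hne
  exact exists_pow_smul_eq_sub_diffHom h hS hy (hspan n x hx (hZ.ge hxW))

end LinearRelations

section Variety

variable {K : Type*} [Field K] {N : ℕ} {X : Set (Fin N → Kˣ)}

theorem IsTorusSubvariety.exists_submodule (hX : IsTorusSubvariety K X) :
    ∃ (s : Finset (Fin N →₀ ℕ)) (V : Submodule K (s → K)), ∀ x, x ∈ X ↔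
      (fun d : s => ∏ i, (x i : K) ^ d.1 i) ∈ V := by
  classical
  obtain ⟨𝒮, rfl⟩ := hX
  obtain ⟨t, ht⟩ := IsNoetherian.noetherian (Ideal.span 𝒮)
  let s := t.biUnion MvPolynomial.support
  let ℓ (f : t) : (s → K) →ₗ[K] K := Fintype.linearCombination K fun d => f.1.coeff d.1
  refine ⟨s, ⨅ f, (ℓ f).ker, fun x => ?_⟩
  have hℓ (f : t) : ℓ f (fun d => ∏ i, (x i : K) ^ d.1 i) =
      MvPolynomial.aeval (fun i => (x i : K)) f.1 := by
    rw [MvPolynomial.aeval_def, MvPolynomial.eval₂_eq', Fintype.linearCombination_apply,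
      Finset.sum_subset (Finset.subset_biUnion_of_mem _ f.2) fun d _ hd => by
        rw [MvPolynomial.notMem_support_iff.1 hd, map_zero, zero_mul]]
    simpa [mul_comm] using Finset.sum_coe_sort s fun d => f.1.coeff d * ∏ i, (x i : K) ^ d i
  have hspan : MvPolynomial.zeroLocus K (Ideal.span 𝒮) = MvPolynomial.zeroLocus K (Ideal.span t) :=
    congrArg _ ht.symm
  simp only [MvPolynomial.zeroLocus_span] at hspan
  simpa [hℓ] using congrArg ((fun i => (x i : K)) ∈ ·) hspan

theorem exists_intermediateField_essFiniteType {F ι : Type*} [Field F] [Algebra F K] [Finite ι]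
    {Γ : Subgroup (ι → Kˣ)} (hΓ : Γ.FG) :
    ∃ k : IntermediateField F K, Algebra.EssFiniteType F k ∧
      ∃ c : ι → Γ →* kˣ, ∀ i x, ((c i x : k) : K) = (x : ι → Kˣ) i := by
  obtain ⟨G, rfl⟩ := hΓ
  let B : Set K := ⋃ i : ι, (fun x : ι → Kˣ => (x i : K)) '' G
  have hB : B.Finite := finite_iUnion fun i => G.finite_toSet.image _
  let k := IntermediateField.adjoin F B
  have hmem (x : Subgroup.closure (G : Set (ι → Kˣ))) (i : ι) : (x.1 i : K) ∈ k := by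
    obtain ⟨x, hx⟩ := x
    induction hx using Subgroup.closure_induction with
    | mem x hx => exact IntermediateField.subset_adjoin _ _ (mem_iUnion.2 ⟨i, x, hx, rfl⟩)
    | one => exact k.one_mem
    | mul x y _ _ hx hy => exact k.mul_mem hx hy
    | inv x _ hx => simpa using k.inv_mem hx
  refine ⟨k, IntermediateField.essFiniteType_iff.2 (IntermediateField.fg_adjoin_of_finite hB),
    fun i => .mk' (fun x => .mk0 ⟨x.1 i, hmem x i⟩ (Subtype.coe_ne_coe.1 (x.1 i).ne_zero))
      fun x y => ?_, fun i x => rfl⟩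
  ext
  simp

theorem IsTorusSubvariety.isPNested (hX : IsTorusSubvariety K X) (p : ℕ) [Fact p.Prime] [CharP K p]
    [PerfectRing K p] {Γ : Subgroup (Fin N → Kˣ)} (hΓ : Γ.FG) :
    IsPNested p {x : Additive Γ | (x.toMul : Fin N → Kˣ) ∈ X} := by
  let := ZMod.algebra K p
  have : Module.Finite ℤ (Additive Γ) := Module.Finite.iff_addGroup_fg.2
    (GroupFG.iff_add_fg.1 ((Group.fg_iff_subgroup_fg Γ).2 hΓ))
  obtain ⟨k, hk, c, hc⟩ := exists_intermediateField_essFiniteType (F := ZMod p) hΓ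
  obtain ⟨s, V, hV⟩ := hX.exists_submodule
  let χ (d : s) : Additive Γ →+ Additive kˣ := ∑ i, d.1 i • (c i).toAdditive
  have hχ (x : Additive Γ) :
      charVec K χ x = fun d => ∏ i, ((x.toMul : Fin N → Kˣ) i : K) ^ d.1 i := by
    ext d
    simp [charVec, unitVal, χ, hc]
  have : ExpChar k p := (algebraMap k K).expChar (algebraMap k K).injective p
  simpa only [hχ, ← hV] using isPNested_setOf_charVec_mem (Fact.out (p := p.Prime)).ne_one
    (hasFGSaturations_units p (ZMod p) k) χ V

end Variety

section Torus

variable {K : Type*} [Field K] {N M : ℕ}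

theorem pow_left_surjective_units [IsAlgClosed K] {n : ℕ} (hn : n ≠ 0) :
    Surjective fun x : Kˣ => x ^ n := by
  intro y
  obtain ⟨z, hz⟩ := IsAlgClosed.exists_pow_nat_eq (y : K) hn.bot_lt
  have hz0 : z ≠ 0 := by
    rintro rfl
    exact y.ne_zero (by rw [← hz, zero_pow hn])
  exact ⟨Units.mk0 z hz0, Units.ext hz⟩

theorem monomialMap_surjective [IsAlgClosed K] {A : Fin M → Fin N → ℤ}
    (hA : LinearIndependent ℤ A) : Surjective (monomialMap (K := K) A) := by
  intro y
  let : DivisibleBy (Additive Kˣ) ℕ :=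
    divisibleByOfSMulRightSurj _ _ fun hn => pow_left_surjective_units hn
  let := AddGroup.divisibleByIntOfDivisibleByNat (Additive Kˣ)
  obtain ⟨h, hh⟩ := (Module.Baer.of_divisible (Additive Kˣ)).extension_property
    (Fintype.linearCombination ℤ A) (linearIndependent_iff_injective_fintypeLinearCombination.1 hA)
    (Fintype.linearCombination ℤ fun i => Additive.ofMul (y i))
  have hA' (i : Fin M) : h (A i) = .ofMul (y i) := by
    simpa [Fintype.linearCombination_apply_single] using LinearMap.congr_fun hh (Pi.single i 1)
  refine ⟨fun j => (h fun l => if j = l then 1 else 0).toMul, funext fun i => ?_⟩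
  simpa [toMul_sum, monomialMap] using
    congrArg Additive.toMul ((h.pi_apply_eq_sum_univ (A i)).symm.trans (hA' i))

section GrouplessFSet

variable {p κ r : ℕ} {A : Type*} [AddCommGroup A] {Γ : Subgroup (Fin N → Kˣ)}

theorem isGrouplessFSet_image_nestedSet [IsAlgClosed K] (hp : p.Prime) (hκ : κ ≠ 0)
    (φ : A →+ Additive (Fin N → Kˣ)) (hφ : ∀ x, (φ x).toMul ∈ Γ) (g₀ : A) (g : Fin r → A)
    {H : AddSubgroup A} (hH : H ≤ φ.ker) :
    IsGrouplessFSet p Γ ((fun x => (φ x).toMul) '' nestedSet (p ^ κ) g₀ g H) := by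
  have hq : p ^ κ - 1 ≠ 0 := (Nat.sub_pos_of_lt (Nat.one_lt_pow hκ hp.one_lt)).ne'
  choose α hα using fun i =>
    (pow_left_surjective_units (K := K) hq).comp_left (φ (g i)).toMul
  have key (n : Fin r → ℕ) : (φ (g₀ + ∑ i, geomSum (p ^ κ) (n i) • g i)).toMul =
      (φ g₀).toMul * (∏ i, α i)⁻¹ * ∏ i, α i ^ (p ^ κ) ^ (1 * n i) := by
    have hα' (i : Fin r) : (φ (g i)).toMul = α i ^ (p ^ κ - 1) := (hα i).symm
    simp only [one_mul, ← geomSum_mul_sub_one_add_one (pow_ne_zero κ hp.ne_zero), pow_succ,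
      Finset.prod_mul_distrib, map_add, map_sum, map_nsmul, toMul_add, toMul_sum, toMul_nsmul, hα',
      ← pow_mul, mul_comm (p ^ κ - 1)]
    rw [mul_comm (∏ i, α i ^ _), mul_assoc, inv_mul_cancel_left]
  refine ⟨image_subset_iff.2 fun x _ => hφ x, κ, hκ.bot_lt, r, 1, le_rfl,
    (φ g₀).toMul * (∏ i, α i)⁻¹, α, ?_⟩
  ext x
  constructor
  · rintro ⟨_, ⟨n, η, hη, rfl⟩, rfl⟩
    refine ⟨n, ?_⟩
    rw [← key]
    beta_reduce
    rw [map_add, (hH hη : φ η = 0), add_zero]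
  · rintro ⟨n, rfl⟩
    exact ⟨_, ⟨n, 0, H.zero_mem, (add_zero _).symm⟩, key n⟩

end GrouplessFSet

section CharAnnihilator

variable {ι G : Type*} [Fintype ι] [CommGroup G]

/-- The lattice of the characters `x ↦ ∏ j, x j ^ a j` that are trivial on `S`. -/
def charAnnihilator (S : Set (ι → G)) : Submodule ℤ (ι → ℤ) where
  carrier := {a | ∀ x ∈ S, ∏ j, x j ^ a j = 1}
  zero_mem' := by simp
  add_mem' ha hb x hx := by simp [zpow_add, Finset.prod_mul_distrib, ha x hx, hb x hx]
  smul_mem' c a ha x hx := by simp [mul_comm c, zpow_mul, Finset.prod_zpow, ha x hx]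

theorem mem_charAnnihilator {S : Set (ι → G)} {a : ι → ℤ} :
    a ∈ charAnnihilator S ↔ ∀ x ∈ S, ∏ j, x j ^ a j = 1 := Iff.rfl

theorem charAnnihilator_anti {S T : Set (ι → G)} (h : S ⊆ T) :
    charAnnihilator T ≤ charAnnihilator S := fun _ ha x hx => ha x (h hx)

theorem monomialMap_eq_one_iff {A : Fin M → Fin N → ℤ} {x : Fin N → Kˣ} :
    monomialMap A x = 1 ↔ Submodule.span ℤ (range A) ≤ charAnnihilator {x} := by
  simp only [Submodule.span_le, range_subset_iff, SetLike.mem_coe, mem_charAnnihilator,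
    mem_singleton_iff, forall_eq, funext_iff (f := monomialMap A x)]
  rfl

theorem finite_of_finrank_charAnnihilator {S : Set (ι → Kˣ)}
    (hS : Fintype.card ι ≤ Module.finrank ℤ (charAnnihilator S)) : S.Finite := by
  classical
  have hrank := Submodule.finrank_quotient_add_finrank (charAnnihilator S)
  rw [Module.finrank_fintype_fun_eq_card] at hrank
  have htors := Module.finrank_eq_zero_iff_isTorsion.1
    (show Module.finrank ℤ ((ι → ℤ) ⧸ charAnnihilator S) = 0 by lia)
  have : Finite ((ι → ℤ) ⧸ charAnnihilator S) := Module.finite_of_fg_torsion _ htors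
  let m := Nat.card ((ι → ℤ) ⧸ charAnnihilator S)
  have hm (a : ι → ℤ) : m • a ∈ charAnnihilator S := by
    rw [← Submodule.Quotient.mk_eq_zero, Submodule.Quotient.mk_smul]
    exact card_nsmul_eq_zero'
  have hfinite : {x : Kˣ | x ^ m = 1}.Finite := finite_setOf_smul_eq_zero_units K Nat.card_pos.ne'
  refine (Finite.pi' fun _ => hfinite).subset fun x hx i => ?_
  simpa [Pi.single_apply, mul_comm] using hm (Pi.single i 1) x hx

end CharAnnihilator

end Torus

section Cosets

theorem sum_mul_eq_zero_of_factorsThrough {L W ι β : Type*} [Field L] [AddCommGroup W] [Module L W]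
    {v : β → W} (hv : LinearIndependent L v) {s : Finset ι} {ρ : ι → β} {c y : ι → L}
    (h : ∑ d ∈ s, c d • v (ρ d) = 0) (hy : FactorsThrough y ρ) : ∑ d ∈ s, c d * y d = 0 := by
  have hzero : ∑ d ∈ s, Finsupp.single (ρ d) (c d) = 0 :=
    hv (by simpa [map_sum, Finsupp.linearCombination_single] using h)
  simpa [map_sum, Finsupp.linearCombination_single, hy.extend_apply] using
    congrArg (Finsupp.linearCombination L (extend ρ y 0)) hzero

variable {K : Type*} [Field K] {N : ℕ} {X : Set (Fin N → Kˣ)}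

theorem eval_mul_units (f : MvPolynomial (Fin N) K) (x y : Fin N → Kˣ) :
    f.eval (fun i => ((x * y) i : K)) = ∑ d ∈ f.support,
      (f.coeff d * ∏ i, (x i : K) ^ d i) * ∏ i, (y i : K) ^ d i := by
  rw [MvPolynomial.eval_eq']
  simp only [Pi.mul_apply, Units.val_mul, mul_pow, Finset.prod_mul_distrib, mul_assoc]

theorem IsTorusSubvariety.mul_mem (hX : IsTorusSubvariety K X) {H : Subgroup (Fin N → Kˣ)}
    {x y : Fin N → Kˣ} (hx : ∀ η ∈ H, x * η ∈ X)
    (hy : charAnnihilator (H : Set (Fin N → Kˣ)) ≤ charAnnihilator {y}) : x * y ∈ X := by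
  obtain ⟨𝒮, rfl⟩ := hX
  intro f hf
  let ρ (d : Fin N →₀ ℕ) : H →* K := (Units.coeHom K).comp
    (∏ i, (Pi.evalMonoidHom (fun _ : Fin N => Kˣ) i).comp H.subtype ^ d i)
  have hρ (d : Fin N →₀ ℕ) (η : H) : ρ d η = ∏ i, (η.1 i : K) ^ d i := by
    simp [ρ, MonoidHom.finsetProd_apply]
  rw [eval_mul_units]
  -- Monomials with the same restriction to `H` take the same value at `y`, and the distinct
  -- restrictions are linearly independent.
  refine sum_mul_eq_zero_of_factorsThrough (linearIndependent_monoidHom H K) (ρ := ρ) ?_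
    fun d d' hdd' => ?_
  · ext η
    simpa [hρ] using (eval_mul_units f x η).symm.trans (hx η η.2 f hf)
  · have hpow (z : Fin N → Kˣ) : ∏ i, z i ^ ((d i : ℤ) - d' i) = 1 ↔
        ∏ i, (z i : K) ^ d i = ∏ i, (z i : K) ^ d' i := by
      simp only [zpow_sub, zpow_natCast, Finset.prod_mul_distrib, Finset.prod_inv_distrib,
        mul_inv_eq_one, Units.ext_iff, Units.coe_prod, Units.val_pow_eq_pow_val]
    refine (hpow y).1 (hy (fun η hη => (hpow η).2 ?_) y rfl)
    simpa only [hρ] using DFunLike.congr_fun hdd' ⟨η, hη⟩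

end Cosets

section FSets

variable {K : Type*} [Field K] [IsAlgClosed K] {N p κ r : ℕ} {X : Set (Fin N → Kˣ)}
  {Γ : Subgroup (Fin N → Kˣ)} {g₀ : Additive Γ} {g : Fin r → Additive Γ}
  {H : AddSubgroup (Additive Γ)}

theorem exists_monomialMap_of_infinite {S : Set (Fin N → Kˣ)} (hS : S.Infinite) :
    ∃ M < N, ∃ A : Fin M → Fin N → ℤ, Surjective (monomialMap (K := K) A) ∧
      ∀ x : Fin N → Kˣ, monomialMap A x = 1 ↔ charAnnihilator S ≤ charAnnihilator {x} := by
  let b := Module.finBasis ℤ (charAnnihilator S)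
  let A := (charAnnihilator S).subtype ∘ b
  have hA : LinearIndependent ℤ A := b.linearIndependent.map' _ (Submodule.ker_subtype _)
  have hspan : Submodule.span ℤ (range A) = charAnnihilator S := by
    rw [range_comp, ← Submodule.map_span, b.span_eq, Submodule.map_subtype_top]
  refine ⟨_, ?_, A, monomialMap_surjective hA, fun x => by rw [monomialMap_eq_one_iff, hspan]⟩
  by_contra! hN
  exact hS (finite_of_finrank_charAnnihilator (by simpa using hN))

theorem isFiniteUnion_image_nestedSet (hp : p.Prime) (hκ : κ ≠ 0) [Finite H] :
    IsFiniteUnion (fun S => IsGrouplessFSet p Γ S ∨ IsGeneralizedFSet p Γ S)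
      ((fun x => (x.toMul : Fin N → Kˣ)) '' nestedSet (p ^ κ) g₀ g H) := by
  rw [nestedSet_eq_iUnion_bot, image_iUnion]
  exact .iUnion fun η => .of <| .inl <| isGrouplessFSet_image_nestedSet hp hκ
    Γ.subtype.toAdditive (fun x => x.toMul.2) _ g bot_le

theorem exists_isGeneralizedFSet (hp : p.Prime) (hκ : κ ≠ 0) (hX : IsTorusSubvariety K X)
    [Infinite H] (hS : nestedSet (p ^ κ) g₀ g H ⊆ {x | (x.toMul : Fin N → Kˣ) ∈ X}) :
    ∃ T, IsGeneralizedFSet p Γ T ∧ T ⊆ X ∩ Γ ∧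
      ∀ x ∈ nestedSet (p ^ κ) g₀ g H, (x.toMul : Fin N → Kˣ) ∈ T := by
  let H' : Subgroup (Fin N → Kˣ) := H.toSubgroup'.map Γ.subtype
  have hH' : (H' : Set (Fin N → Kˣ)).Infinite :=
    (infinite_coe_iff.1 ‹Infinite H›).image Γ.subtype_injective.injOn
  obtain ⟨M, hMN, A, hA, hker⟩ := exists_monomialMap_of_infinite hH'
  let φ := ((monomialMap A).comp Γ.subtype).toAdditive
  have hφ : H ≤ φ.ker := fun η hη => (hker _).2 <|
    charAnnihilator_anti (singleton_subset_iff.2 ⟨η.toMul, hη, rfl⟩)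
  have himage := isGrouplessFSet_image_nestedSet (Γ := Γ.map (monomialMap A)) hp hκ φ
    (fun x => Subgroup.mem_map_of_mem _ x.toMul.2) g₀ g hφ
  refine ⟨_, ⟨M, hMN, A, hA, _, himage, rfl⟩, ?_, fun x hx => ⟨x.toMul.2, x, hx, rfl⟩⟩
  rintro y ⟨hyΓ, x, hx, hxy⟩
  refine ⟨?_, hyΓ⟩
  rw [← mul_inv_cancel_left (x.toMul : Fin N → Kˣ) y]
  refine hX.mul_mem (H := H') ?_ ((hker _).1 ?_)
  · rintro _ ⟨η, hη, rfl⟩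
    exact hS (add_mem_nestedSet hx hη)
  · rw [map_mul, map_inv, ← hxy]
    exact inv_mul_cancel _

theorem exists_isFiniteUnion_between (hp : p.Prime) (hκ : κ ≠ 0) (hX : IsTorusSubvariety K X)
    (hS : nestedSet (p ^ κ) g₀ g H ⊆ {x | (x.toMul : Fin N → Kˣ) ∈ X}) :
    ∃ T, IsFiniteUnion (fun S => IsGrouplessFSet p Γ S ∨ IsGeneralizedFSet p Γ S) T ∧ T ⊆ X ∩ Γ ∧
      ∀ x ∈ nestedSet (p ^ κ) g₀ g H, {(x.toMul : Fin N → Kˣ)} ⊆ T := by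
  rcases finite_or_infinite H
  · refine ⟨_, isFiniteUnion_image_nestedSet hp hκ, ?_,
      fun x hx => singleton_subset_iff.2 ⟨x, hx, rfl⟩⟩
    rintro _ ⟨x, hx, rfl⟩
    exact ⟨hS hx, x.toMul.2⟩
  · obtain ⟨T, hT, hTX, hST⟩ := exists_isGeneralizedFSet hp hκ hX hS
    exact ⟨T, .of (.inr hT), hTX, fun x hx => singleton_subset_iff.2 (hST x hx)⟩

end FSets

/-- Main theorem of the paper (torus case): over an algebraically closed field `K` of
characteristic `p > 0`, the intersection of a subvariety `X` of `(Kˣ)^N` with a finitely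
generated subgroup `Γ` of `(Kˣ)^N` is a union of finitely many groupless `F`-sets in `Γ`
together with finitely many generalized `F`-sets in `Γ`. -/
theorem mordell_lang_torus_char_p
    (K : Type*) [Field K] [IsAlgClosed K] (p : ℕ) (hp : p.Prime) [CharP K p]
    (N : ℕ) (hN : 1 ≤ N) (X : Set (Fin N → Kˣ)) (hX : IsTorusSubvariety K X)
    (Γ : Subgroup (Fin N → Kˣ)) (hΓ : Γ.FG) :
    ∃ (n : ℕ) (Ss : Fin n → Set (Fin N → Kˣ)),
      (∀ i, IsGrouplessFSet p Γ (Ss i) ∨ IsGeneralizedFSet p Γ (Ss i)) ∧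
        X ∩ ↑Γ = ⋃ i, Ss i := by
  have : Fact p.Prime := ⟨hp⟩
  obtain ⟨κ, hκ, hnested⟩ := hX.isPNested p hΓ
  obtain ⟨S, hS, hSX, hXS⟩ := hnested.exists_between (u := fun x => {(x.toMul : Fin N → Kˣ)}) <| by
    rintro _ hT ⟨r, g₀, g, H, rfl⟩
    exact exists_isFiniteUnion_between hp hκ hX hT
  have hXΓ : X ∩ Γ = S := Subset.antisymm (fun x ⟨hx, hxΓ⟩ => hXS (.ofMul ⟨x, hxΓ⟩) hx rfl) hSX
  exact hXΓ ▸ hS.exists_fin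
end

section
/- (Moosa–Scanlon theorem, torus case.) Let K be an algebraically closed field of characteristic p > 0, let q be a power of p, let N ≥ 1, and let F = F_q be the Frobenius endomorphism of (Kˣ)^N acting coordinatewise by x ↦ x^q. Let X be a subvariety of (Kˣ)^N and let Γ be a finitely generated subgroup of (Kˣ)^N such that F^ℓ(Γ) ⊆ Γ for some ℓ ≥ 1. Then X ∩ Γ is a finite union of F-sets in Γ, i.e., of sets of the form S·B where S is a groupless F-set in Γ and B is a subgroup of Γ. -/
/-- `S` is a groupless `F`-set in the subgroup `Γ` of `(Kˣ)^N` for the `q`-power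
Frobenius `F = F_q : x ↦ x^q`: a subset of `Γ` of the form
`{α₀ · ∏_{i=1}^r F^{k·n_i}(α_i) : n_1, …, n_r ∈ ℕ}` with `r ≥ 0`, `k ≥ 1` and
`α₀, …, α_r ∈ (Kˣ)^N`. -/
def IsGrouplessFqSet {K : Type*} [Field K] (q : ℕ) {N : ℕ}
    (Γ : Subgroup (Fin N → Kˣ)) (S : Set (Fin N → Kˣ)) : Prop :=
  S ⊆ ↑Γ ∧ ∃ (r k : ℕ), 1 ≤ k ∧ ∃ (α₀ : Fin N → Kˣ) (α : Fin r → Fin N → Kˣ),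
    S = {g | ∃ n : Fin r → ℕ, g = α₀ * ∏ i : Fin r, (α i) ^ (q ^ (k * n i))}

/-- `T` is an `F`-set in `Γ`: a set of the form `S·B` where `S` is a groupless `F`-set
in `Γ` and `B` is a subgroup of `Γ`. -/
def IsFqSet {K : Type*} [Field K] (q : ℕ) {N : ℕ}
    (Γ : Subgroup (Fin N → Kˣ)) (T : Set (Fin N → Kˣ)) : Prop :=
  ∃ (S : Set (Fin N → Kˣ)) (B : Subgroup (Fin N → Kˣ)),
    IsGrouplessFqSet q Γ S ∧ B ≤ Γ ∧ T = {g | ∃ s ∈ S, ∃ b ∈ B, g = s * b}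

/-!
A subvariety meets `Γ` in the set of `g` for which a tuple of characters `χ(g)`, with values in a
finitely generated field `L`, lies in a linear subspace `V` of `Lⁱ`. One inducts on `dim V`. A
reduced basis of `V` rewrites the condition as `θ · ρ(g) ∈ V₁`, where `θ` is the tuple of
coefficients, `ρ(g)` consists of ratios of characters and `V₁`, given by equations `∑ y = 1`, is
stable under Frobenius in both directions.

Decompose `Γ` into cosets of `Γ ^ (p ^ n)`. On each coset either a Frobenius twist of `V` drops in
dimension, and the induction applies, or the values `θ · ρ(g)` have `p ^ n`-th roots. In the second
case the roots can be taken inside the coset `θ · ρ(Γ)`, by Artin–Rees and since homomorphisms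
`Lˣ → ℤ` detect torsion. Extracting roots repeatedly one either meets a point settled by the
induction, or the value is infinitely divisible, which leaves finitely many values.

It remains to see that the forward orbit of an `F`-set under the affine Frobenius `ψ : g ↦ h g ^ q`
is contained in an `F`-set of solutions. Solving `β ^ q = β h` gives
`ψ ^ n (g) = β⁻¹ (β g) ^ (q ^ n)`, so that the orbit is part of an `F`-set with one more exponent;
the rest of that `F`-set again consists of solutions, because a linear relation satisfied by
`x ^ (q ^ s)` for all large `s` is satisfied by `x`.
-/

section DualDetection

variable {R A : Type*} [CommRing R] [IsNoetherianRing R] [AddCommGroup A] [Module R A]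

theorem exists_finite_dual_family_of_fg {B : Submodule R A} (hB : B.FG) :
    ∃ (m : ℕ) (f : Fin m → Module.Dual R A), ∀ x ∈ B, (∀ i, f i x = 0) →
      ∀ φ : Module.Dual R A, φ x = 0 := by
  have : Module.Finite R B := Module.Finite.iff_fg.2 hB
  let res : Module.Dual R A →ₗ[R] Module.Dual R B := B.subtype.dualMap
  have : Module.Finite R res.range := Module.IsNoetherian.finite R _
  obtain ⟨m, g, hg⟩ := Module.Finite.exists_fin (R := R) (M := res.range)
  choose f hf using fun i ↦ (g i).2
  refine ⟨m, f, fun x hx hfx φ ↦ ?_⟩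
  have hle : (⊤ : Submodule R res.range) ≤
      ((Module.Dual.eval R B ⟨x, hx⟩).comp res.range.subtype).ker := by
    rw [← hg, Submodule.span_le, Set.range_subset_iff]
    intro i
    change (g i : Module.Dual R B) ⟨x, hx⟩ = 0
    rw [← hf i]
    exact hfx i
  exact hle (x := ⟨res φ, φ, rfl⟩) trivial

theorem exists_pow_smul_mem_of_mem {M : Type*} [AddCommGroup M] [Module R M] [Module.Finite R M]
    (a : R) (N : Submodule R M) :
    ∃ c, ∀ n, ∀ x ∈ N, (∃ y, x = a ^ (n + c) • y) → ∃ b ∈ N, x = a ^ n • b := by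
  obtain ⟨c, hc⟩ := (Ideal.span {a}).exists_pow_inf_eq_pow_smul N
  refine ⟨c, fun n x hx ⟨y, hy⟩ ↦ ?_⟩
  have hxn : x ∈ (Ideal.span {a} ^ (n + c) • ⊤ ⊓ N : Submodule R M) := by
    refine ⟨?_, hx⟩
    rw [hy, Ideal.span_singleton_pow]
    exact Submodule.smul_mem_smul (Ideal.mem_span_singleton_self _) trivial
  rw [hc _ (Nat.le_add_left c n), Nat.add_sub_cancel, Ideal.span_singleton_pow,
    Submodule.ideal_span_singleton_smul, Submodule.mem_smul_pointwise_iff_exists] at hxn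
  obtain ⟨b, hb, rfl⟩ := hxn
  exact ⟨b, hb.2, rfl⟩

theorem exists_pow_smul_mem_modulo_dual (a : R) {B : Submodule R A} (hB : B.FG) :
    ∃ c, ∀ n, ∀ x ∈ B, (∃ y, x = a ^ (n + c) • y) →
      ∃ b ∈ B, ∀ φ : Module.Dual R A, φ (x - a ^ n • b) = 0 := by
  obtain ⟨m, f, hf⟩ := exists_finite_dual_family_of_fg hB
  obtain ⟨c, hc⟩ := exists_pow_smul_mem_of_mem a (B.map (LinearMap.pi f))
  refine ⟨c, fun n x hx ⟨y, hy⟩ ↦ ?_⟩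
  obtain ⟨_, ⟨b, hb, rfl⟩, hxb⟩ := hc n _ (Submodule.mem_map_of_mem hx)
    ⟨LinearMap.pi f y, by rw [hy, map_smul]⟩
  refine ⟨b, hb, hf _ (B.sub_mem hx (B.smul_mem _ hb)) fun i ↦ ?_⟩
  simpa [sub_eq_zero] using congrFun hxb i

end DualDetection

section HomsToInt

variable {A : Type*} [CommGroup A]

/-- The elements of `A` killed by every homomorphism `A → ℤ` are torsion. For the unit group of a
finitely generated field these homomorphisms play the role of the discrete valuations. -/
def HomsToIntDetectTorsion (A : Type*) [CommGroup A] : Prop :=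
  ∀ x : A, (∀ φ : A →* Multiplicative ℤ, φ x = 1) → IsOfFinOrder x

theorem HomsToIntDetectTorsion.pi {ι : Type*} [Finite ι] (hA : HomsToIntDetectTorsion A) :
    HomsToIntDetectTorsion (ι → A) := fun x hx ↦
  IsOfFinOrder.pi fun i ↦ hA (x i) fun φ ↦ hx (φ.comp (Pi.evalMonoidHom _ i))

theorem coprime_orderOf_of_pow_eq_one {q : ℕ} (hq : ∀ x : A, x ^ q = 1 → x = 1) {x : A}
    (hx : IsOfFinOrder x) : q.Coprime (orderOf x) := by
  obtain ⟨m, hm⟩ := Nat.gcd_dvd_left q (orderOf x)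
  obtain ⟨o, ho⟩ := Nat.gcd_dvd_right q (orderOf x)
  have hxo : x ^ o = 1 := hq _ <| by
    rw [← pow_mul, hm, mul_left_comm, ← mul_assoc, ← ho, pow_mul, pow_orderOf_eq_one, one_pow]
  have ho_pos : 0 < o := Nat.pos_of_ne_zero fun h ↦ hx.orderOf_pos.ne' (by rw [ho, h, mul_zero])
  have hle : q.gcd (orderOf x) * o ≤ 1 * o :=
    (ho ▸ Nat.le_of_dvd ho_pos (orderOf_dvd_of_pow_eq_one hxo)).trans_eq (one_mul o).symm
  exact le_antisymm (Nat.le_of_mul_le_mul_right hle ho_pos)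
    (Nat.gcd_pos_of_pos_right _ hx.orderOf_pos)

theorem finite_setOf_isOfFinOrder [Group.FG A] : {x : A | IsOfFinOrder x}.Finite := by
  have : Module.Finite ℤ (Additive A) := Module.Finite.iff_addGroup_fg.2 inferInstance
  have : Finite (Submodule.torsion ℤ (Additive A)) :=
    Module.finite_of_fg_torsion _ Submodule.torsion_isTorsion
  refine (Set.finite_range fun x : Submodule.torsion ℤ (Additive A) ↦ x.1.toMul).subset ?_
  intro x hx
  obtain ⟨n, hn, hxn⟩ := isOfFinOrder_iff_pow_eq_one.1 hx
  exact ⟨⟨.ofMul x, ⟨n, mem_nonZeroDivisors_of_ne_zero (by exact_mod_cast hn.ne')⟩,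
    (natCast_zsmul (Additive.ofMul x) n).trans hxn⟩, rfl⟩

/-- Modulo torsion, which is uniquely `q`-divisible, this is the Artin–Rees lemma for the ideal
`qℤ` and a subgroup of some `ℤᵐ`. -/
theorem HomsToIntDetectTorsion.exists_pow_eq_of_mem (hA : HomsToIntDetectTorsion A) {q : ℕ}
    (hq : ∀ x : A, x ^ q = 1 → x = 1) {B : Subgroup A} (hB : B.FG) :
    ∃ c, ∀ n, ∀ x ∈ B, (∃ y, y ^ q ^ (n + c) = x) → ∃ b ∈ B, b ^ q ^ n = x := by
  have hB' : (AddSubgroup.toIntSubmodule B.toAddSubgroup).FG := by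
    simpa [Submodule.fg_iff_addSubgroup_fg] using (Subgroup.fg_iff_add_fg B).1 hB
  obtain ⟨c, hc⟩ := exists_pow_smul_mem_modulo_dual (q : ℤ) hB'
  refine ⟨c, fun n x hx ⟨y, hy⟩ ↦ ?_⟩
  obtain ⟨b, hb, hφ⟩ := hc n (.ofMul x) hx ⟨.ofMul y, by rw [← hy]; norm_cast⟩
  obtain ⟨b, rfl⟩ := Additive.ofMul.surjective b
  let t := x / b ^ q ^ n
  have ht : IsOfFinOrder t := hA t fun φ ↦ by
    have := hφ φ.toAdditiveLeft.toIntLinearMap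
    norm_cast at this
  obtain ⟨m, hm⟩ := exists_pow_eq_self_of_coprime
    ((coprime_orderOf_of_pow_eq_one hq ht).pow_left n)
  have htB : t ∈ B := B.div_mem hx (B.pow_mem hb _)
  refine ⟨b * t ^ m, B.mul_mem hb (B.pow_mem htB m), ?_⟩
  rw [mul_pow, pow_right_comm, hm, mul_div_cancel]

theorem map_eq_one_of_forall_exists_pow_eq {Q : ℕ} (hQ : 1 < Q) {x : A}
    (hx : ∀ n, ∃ y, y ^ Q ^ n = x) (φ : A →* Multiplicative ℤ) : φ x = 1 := by
  have hdvd : ∀ n, ((Q ^ n : ℕ) : ℤ) ∣ (φ x).toAdd := fun n ↦ by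
    obtain ⟨y, rfl⟩ := hx n
    exact ⟨(φ y).toAdd, by rw [map_pow, toAdd_pow, nsmul_eq_mul]⟩
  refine Multiplicative.toAdd.injective (Int.eq_zero_of_abs_lt_dvd (hdvd (φ x).toAdd.natAbs) ?_)
  rw [Int.abs_eq_natAbs]
  exact_mod_cast Nat.lt_pow_self hQ

variable {R : Subgroup A} {θ : A}

theorem HomsToIntDetectTorsion.finite_setOf_forall_exists_pow_eq (hA : HomsToIntDetectTorsion A)
    (hR : R.FG) {Q : ℕ} (hQ : 1 < Q) :
    {x | x / θ ∈ R ∧ ∀ n, ∃ y, y ^ Q ^ n = x}.Finite := by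
  obtain h | ⟨x₀, hx₀, hx₀Q⟩ := Set.eq_empty_or_nonempty {x | x / θ ∈ R ∧ ∀ n, ∃ y, y ^ Q ^ n = x}
  · exact h ▸ Set.finite_empty
  have : Group.FG R := (Group.fg_iff_subgroup_fg R).2 hR
  refine (Set.Finite.image (fun t : R ↦ x₀ * t) finite_setOf_isOfFinOrder).subset ?_
  rintro x ⟨hx, hxQ⟩
  have hxR : x / x₀ ∈ R := by simpa using R.div_mem hx hx₀
  refine ⟨⟨x / x₀, hxR⟩, Submonoid.isOfFinOrder_coe.1 (hA _ fun φ ↦ ?_), mul_div_cancel _ _⟩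
  rw [map_div, map_eq_one_of_forall_exists_pow_eq hQ hxQ,
    map_eq_one_of_forall_exists_pow_eq hQ hx₀Q, div_one]

theorem exists_pow_pow_eq_self_of_zpow_pow_eq {q : ℕ} (hq : 1 < q) {x : A} {z : ℤ}
    (hx : (x ^ z) ^ q = x) : ∃ e, e ≠ 0 ∧ x ^ q ^ e = x := by
  have hx' : x ^ (z * q - 1) = 1 := by rw [zpow_sub_one, zpow_mul, zpow_natCast, hx, mul_inv_cancel]
  have hne : z * q - 1 ≠ 0 := fun h ↦ by
    have := Int.le_of_dvd one_pos (Dvd.intro_left z (sub_eq_zero.1 h))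
    omega
  have hfin : IsOfFinOrder x := isOfFinOrder_iff_zpow_eq_one.2 ⟨_, hne, hx'⟩
  have hcop : q.Coprime (orderOf x) := Nat.isCoprime_iff_coprime.1 <|
    IsCoprime.of_isCoprime_of_dvd_right ⟨z, -1, by ring⟩ (orderOf_dvd_iff_zpow_eq_one.2 hx')
  refine ⟨(orderOf x).totient, (Nat.totient_pos.2 hfin.orderOf_pos).ne', ?_⟩
  simpa using pow_eq_pow_iff_modEq.2 (Nat.ModEq.pow_totient hcop)

theorem exists_pow_pow_div_self_mem {q : ℕ} (hq : 1 < q) {r b : A} (hr : r ∈ R)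
    (hb : b ∈ R ⊔ Subgroup.zpowers θ) (h : θ * r = b ^ q) : ∃ e, e ≠ 0 ∧ θ ^ q ^ e / θ ∈ R := by
  obtain ⟨s, hs, _, ⟨z, rfl⟩, rfl⟩ := Subgroup.mem_sup.1 hb
  have hθ : ((θ : A ⧸ R) ^ z) ^ q = θ := by
    have := congrArg (QuotientGroup.mk (s := R)) h
    simpa [(QuotientGroup.eq_one_iff _).2 hr, (QuotientGroup.eq_one_iff _).2 hs] using this.symm
  obtain ⟨e, he, hθe⟩ := exists_pow_pow_eq_self_of_zpow_pow_eq hq hθ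
  exact ⟨e, he, (QuotientGroup.eq_iff_div_mem).1 hθe⟩

theorem pow_pow_div_self_mem {Q : ℕ} (hθ : θ ^ Q / θ ∈ R) (n : ℕ) : θ ^ Q ^ n / θ ∈ R := by
  rw [← QuotientGroup.eq_iff_div_mem, QuotientGroup.mk_pow] at *
  exact Nat.rec (pow_one _) (fun n ih ↦ by rw [pow_succ, pow_mul, ih, hθ]) n

/-- On the coset `θR` an element with a root of high order has its `Q`-th root in the same
coset: dividing by a power of `θ` moves the element into `R`. -/
theorem HomsToIntDetectTorsion.exists_pow_eq_of_div_mem (hA : HomsToIntDetectTorsion A) {Q : ℕ}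
    (hQ : ∀ x : A, x ^ Q = 1 → x = 1) (hR : R.FG) (hθ : θ ^ Q / θ ∈ R) :
    ∃ M, ∀ x, x / θ ∈ R → (∃ y, y ^ Q ^ M = x) → ∃ x', x' / θ ∈ R ∧ x' ^ Q = x := by
  obtain ⟨c, hc⟩ := hA.exists_pow_eq_of_mem hQ hR
  refine ⟨1 + c, fun x hx ⟨y, hy⟩ ↦ ?_⟩
  obtain ⟨b, hb, hbx⟩ := hc 1 (x / θ ^ Q ^ (1 + c))
    (by simpa using R.div_mem hx (pow_pow_div_self_mem hθ (1 + c))) ⟨y / θ, by rw [div_pow, hy]⟩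
  refine ⟨b * θ ^ Q ^ c, ?_, ?_⟩
  · rw [mul_div_assoc]
    exact R.mul_mem hb (pow_pow_div_self_mem hθ c)
  · rw [pow_one] at hbx
    rw [mul_pow, hbx, ← pow_mul, ← pow_succ, add_comm c, div_mul_cancel]

end HomsToInt

section FinitelyGeneratedFields

open IntermediateField

theorem exists_unitsHom_map_ne_one_of_finite {E L : Type*} [Field E] [Field L] [Algebra E L]
    [FiniteDimensional E L] {z : Eˣ} {φ : Eˣ →* Multiplicative ℤ} (hφ : φ z ≠ 1) :
    ∃ ψ : Lˣ →* Multiplicative ℤ, ψ (Units.map (algebraMap E L) z) ≠ 1 := by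
  refine ⟨φ.comp (Units.map (Algebra.norm E)), ?_⟩
  have hz : Units.map (Algebra.norm E) (Units.map (algebraMap E L : E →* L) z) =
      z ^ Module.finrank E L := Units.ext (Algebra.norm_algebraMap _)
  rw [MonoidHom.comp_apply, hz, map_pow]
  exact fun h ↦ hφ ((pow_eq_one_iff_left Module.finrank_pos.ne').1 h)

variable {k L : Type*} [Field k] [Field L] [Algebra k L]

theorem exists_unitsHom_ne_one_of_coe_eq_transcendental {z : L} (hz : Transcendental k z)
    {u : k⟮z⟯ˣ} (hu : (u : k⟮z⟯) = z) : ∃ φ : k⟮z⟯ˣ →* Multiplicative ℤ, φ u ≠ 1 := by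
  classical
  let e := RatFunc.algEquivOfTranscendental z hz
  let φ := Units.map (RatFunc.inftyValuation k).toMonoidWithZeroHom.toMonoidHom
  refine ⟨WithZero.unitsWithZeroEquiv.toMonoidHom.comp
    (φ.comp (Units.map e.symm.toMonoidHom)), fun h ↦ ?_⟩
  have hX : e.symm u = RatFunc.X := by
    rw [show (u : k⟮z⟯) = AdjoinSimple.gen k z from Subtype.ext hu]
    exact RatFunc.algEquivOfTranscendental_symm_gen ..
  have hone : RatFunc.inftyValuation k (e.symm u) = 1 :=
    congrArg Units.val ((MulEquiv.map_eq_one_iff WithZero.unitsWithZeroEquiv).1 h)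
  rw [hX, RatFunc.inftyValuation.X] at hone
  exact absurd (WithZero.exp_injective (hone.trans WithZero.exp_zero.symm)) one_ne_zero

theorem exists_transcendental_finiteDimensional_adjoin_simple [Algebra.EssFiniteType k L] {z : L}
    (hz : Transcendental k z) :
    ∃ M : IntermediateField k L, Transcendental M z ∧ FiniteDimensional M⟮z⟯ L := by
  obtain ⟨t, hzt, ht⟩ := exists_isTranscendenceBasis_superset
    ((algebraicIndependent_unique_type_iff (x := fun x : ({z} : Set L) ↦ x.1)).2 hz)
  replace hzt : z ∈ t := hzt rfl
  let M := adjoin k (t \ {z})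
  have hzM : Transcendental M z := by
    have := ht.1.transcendental_adjoin (s := {(⟨z, hzt⟩ : t)}ᶜ) (i := ⟨z, hzt⟩) (by simp)
    have himage : Subtype.val '' ({⟨z, hzt⟩}ᶜ : Set t) = t \ {z} := by ext; simp
    rw [himage] at this
    exact transcendental_adjoin_iff.2 this
  have hle : adjoin k t ≤ M⟮z⟯.restrictScalars k := adjoin_le_iff.2 fun x hx ↦ by
    obtain rfl | hxz := eq_or_ne x z
    · exact mem_adjoin_simple_self M _
    · exact M⟮z⟯.algebraMap_mem ⟨x, subset_adjoin k _ ⟨hx, hxz⟩⟩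
  have : Algebra.IsAlgebraic M⟮z⟯ L := by
    have := ht.isAlgebraic_field
    rw [Subtype.range_coe] at this
    let : Algebra (adjoin k t) M⟮z⟯ := (inclusion hle).toRingHom.toAlgebra
    have : IsScalarTower (adjoin k t) M⟮z⟯ L := .of_algebraMap_eq (congrFun rfl)
    exact Algebra.IsAlgebraic.tower_top (K := adjoin k t) M⟮z⟯
  have : IsScalarTower k M⟮z⟯ L := .of_algebraMap_eq fun _ ↦ rfl
  have : Algebra.EssFiniteType M⟮z⟯ L := Algebra.EssFiniteType.of_comp k _ L
  exact ⟨M, hzM, Algebra.finite_of_essFiniteType_of_isAlgebraic⟩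

theorem isOfFinOrder_of_isAlgebraic_s11 [Finite k] {z : Lˣ} (hz : IsAlgebraic k (z : L)) :
    IsOfFinOrder z := by
  have : FiniteDimensional k k⟮(z : L)⟯ := adjoin.finiteDimensional hz.isIntegral
  have : Finite k⟮(z : L)⟯ := Module.finite_of_finite k
  let z' : k⟮(z : L)⟯ˣ := Units.mk0 (AdjoinSimple.gen k (z : L)) fun h ↦
    z.ne_zero (congrArg Subtype.val h)
  have : Units.map k⟮(z : L)⟯.val.toMonoidHom z' = z := Units.ext rfl
  exact this ▸ MonoidHom.isOfFinOrder _ (isOfFinOrder_of_finite z')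

theorem homsToIntDetectTorsion_units_of_essFiniteType (k L : Type*) [Field k] [Finite k] [Field L]
    [Algebra k L] [Algebra.EssFiniteType k L] : HomsToIntDetectTorsion Lˣ := by
  intro z hz
  by_contra hfin
  obtain ⟨M, hM, _⟩ := exists_transcendental_finiteDimensional_adjoin_simple (k := k) (z := (z : L))
    fun h ↦ hfin (isOfFinOrder_of_isAlgebraic_s11 h)
  let u : M⟮(z : L)⟯ˣ := Units.mk0 (AdjoinSimple.gen M (z : L)) fun h ↦
    z.ne_zero (congrArg Subtype.val h)
  have hu : Units.map (algebraMap M⟮(z : L)⟯ L : M⟮(z : L)⟯ →* L) u = z := Units.ext rfl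
  obtain ⟨φ, hφ⟩ := exists_unitsHom_ne_one_of_coe_eq_transcendental (u := u) hM rfl
  obtain ⟨ψ, hψ⟩ := exists_unitsHom_map_ne_one_of_finite (L := L) hφ
  exact hψ ((congrArg ψ hu).trans (hz ψ))

end FinitelyGeneratedFields
section Pivots

variable {F ι : Type*} [Field F]

/-- The coordinates in `P` form a system of linear coordinates on the subspace `V` of `Fⁱ`. -/
def IsPivotSet (P : Finset ι) (V : Submodule F (ι → F)) : Prop :=
  Module.finrank F V = P.card ∧ ∀ x ∈ V, (∀ i ∈ P, x i = 0) → x = 0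

theorem finrank_le_card_of_forall_eq_zero {P : Finset ι} {V : Submodule F (ι → F)}
    (hP : ∀ x ∈ V, (∀ i ∈ P, x i = 0) → x = 0) : Module.finrank F V ≤ P.card := by
  have hinj : Function.Injective ((LinearMap.funLeft F F ((↑) : P → ι)).comp V.subtype) :=
    (injective_iff_map_eq_zero _).2 fun x hx ↦
      Subtype.ext (hP x x.2 fun i hi ↦ congrFun hx ⟨i, hi⟩)
  simpa using LinearMap.finrank_le_finrank_of_injective hinj

variable [Finite ι]

theorem exists_isPivotSet (V : Submodule F (ι → F)) : ∃ P, IsPivotSet P V := by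
  classical
  let c : ι → Module.Dual F V := fun i ↦ (LinearMap.proj i).comp V.subtype
  obtain ⟨κ, a, ha, hspan, hind⟩ := exists_linearIndependent' F c
  cases nonempty_fintype ι
  have := Fintype.ofInjective a ha
  have hP : ∀ x ∈ V, (∀ i ∈ Finset.univ.map ⟨a, ha⟩, x i = 0) → x = 0 := fun x hx hx0 ↦ by
    have hle : Submodule.span F (Set.range c) ≤ (Module.Dual.eval F V ⟨x, hx⟩).ker := by
      rw [← hspan, Submodule.span_le, Set.range_subset_iff]
      exact fun k ↦ hx0 (a k) (Finset.mem_map_of_mem _ (Finset.mem_univ k))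
    exact funext fun i ↦ hle (Submodule.subset_span ⟨i, rfl⟩)
  refine ⟨_, (finrank_le_card_of_forall_eq_zero hP).antisymm ?_, hP⟩
  rw [Finset.card_map, Finset.card_univ, ← Subspace.dual_finrank_eq]
  exact hind.fintype_card_le_finrank

theorem IsPivotSet.exists_reducedBasis [DecidableEq ι] {P : Finset ι} {V : Submodule F (ι → F)}
    (hP : IsPivotSet P V) : ∃ v : ι → ι → F,
      (∀ i ∈ P, v i ∈ V ∧ ∀ j ∈ P, v i j = (Pi.single i 1 : ι → F) j) ∧
      ∀ x, x ∈ V ↔ x = ∑ i ∈ P, x i • v i := by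
  let res : V →ₗ[F] (P → F) := (LinearMap.funLeft F F (↑)).comp V.subtype
  have hinj : Function.Injective res :=
    (injective_iff_map_eq_zero _).2 fun x hx ↦
      Subtype.ext (hP.2 x x.2 fun i hi ↦ congrFun hx ⟨i, hi⟩)
  have hsurj := (LinearMap.injective_iff_surjective_of_finrank_eq_finrank
    (by rw [hP.1, Module.finrank_fintype_fun_eq_card, Fintype.card_coe])).1 hinj
  choose v hv using fun i : ι ↦ hsurj fun j ↦ (Pi.single i 1 : ι → F) j
  have hvP : ∀ i, ∀ j ∈ P, (v i).1 j = (Pi.single i 1 : ι → F) j := fun i j hj ↦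
    congrFun (hv i) ⟨j, hj⟩
  refine ⟨fun i ↦ v i, fun i _ ↦ ⟨(v i).2, hvP i⟩, fun x ↦ ⟨fun hx ↦ ?_, fun hx ↦ ?_⟩⟩
  · rw [← sub_eq_zero]
    refine hP.2 _ (V.sub_mem hx (V.sum_mem fun i _ ↦ V.smul_mem _ (v i).2)) fun j hj ↦ ?_
    simp [Finset.sum_apply, hvP _ j hj, Pi.single_apply, hj]
  · exact hx ▸ V.sum_mem fun i _ ↦ V.smul_mem _ (v i).2

theorem exists_submodule_forall_map_mem_iff {E : Type*} [Field E] (f : F →+* E)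
    (V : Submodule F (ι → F)) :
    ∃ U : Submodule E (ι → E), ∀ x : ι → F, (fun i ↦ f (x i)) ∈ U ↔ x ∈ V := by
  classical
  obtain ⟨P, hP⟩ := exists_isPivotSet V
  obtain ⟨v, -, hv⟩ := hP.exists_reducedBasis
  refine ⟨LinearMap.eqLocus LinearMap.id
    (∑ i ∈ P, (LinearMap.proj i).smulRight fun j ↦ f (v i j)), fun x ↦ ?_⟩
  rw [hv, LinearMap.mem_eqLocus]
  simp only [LinearMap.id_apply, LinearMap.sum_apply, funext_iff, Finset.sum_apply,
    LinearMap.smulRight_apply, LinearMap.proj_apply, Pi.smul_apply, smul_eq_mul]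
  simp only [← map_mul, ← map_sum, f.injective.eq_iff]

end Pivots

section FrobeniusTwist

variable {F ι : Type*} [Field F] (p : ℕ) [ExpChar F p]

/-- The map `x ↦ t * x ^ (p ^ n)` on `Fⁱ`, semilinear for the `n`-th power of Frobenius. -/
def twistedFrobenius (n : ℕ) (t : ι → F) : (ι → F) →ₛₗ[iterateFrobenius F p n] (ι → F) where
  toFun x := t * x ^ p ^ n
  map_add' x y := funext fun i ↦ by simp [add_pow_expChar_pow, mul_add]
  map_smul' a x := funext fun i ↦ by simp [iterateFrobenius_def, mul_pow, mul_left_comm]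

theorem twistedFrobenius_apply (n : ℕ) (t x : ι → F) :
    twistedFrobenius p n t x = t * x ^ p ^ n := rfl

theorem eq_zero_of_twistedFrobenius_mem {n : ℕ} {t : ι → F} (ht : ∀ i, t i ≠ 0)
    {V : Submodule F (ι → F)} {P : Finset ι} (hP : IsPivotSet P V) :
    ∀ x ∈ V.comap (twistedFrobenius p n t), (∀ i ∈ P, x i = 0) → x = 0 := fun x hx hxP ↦ by
  have h0 : twistedFrobenius p n t x = 0 := hP.2 _ hx fun i hi ↦ by
    simp [twistedFrobenius_apply, hxP i hi, (expChar_pos F p).ne']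
  funext i
  simpa [twistedFrobenius_apply, ht i, (expChar_pos F p).ne'] using congrFun h0 i

variable [Finite ι]

theorem finrank_comap_twistedFrobenius_le (n : ℕ) {t : ι → F} (ht : ∀ i, t i ≠ 0)
    (V : Submodule F (ι → F)) :
    Module.finrank F (V.comap (twistedFrobenius p n t)) ≤ Module.finrank F V := by
  obtain ⟨P, hP⟩ := exists_isPivotSet V
  exact hP.1 ▸ finrank_le_card_of_forall_eq_zero (eq_zero_of_twistedFrobenius_mem p ht hP)

theorem exists_mul_eq_mul_pow_of_finrank_comap_eq {n : ℕ} {t : ι → F} (ht : ∀ i, t i ≠ 0)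
    {V : Submodule F (ι → F)} {P : Finset ι} (hP : IsPivotSet P V) {v : ι → ι → F}
    (hv : ∀ x ∈ V, x = ∑ i ∈ P, x i • v i)
    (h : Module.finrank F (V.comap (twistedFrobenius p n t)) = Module.finrank F V) :
    ∃ w : ι → ι → F, ∀ i ∈ P, ∀ l, t i * v i l = t l * w i l ^ p ^ n := by
  classical
  obtain ⟨w, hw, -⟩ := IsPivotSet.exists_reducedBasis
    (show IsPivotSet P (V.comap (twistedFrobenius p n t)) from
      ⟨h.trans hP.1, eq_zero_of_twistedFrobenius_mem p ht hP⟩)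
  refine ⟨w, fun i hi l ↦ ?_⟩
  have := congrFun (hv _ (hw i hi).1) l
  simp only [twistedFrobenius_apply, Finset.sum_apply, Pi.mul_apply, Pi.pow_apply, Pi.smul_apply,
    smul_eq_mul] at this
  rw [this, Finset.sum_eq_single i]
  · simp [(hw i hi).2 i hi]
  · intro j hj hji
    simp [(hw i hi).2 j hj, hji, (expChar_pos F p).ne']
  · exact fun h ↦ absurd hi h

/-- The span of `x ^ Q ^ s` for `s ≥ n` pulls back along Frobenius to a space containing the span
for `s ≥ n - 1`, and such a pullback does not increase the dimension. -/
theorem mem_span_setOf_pow_pow (m n : ℕ) (x : ι → F) :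
    x ∈ Submodule.span F {y | ∃ s ≥ n, y = x ^ (p ^ m) ^ s} := by
  induction n with
  | zero => exact Submodule.subset_span ⟨0, le_rfl, by simp⟩
  | succ n ih =>
    let W (n : ℕ) : Submodule F (ι → F) := .span F {y | ∃ s ≥ n, y = x ^ (p ^ m) ^ s}
    have hle : W (n + 1) ≤ W n :=
      Submodule.span_mono fun _ ⟨s, hs, hy⟩ ↦ ⟨s, n.le_succ.trans hs, hy⟩
    have hcomap : W n ≤ (W (n + 1)).comap (twistedFrobenius p m 1) :=
      Submodule.span_le.2 fun _ ⟨s, hs, hy⟩ ↦ Submodule.subset_span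
        ⟨s + 1, Nat.succ_le_succ hs, by
          rw [hy, twistedFrobenius_apply, one_mul, ← pow_mul, pow_succ]⟩
    have hrank : Module.finrank F (W n) ≤ Module.finrank F (W (n + 1)) :=
      (Submodule.finrank_mono hcomap).trans
        (finrank_comap_twistedFrobenius_le p m (fun _ ↦ one_ne_zero) _)
    exact (Submodule.eq_of_le_of_finrank_le hle hrank).ge ih

theorem mul_mem_of_forall_ge_mul_pow_mem (U : Submodule F (ι → F)) {m n : ℕ} {z x : ι → F}
    (h : ∀ s ≥ n, z * x ^ (p ^ m) ^ s ∈ U) : z * x ∈ U := by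
  have hle : Submodule.span F {y | ∃ s ≥ n, y = x ^ (p ^ m) ^ s} ≤
      U.comap (LinearMap.mulLeft F z) :=
    Submodule.span_le.2 fun y ⟨s, hs, hy⟩ ↦ hy ▸ h s hs
  exact hle (mem_span_setOf_pow_pow p m n x)

end FrobeniusTwist

section FSets

variable {T : Type*} [CommGroup T]

/-- The set `α₀ · {∏ᵢ αᵢ ^ (Q ^ nᵢ) : n ∈ ℕʳ} · B`: the translate by `B` of a groupless `F`-set,
where `F ^ k` is the power map `x ↦ x ^ Q`. -/
def fSet (Q : ℕ) {r : ℕ} (α₀ : T) (α : Fin r → T) (B : Subgroup T) : Set T :=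
  {g | ∃ n : Fin r → ℕ, ∃ b ∈ B, g = α₀ * (∏ i, α i ^ Q ^ n i) * b}

/-- `C` is an `F`-set in `Γ` for the endomorphism `x ↦ x ^ Q` of the ambient group. -/
def IsFSet (Γ : Subgroup T) (Q : ℕ) (C : Set T) : Prop :=
  C ⊆ Γ ∧ ∃ (r : ℕ) (α₀ : T) (α : Fin r → T), ∃ B ≤ Γ, C = fSet Q α₀ α B

/-- `S` is a finite union of `F`-sets in `Γ` for powers of the endomorphism `x ↦ x ^ q`; different
`F`-sets may use different powers. -/
def IsFUnion (Γ : Subgroup T) (q : ℕ) (S : Set T) : Prop :=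
  ∃ 𝒞 : Set (Set T), 𝒞.Finite ∧ (∀ C ∈ 𝒞, ∃ k ≠ 0, IsFSet Γ (q ^ k) C) ∧ ⋃₀ 𝒞 = S

variable {Γ : Subgroup T} {q Q : ℕ}

theorem fSet_subset_iff {r : ℕ} {α₀ : T} {α : Fin r → T} {B : Subgroup T} (hB : B ≤ Γ) :
    fSet Q α₀ α B ⊆ Γ ↔ α₀ * ∏ i, α i ∈ Γ ∧ ∀ i, α i ^ Q / α i ∈ Γ := by
  have hdiv (n : Fin r → ℕ) :
      (α₀ * ∏ i, α i ^ Q ^ n i) / (α₀ * ∏ i, α i) = ∏ i, α i ^ Q ^ n i / α i := by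
    rw [mul_div_mul_left_eq_div, Finset.prod_div_distrib]
  constructor
  · intro h
    have hmem (n : Fin r → ℕ) : α₀ * ∏ i, α i ^ Q ^ n i ∈ Γ := h ⟨n, 1, B.one_mem, (mul_one _).symm⟩
    have h0 : α₀ * ∏ i, α i ∈ Γ := by simpa using hmem 0
    refine ⟨h0, fun i ↦ ?_⟩
    have hi := Γ.div_mem (hmem (Pi.single i 1)) h0
    rw [hdiv, Finset.prod_eq_single i (fun l _ hl ↦ by simp [hl]) (by simp)] at hi
    simpa using hi
  · rintro ⟨h0, hα⟩ _ ⟨n, b, hb, rfl⟩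
    refine Γ.mul_mem ?_ (hB hb)
    rw [← div_mul_cancel (α₀ * ∏ i, α i ^ Q ^ n i) (α₀ * ∏ i, α i), hdiv]
    exact Γ.mul_mem (Γ.prod_mem fun i _ ↦ pow_pow_div_self_mem (hα i) (n i)) h0

theorem IsFSet.isFUnion {C : Set T} {k : ℕ} (hk : k ≠ 0) (hC : IsFSet Γ (q ^ k) C) :
    IsFUnion Γ q C :=
  ⟨{C}, Set.finite_singleton C, fun _ h ↦ ⟨k, hk, h ▸ hC⟩, Set.sUnion_singleton C⟩

theorem IsFUnion.subset {S : Set T} (hS : IsFUnion Γ q S) : S ⊆ Γ := by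
  obtain ⟨𝒞, -, hC, rfl⟩ := hS
  refine Set.sUnion_subset fun C hCm ↦ ?_
  obtain ⟨_, -, h⟩ := hC C hCm
  exact h.1

theorem IsFUnion.biUnion {ι : Type*} {s : Set ι} (hs : s.Finite) {f : ι → Set T}
    (hf : ∀ i ∈ s, IsFUnion Γ q (f i)) : IsFUnion Γ q (⋃ i ∈ s, f i) := by
  choose! 𝒞 hfin hC hU using hf
  refine ⟨⋃ i ∈ s, 𝒞 i, hs.biUnion hfin, fun C hCs ↦ ?_, ?_⟩
  · obtain ⟨i, hi, hCi⟩ := Set.mem_iUnion₂.1 hCs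
    exact hC i hi C hCi
  · simp_rw [Set.sUnion_iUnion]
    exact Set.iUnion₂_congr hU

theorem IsFUnion.iUnion {ι : Type*} [Finite ι] {f : ι → Set T} (hf : ∀ i, IsFUnion Γ q (f i)) :
    IsFUnion Γ q (⋃ i, f i) := by
  simpa using IsFUnion.biUnion Set.finite_univ fun i _ ↦ hf i

theorem IsFUnion.union {S S' : Set T} (hS : IsFUnion Γ q S) (hS' : IsFUnion Γ q S') :
    IsFUnion Γ q (S ∪ S') := by
  rw [Set.union_eq_iUnion]
  exact IsFUnion.iUnion (Bool.rec hS' hS)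

theorem IsFSet.image_mul_pow {C : Set T} (hC : IsFSet Γ Q C) {g : T} (hg : g ∈ Γ) (m : ℕ) :
    IsFSet Γ Q ((fun x ↦ g * x ^ m) '' C) := by
  obtain ⟨hCΓ, r, α₀, α, B, hB, rfl⟩ := hC
  refine ⟨?_, r, g * α₀ ^ m, fun i ↦ α i ^ m, B.map (powMonoidHom m), ?_, ?_⟩
  · rintro _ ⟨x, hx, rfl⟩
    exact Γ.mul_mem hg (Γ.pow_mem (hCΓ hx) m)
  · rintro _ ⟨b, hb, rfl⟩
    exact Γ.pow_mem (hB hb) m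
  · have key : ∀ (n : Fin r → ℕ) b, g * (α₀ * (∏ i, α i ^ Q ^ n i) * b) ^ m =
        g * α₀ ^ m * (∏ i, (α i ^ m) ^ Q ^ n i) * b ^ m := fun n b ↦ by
      simp only [mul_pow, ← Finset.prod_pow, pow_right_comm _ m, mul_assoc]
    ext x
    constructor
    · rintro ⟨_, ⟨n, b, hb, rfl⟩, rfl⟩
      exact ⟨n, b ^ m, ⟨b, hb, rfl⟩, key n b⟩
    · rintro ⟨n, _, ⟨b, hb, rfl⟩, rfl⟩
      exact ⟨_, ⟨n, b, hb, rfl⟩, key n b⟩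

theorem IsFUnion.image_mul_pow {S : Set T} (hS : IsFUnion Γ q S) {g : T} (hg : g ∈ Γ) (m : ℕ) :
    IsFUnion Γ q ((fun x ↦ g * x ^ m) '' S) := by
  obtain ⟨𝒞, h𝒞, hC, rfl⟩ := hS
  rw [Set.sUnion_eq_biUnion, Set.image_iUnion₂]
  refine IsFUnion.biUnion h𝒞 fun C hCm ↦ ?_
  obtain ⟨k, hk, h⟩ := hC C hCm
  exact (h.image_mul_pow hg m).isFUnion hk

theorem isFUnion_leftCoset {g : T} (hg : g ∈ Γ) {B : Subgroup T} (hB : B ≤ Γ) :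
    IsFUnion Γ q {x | ∃ b ∈ B, x = g * b} := by
  refine IsFSet.isFUnion one_ne_zero
    ⟨?_, 0, g, Fin.elim0, B, hB, by simp [fSet]⟩
  rintro _ ⟨b, hb, rfl⟩
  exact Γ.mul_mem hg (hB hb)

/-- Writing `nᵢ = e mᵢ + sᵢ` with `sᵢ < e` splits an `F`-set into `eʳ` pieces. -/
theorem IsFSet.exists_finite_refinement {C : Set T} (hC : IsFSet Γ Q C) {e : ℕ} (he : e ≠ 0) :
    ∃ 𝒞 : Set (Set T), 𝒞.Finite ∧ (∀ D ∈ 𝒞, IsFSet Γ (Q ^ e) D) ∧ ⋃₀ 𝒞 = C := by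
  obtain ⟨hCΓ, r, α₀, α, B, hB, rfl⟩ := hC
  have : NeZero e := ⟨he⟩
  let D (s : Fin r → Fin e) : Set T := fSet (Q ^ e) α₀ (fun i ↦ α i ^ Q ^ (s i : ℕ)) B
  have hpow : ∀ (x : T) (s m : ℕ), (x ^ Q ^ s) ^ (Q ^ e) ^ m = x ^ Q ^ (e * m + s) := fun x s m ↦ by
    rw [← pow_mul, ← pow_mul, ← pow_add, add_comm]
  have hD : ⋃₀ Set.range D = fSet Q α₀ α B := by
    ext x
    simp only [Set.sUnion_range, Set.mem_iUnion]
    constructor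
    · rintro ⟨s, n, b, hb, rfl⟩
      exact ⟨fun i ↦ e * n i + s i, b, hb, by simp only [hpow]⟩
    · rintro ⟨n, b, hb, rfl⟩
      exact ⟨fun i ↦ Fin.ofNat e (n i), fun i ↦ n i / e, b, hb,
        by simp only [hpow, Fin.val_ofNat, Nat.div_add_mod]⟩
  refine ⟨Set.range D, Set.finite_range D, ?_, hD⟩
  rintro _ ⟨s, rfl⟩
  exact ⟨(Set.subset_sUnion_of_mem (Set.mem_range_self s)).trans (hD.trans_subset hCΓ),
    r, _, _, B, hB, rfl⟩

theorem isFUnion_pow_iff {e : ℕ} (he : e ≠ 0) {S : Set T} :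
    IsFUnion Γ (q ^ e) S ↔ IsFUnion Γ q S := by
  constructor
  · rintro ⟨𝒞, h𝒞, hC, rfl⟩
    refine ⟨𝒞, h𝒞, fun C hCm ↦ ?_, rfl⟩
    obtain ⟨k, hk, h⟩ := hC C hCm
    exact ⟨e * k, mul_ne_zero he hk, pow_mul q e k ▸ h⟩
  · rintro ⟨𝒞, h𝒞, hC, rfl⟩
    rw [Set.sUnion_eq_biUnion]
    refine IsFUnion.biUnion h𝒞 fun C hCm ↦ ?_
    obtain ⟨k, hk, h⟩ := hC C hCm
    obtain ⟨𝒟, h𝒟, hD, rfl⟩ := h.exists_finite_refinement he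
    exact ⟨𝒟, h𝒟, fun D hDm ↦ ⟨k, hk, pow_right_comm q k e ▸ hD D hDm⟩, rfl⟩

end FSets

section Orbits

variable {T : Type*} [CommGroup T] {Γ H : Subgroup T} {Z : Set T} {Q : ℕ} {h β : T}

/-- The affine endomorphism `g ↦ h · g ^ Q`, a Frobenius map followed by a translation. -/
def affinePow (h : T) (Q : ℕ) (g : T) : T := h * g ^ Q

/-- The set `Z` is closed under de-twisting tails of Frobenius orbits: if `z · w ^ (Q ^ t) ∈ Z` for
all large `t`, then already `z · w ∈ Z`. Subvarieties of a torus have this property. -/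
def FrobeniusSaturated (Q : ℕ) (Z : Set T) : Prop :=
  ∀ (z w : T) (n : ℕ), (∀ t ≥ n, z * w ^ Q ^ t ∈ Z) → z * w ∈ Z

theorem iterate_affinePow (h : T) (Q n : ℕ) :
    (affinePow h Q)^[n] = affinePow ((affinePow h Q)^[n] 1) (Q ^ n) := by
  induction n with
  | zero => ext g; simp [affinePow]
  | succ n ih =>
    ext g
    rw [Function.iterate_succ_apply', Function.iterate_succ_apply', congrFun ih g]
    simp only [affinePow, mul_pow, mul_assoc, pow_succ, pow_mul]

theorem iterate_affinePow_mem (hh : h ∈ Γ) {g : T} (hg : g ∈ Γ) (n : ℕ) :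
    (affinePow h Q)^[n] g ∈ Γ :=
  have hψ : Set.MapsTo (affinePow h Q) Γ Γ := fun _ hx ↦ Γ.mul_mem hh (Γ.pow_mem hx Q)
  hψ.iterate n hg

theorem iterate_affinePow_eq_of_pow_eq (hβ : β ^ Q = β * h) (n : ℕ) (g : T) :
    (affinePow h Q)^[n] g = β⁻¹ * (β * g) ^ Q ^ n := by
  induction n with
  | zero => simp
  | succ n ih =>
    rw [Function.iterate_succ_apply', ih, affinePow, mul_pow, inv_pow, hβ, ← pow_mul, ← pow_succ]
    group

theorem iterate_affinePow_mul_prod (hβ : β ^ Q = β * h) {r : ℕ} (α₀ : T) (α : Fin r → T)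
    (m : Fin r → ℕ) (b : T) (n : ℕ) :
    (affinePow h Q)^[n] (α₀ * (∏ i, α i ^ Q ^ m i) * b) =
      β⁻¹ * ((β * α₀) ^ Q ^ n * ∏ i, α i ^ Q ^ (m i + n)) * b ^ Q ^ n := by
  rw [iterate_affinePow_eq_of_pow_eq hβ, ← mul_assoc, ← mul_assoc, mul_pow, mul_pow,
    ← Finset.prod_pow]
  simp only [← pow_mul, ← pow_add, mul_assoc]

theorem FrobeniusSaturated.mul_prod_mem (hZ : FrobeniusSaturated Q Z) (n : ℕ) {r : ℕ} {z : T}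
    {w : Fin r → T} (hw : ∀ t : Fin r → ℕ, (∀ i, n ≤ t i) → z * ∏ i, w i ^ Q ^ t i ∈ Z) :
    z * ∏ i, w i ∈ Z := by
  induction r generalizing z with
  | zero => simpa using hw 0 (fun i ↦ i.elim0)
  | succ r ih =>
    rw [Fin.prod_univ_succ, mul_left_comm, ← mul_comm (z * _)]
    refine hZ _ _ n fun t₀ ht₀ ↦ ?_
    rw [mul_right_comm]
    refine ih fun t ht ↦ ?_
    simpa [Fin.prod_univ_succ, mul_assoc] using hw (Fin.cons t₀ t) (Fin.cases ht₀ ht)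

/-- The orbit of `α₀ ∏ αᵢ ^ (Q ^ nᵢ) B` only contains those products whose exponents all exceed the
number of iterations; saturation supplies the others. -/
theorem FrobeniusSaturated.fSet_cons_subset (hZ : FrobeniusSaturated Q Z) (hβ : β ^ Q = β * h)
    {r : ℕ} {α₀ : T} {α : Fin r → T} {B : Subgroup T}
    (horbit : ∀ n, ∀ u ∈ fSet Q α₀ α B, ∀ y ∈ H, (affinePow h Q)^[n] u * y ∈ Z) :
    fSet Q β⁻¹ (Fin.cons (β * α₀) α : Fin (r + 1) → T) (B ⊔ H) ⊆ Z := by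
  rintro _ ⟨n, _, hby, rfl⟩
  obtain ⟨b, hb, y, hy, rfl⟩ := Subgroup.mem_sup.1 hby
  let z := β⁻¹ * (β * α₀) ^ Q ^ n 0 * y
  let w : Fin (r + 1) → T := Fin.cons b fun i ↦ α i ^ Q ^ n i.succ
  have hzw : z * ∏ i, w i ∈ Z := hZ.mul_prod_mem (n 0) fun t ht ↦ by
    have := horbit (n 0) _ ⟨fun i ↦ n i.succ + (t i.succ - n 0), b ^ Q ^ (t 0 - n 0),
      B.pow_mem hb _, rfl⟩ y hy
    simp only [iterate_affinePow_mul_prod hβ, add_assoc, Nat.sub_add_cancel (ht _), ← pow_mul,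
      ← pow_add] at this
    convert this using 1
    simp only [z, w, Fin.prod_univ_succ, Fin.cons_zero, Fin.cons_succ, ← pow_mul, ← pow_add]
    simp only [mul_assoc, mul_left_comm, mul_comm]
  convert hzw using 1
  simp only [z, w, Fin.prod_univ_succ, Fin.cons_zero, Fin.cons_succ]
  simp only [mul_assoc, mul_left_comm, mul_comm]

theorem fSet_cons_subset_subgroup (hβ : β ^ Q = β * h) (hh : h ∈ Γ) (hH : H ≤ Γ) {r : ℕ} {α₀ : T}
    {α : Fin r → T} {B : Subgroup T} (hB : B ≤ Γ) (hC : fSet Q α₀ α B ⊆ Γ) :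
    fSet Q β⁻¹ (Fin.cons (β * α₀) α : Fin (r + 1) → T) (B ⊔ H) ⊆ Γ := by
  obtain ⟨h0, hα⟩ := (fSet_subset_iff hB).1 hC
  refine (fSet_subset_iff (sup_le hB hH)).2 ⟨?_, Fin.cases ?_ fun i ↦ ?_⟩
  · simpa [Fin.prod_univ_succ, mul_assoc] using h0
  · have hprod : (∏ i, α i) ^ Q / ∏ i, α i ∈ Γ := by
      rw [← Finset.prod_pow, ← Finset.prod_div_distrib]
      exact Γ.prod_mem fun i _ ↦ hα i
    have : (β * α₀) ^ Q / (β * α₀) = h * ((α₀ * ∏ i, α i) ^ Q / (α₀ * ∏ i, α i)) /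
        ((∏ i, α i) ^ Q / ∏ i, α i) := by
      rw [mul_pow, hβ, mul_pow, mul_div_mul_comm, mul_div_mul_comm (α₀ ^ Q), ← mul_assoc,
        mul_div_cancel_right, mul_div_cancel_left]
    rw [Fin.cons_zero, this]
    exact Γ.div_mem (Γ.mul_mem hh (Γ.div_mem (Γ.pow_mem h0 Q) h0)) hprod
  · rw [Fin.cons_succ]
    exact hα i

theorem IsFSet.exists_iterate_affinePow_mem {C : Set T} (hC : IsFSet Γ Q C) (hCZ : C ⊆ Z)
    (hZ : FrobeniusSaturated Q Z) (hβ : β ^ Q = β * h) (hh : h ∈ Γ)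
    (hψ : Set.MapsTo (affinePow h Q) (Z ∩ Γ) Z) (hHΓ : H ≤ Γ)
    (hH : ∀ g ∈ Z ∩ Γ, ∀ y ∈ H, g * y ∈ Z) :
    ∃ C', IsFSet Γ Q C' ∧ C' ⊆ Z ∧ ∀ n, ∀ u ∈ C, ∀ y ∈ H, (affinePow h Q)^[n] u * y ∈ C' := by
  obtain ⟨hCΓ, r, α₀, α, B, hB, rfl⟩ := hC
  have hψΓ : Set.MapsTo (affinePow h Q) Γ Γ := fun g hg ↦ Γ.mul_mem hh (Γ.pow_mem hg Q)
  have hψS : Set.MapsTo (affinePow h Q) (Z ∩ Γ) (Z ∩ Γ) := fun g hg ↦ ⟨hψ hg, hψΓ hg.2⟩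
  refine ⟨_, ⟨fSet_cons_subset_subgroup hβ hh hHΓ hB hCΓ, r + 1, _, _, B ⊔ H, sup_le hB hHΓ, rfl⟩,
    hZ.fSet_cons_subset hβ fun n u hu y hy ↦ hH _ (hψS.iterate n ⟨hCZ hu, hCΓ hu⟩) y hy, ?_⟩
  rintro n _ ⟨m, b, hb, rfl⟩ y hy
  refine ⟨Fin.cons n fun i ↦ m i + n, b ^ Q ^ n * y, Subgroup.mul_mem_sup (B.pow_mem hb _) hy, ?_⟩
  rw [iterate_affinePow_mul_prod hβ, mul_assoc _ _ y, Fin.prod_univ_succ]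
  simp only [Fin.cons_zero, Fin.cons_succ]

/-- Writing `n = k (n / k) + n % k` reduces the orbits of `ψ` to those of `ψ ^ k`, started at the
images of `C` under `1, ψ, …, ψ ^ (k - 1)`. -/
theorem IsFSet.exists_isFUnion_iterate_affinePow_mem {C : Set T} {k : ℕ} (hk : k ≠ 0)
    (hC : IsFSet Γ (Q ^ k) C) (hCZ : C ⊆ Z) (hZ : FrobeniusSaturated (Q ^ k) Z)
    (hLang : ∀ x : T, ∃ β, β ^ Q ^ k = β * x) (hh : h ∈ Γ)
    (hψ : Set.MapsTo (affinePow h Q) (Z ∩ Γ) Z) (hHΓ : H ≤ Γ)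
    (hH : ∀ g ∈ Z ∩ Γ, ∀ y ∈ H, g * y ∈ Z) :
    ∃ N', IsFUnion Γ Q N' ∧ N' ⊆ Z ∧ ∀ n, ∀ u ∈ C, ∀ y ∈ H, (affinePow h Q)^[n] u * y ∈ N' := by
  have hψS : Set.MapsTo (affinePow h Q) (Z ∩ Γ) (Z ∩ Γ) :=
    fun g hg ↦ ⟨hψ hg, Γ.mul_mem hh (Γ.pow_mem hg.2 _)⟩
  obtain ⟨β, hβ⟩ := hLang ((affinePow h Q)^[k] 1)
  have himage (s : ℕ) : ∃ C', IsFSet Γ (Q ^ k) C' ∧ C' ⊆ Z ∧ ∀ n, ∀ u ∈ (affinePow h Q)^[s] '' C,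
      ∀ y ∈ H, ((affinePow h Q)^[k])^[n] u * y ∈ C' := by
    rw [iterate_affinePow h Q k]
    refine IsFSet.exists_iterate_affinePow_mem ?_ ?_ hZ hβ (iterate_affinePow_mem hh Γ.one_mem k)
      ?_ hHΓ hH
    · rw [iterate_affinePow]
      exact hC.image_mul_pow (iterate_affinePow_mem hh Γ.one_mem s) _
    · rintro _ ⟨u, hu, rfl⟩
      exact (hψS.iterate s ⟨hCZ hu, hC.1 hu⟩).1
    · rw [← iterate_affinePow]
      exact fun g hg ↦ (hψS.iterate k hg).1
  choose C' hC' hC'Z hmem using himage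
  refine ⟨⋃ s ∈ Set.Iio k, C' s, .biUnion (Set.finite_Iio k) fun s _ ↦ (hC' s).isFUnion hk,
    Set.iUnion₂_subset fun s _ ↦ hC'Z s, fun n u hu y hy ↦ ?_⟩
  have := hmem (n % k) (n / k) _ ⟨u, hu, rfl⟩ y hy
  rw [← Function.iterate_mul, ← Function.iterate_add_apply, Nat.div_add_mod] at this
  exact Set.mem_biUnion (Nat.mod_lt n hk.bot_lt) this

theorem IsFUnion.exists_iterate_affinePow_mem {N : Set T} (hN : IsFUnion Γ Q N) (hNZ : N ⊆ Z)
    (hZ : ∀ k, FrobeniusSaturated (Q ^ k) Z)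
    (hLang : ∀ k ≠ 0, ∀ x : T, ∃ β, β ^ Q ^ k = β * x) (hh : h ∈ Γ)
    (hψ : Set.MapsTo (affinePow h Q) (Z ∩ Γ) Z) (hHΓ : H ≤ Γ)
    (hH : ∀ g ∈ Z ∩ Γ, ∀ y ∈ H, g * y ∈ Z) :
    ∃ N', IsFUnion Γ Q N' ∧ N' ⊆ Z ∧ ∀ n, ∀ u ∈ N, ∀ y ∈ H, (affinePow h Q)^[n] u * y ∈ N' := by
  obtain ⟨𝒞, h𝒞, hC, rfl⟩ := hN
  have horbit : ∀ C ∈ 𝒞, ∃ N', IsFUnion Γ Q N' ∧ N' ⊆ Z ∧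
      ∀ n, ∀ u ∈ C, ∀ y ∈ H, (affinePow h Q)^[n] u * y ∈ N' := fun C hCm ↦ by
    obtain ⟨k, hk, h⟩ := hC C hCm
    exact h.exists_isFUnion_iterate_affinePow_mem hk ((Set.subset_sUnion_of_mem hCm).trans hNZ)
      (hZ k) (hLang k hk) hh hψ hHΓ hH
  choose! N' hN' hN'Z hmem using horbit
  refine ⟨⋃ C ∈ 𝒞, N' C, .biUnion h𝒞 hN', Set.iUnion₂_subset hN'Z, ?_⟩
  rintro n u ⟨C, hCm, hu⟩ y hy
  exact Set.mem_biUnion hCm (hmem C hCm n u hu y hy)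

end Orbits

section FrobeniusDynamics

theorem exists_pow_pow_eq_or_forall {M : Type*} [Monoid M] {Y U : Set M} {Q : ℕ}
    (h : ∀ x ∈ Y, x ∈ U ∨ ∃ y ∈ Y, y ^ Q = x) {x : M} (hx : x ∈ Y) :
    (∃ n, ∃ u ∈ U, u ^ Q ^ n = x) ∨ ∀ n, ∃ y ∈ Y, y ^ Q ^ n = x := by
  refine or_iff_not_imp_left.2 fun hU n ↦ ?_
  induction n with
  | zero => exact ⟨x, hx, pow_one x⟩
  | succ n ih =>
    obtain ⟨y, hy, hyx⟩ := ih
    obtain hyU | ⟨z, hz, rfl⟩ := h y hy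
    · exact absurd ⟨n, y, hyU, hyx⟩ hU
    · exact ⟨z, hz, by rw [pow_succ', pow_mul, hyx]⟩

theorem pow_pow_mem_iff {M : Type*} [Monoid M] {V : Set M} {q : ℕ} (hV : ∀ x, x ^ q ∈ V ↔ x ∈ V)
    (n : ℕ) {x : M} : x ^ q ^ n ∈ V ↔ x ∈ V := by
  induction n with
  | zero => rw [pow_zero, pow_one]
  | succ n ih => rw [pow_succ, pow_mul, hV, ih]

variable {T A : Type*} [CommGroup T] [CommGroup A] {Γ : Subgroup T} {ρ : Γ →* A} {θ : A}
  {V : Set A} {Z : Set T} {q Q : ℕ}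

theorem coe_iterate_affinePow (h g : Γ) (n : ℕ) :
    (((affinePow h Q)^[n] g : Γ) : T) = (affinePow (h : T) Q)^[n] g :=
  Function.Semiconj.iterate_right (f := ((↑) : Γ → T)) (fun _ ↦ rfl) n g

theorem mul_map_iterate_affinePow {h : Γ} (hθ : θ * ρ h = θ ^ Q) (g : Γ) (n : ℕ) :
    θ * ρ ((affinePow h Q)^[n] g) = (θ * ρ g) ^ Q ^ n := by
  induction n with
  | zero => simp
  | succ n ih =>
    rw [Function.iterate_succ_apply', affinePow, map_mul, map_pow, ← mul_assoc, hθ, ← mul_pow, ih,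
      ← pow_mul, pow_succ]

theorem isFUnion_image_fiber {x : A} (hx : x ∈ ρ.range) :
    IsFUnion Γ q ((↑) '' {g : Γ | ρ g = x} : Set T) := by
  obtain ⟨g, rfl⟩ := hx
  convert isFUnion_leftCoset g.2 (Subgroup.map_subtype_le ρ.ker) using 1
  ext y
  constructor
  · rintro ⟨g', hg', rfl⟩
    exact ⟨_, ⟨g⁻¹ * g', (MonoidHom.eq_iff ρ).1 hg', rfl⟩, by simp⟩
  · rintro ⟨_, ⟨b, hb, rfl⟩, rfl⟩
    exact ⟨g * b, by simp [MonoidHom.mem_ker.1 hb], rfl⟩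

theorem IsFUnion.exists_forall_pow_pow_eq_mem {U : Set T} (hU : IsFUnion Γ Q U) (hUZ : U ⊆ Z)
    {h : Γ} (hθ : θ * ρ h = θ ^ Q) (hV : ∀ x ∈ V, x ^ Q ∈ V)
    (hZV : ∀ g : Γ, (g : T) ∈ Z ↔ θ * ρ g ∈ V) (hZ : ∀ k, FrobeniusSaturated (Q ^ k) Z)
    (hLang : ∀ k ≠ 0, ∀ x : T, ∃ β, β ^ Q ^ k = β * x) :
    ∃ N, IsFUnion Γ Q N ∧ N ⊆ Z ∧
      ∀ g u : Γ, ∀ n, (u : T) ∈ U → (θ * ρ u) ^ Q ^ n = θ * ρ g → (g : T) ∈ N := by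
  have hψ : Set.MapsTo (affinePow (h : T) Q) (Z ∩ Γ) Z := fun g ⟨hgZ, hgΓ⟩ ↦ by
    refine (hZV (affinePow h Q ⟨g, hgΓ⟩)).2 ?_
    have := mul_map_iterate_affinePow hθ ⟨g, hgΓ⟩ 1
    rw [Function.iterate_one, pow_one] at this
    exact this ▸ hV _ ((hZV _).1 hgZ)
  have hker : ∀ g ∈ Z ∩ Γ, ∀ y ∈ ρ.ker.map Γ.subtype, g * y ∈ Z := by
    rintro g ⟨hgZ, hgΓ⟩ _ ⟨y, hy, rfl⟩
    refine (hZV (⟨g, hgΓ⟩ * y)).2 ?_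
    rw [map_mul, MonoidHom.mem_ker.1 hy, mul_one]
    exact (hZV _).1 hgZ
  obtain ⟨N, hN, hNZ, hUN⟩ := hU.exists_iterate_affinePow_mem hUZ hZ hLang h.2 hψ
    (Subgroup.map_subtype_le ρ.ker) hker
  refine ⟨N, hN, hNZ, fun g u n hu hug ↦ ?_⟩
  rw [← mul_map_iterate_affinePow hθ, mul_right_inj] at hug
  have := hUN n u hu _ ⟨((affinePow h Q)^[n] u)⁻¹ * g, (MonoidHom.eq_iff ρ).1 hug.symm, rfl⟩
  rwa [Subgroup.subtype_apply, Subgroup.coe_mul, Subgroup.coe_inv, coe_iterate_affinePow,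
    mul_inv_cancel_left] at this

/-- Elements with a root of high order are `Q`-th powers inside the coset. Hence the points of
`Z ∩ Γ` not in the forward orbit of `U` have infinitely `Q`-divisible values, of which there are
finitely many. -/
theorem isFUnion_inter_of_pow_div_mem_range (hA : HomsToIntDetectTorsion A)
    (hAQ : ∀ x : A, x ^ Q = 1 → x = 1) (hQ : 1 < Q) (hΓ : Γ.FG) (hθ : θ ^ Q / θ ∈ ρ.range)
    (hV : ∀ x, x ^ Q ∈ V ↔ x ∈ V) (hZV : ∀ g : Γ, (g : T) ∈ Z ↔ θ * ρ g ∈ V)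
    (hZ : ∀ k, FrobeniusSaturated (Q ^ k) Z)
    (hLang : ∀ k ≠ 0, ∀ x : T, ∃ β, β ^ Q ^ k = β * x)
    (hroot : ∀ M, ∃ U, IsFUnion Γ Q U ∧ U ⊆ Z ∧
      ∀ g : Γ, (g : T) ∈ Z → (g : T) ∈ U ∨ ∃ y, y ^ Q ^ M = θ * ρ g) :
    IsFUnion Γ Q (Z ∩ Γ) := by
  have : Group.FG Γ := (Group.fg_iff_subgroup_fg Γ).2 hΓ
  have hR : ρ.range.FG := (Group.fg_iff_subgroup_fg _).1 (Group.fg_range ρ)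
  have hcoset {x : A} : x / θ ∈ ρ.range ↔ ∃ g, θ * ρ g = x := by
    simp only [MonoidHom.mem_range, eq_div_iff_mul_eq', mul_comm θ]
  obtain ⟨M, hM⟩ := hA.exists_pow_eq_of_div_mem hAQ hR hθ
  obtain ⟨U, hU, hUZ, hUM⟩ := hroot M
  obtain ⟨h, hh⟩ := hcoset.1 hθ
  obtain ⟨N, hN, hNZ, hUN⟩ := hU.exists_forall_pow_pow_eq_mem hUZ hh (fun x ↦ (hV x).2) hZV hZ hLang
  have hD := hA.finite_setOf_forall_exists_pow_eq (θ := θ) hR hQ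
  set D := {x | x / θ ∈ ρ.range ∧ ∀ n, ∃ y, y ^ Q ^ n = x}
  have hroots : ∀ x ∈ {x | x / θ ∈ ρ.range ∧ x ∈ V},
      x ∈ {x | ∃ g : Γ, (g : T) ∈ U ∧ θ * ρ g = x} ∨
        ∃ y ∈ {x | x / θ ∈ ρ.range ∧ x ∈ V}, y ^ Q = x := by
    rintro x ⟨hxR, hxV⟩
    obtain ⟨g, rfl⟩ := hcoset.1 hxR
    refine (hUM g ((hZV g).2 hxV)).imp (fun hg ↦ ⟨g, hg, rfl⟩) fun hy ↦ ?_
    obtain ⟨y, hyR, hyx⟩ := hM _ hxR hy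
    exact ⟨y, ⟨hyR, (hV y).1 (hyx ▸ hxV)⟩, hyx⟩
  have hcover : Z ∩ Γ = N ∪ ⋃ x ∈ D ∩ V, (↑) '' {g : Γ | ρ g = x / θ} := by
    refine Set.Subset.antisymm ?_ (Set.union_subset (Set.subset_inter hNZ hN.subset)
      (Set.iUnion₂_subset ?_))
    · rintro g ⟨hgZ, hgΓ⟩
      lift g to Γ using hgΓ
      have hgR : θ * ρ g / θ ∈ ρ.range := hcoset.2 ⟨g, rfl⟩
      obtain ⟨n, _, ⟨u, hu, rfl⟩, hug⟩ | hdiv :=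
        exists_pow_pow_eq_or_forall hroots ⟨hgR, (hZV g).1 hgZ⟩
      · exact .inl (hUN g u n hu hug)
      · exact .inr (Set.mem_biUnion ⟨⟨hgR, fun n ↦ (hdiv n).imp fun _ ↦ And.right⟩,
          (hZV g).1 hgZ⟩ ⟨g, (mul_div_cancel_left _ _).symm, rfl⟩)
    · rintro x ⟨-, hxV⟩ _ ⟨g, hg, rfl⟩
      exact ⟨(hZV g).2 (by rwa [hg, mul_div_cancel]), g.2⟩
  rw [hcover]
  exact hN.union (.biUnion (hD.inter_of_left V) fun x hx ↦ isFUnion_image_fiber hx.1.1)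

/-- Either `U` already exhausts `Z ∩ Γ`, or some value is a `q`-th power in `⟨ρ(Γ), θ⟩`, which makes
the coset `θ ρ(Γ)` periodic under Frobenius. -/
theorem isFUnion_inter_of_forall_exists_pow_eq (hA : HomsToIntDetectTorsion A)
    (hAq : ∀ x : A, x ^ q = 1 → x = 1) (hq : 1 < q) (hΓ : Γ.FG)
    (hV : ∀ x, x ^ q ∈ V ↔ x ∈ V) (hZV : ∀ g : Γ, (g : T) ∈ Z ↔ θ * ρ g ∈ V)
    (hZ : ∀ k, FrobeniusSaturated (q ^ k) Z)
    (hLang : ∀ k ≠ 0, ∀ x : T, ∃ β, β ^ q ^ k = β * x)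
    (hroot : ∀ M, ∃ U, IsFUnion Γ q U ∧ U ⊆ Z ∧
      ∀ g : Γ, (g : T) ∈ Z → (g : T) ∈ U ∨ ∃ y, y ^ q ^ M = θ * ρ g) :
    IsFUnion Γ q (Z ∩ Γ) := by
  have : Group.FG Γ := (Group.fg_iff_subgroup_fg Γ).2 hΓ
  have hR : ρ.range.FG := (Group.fg_iff_subgroup_fg _).1 (Group.fg_range ρ)
  have hRθ : (ρ.range ⊔ Subgroup.zpowers θ).FG :=
    hR.sup ⟨{θ}, by rw [Finset.coe_singleton, Subgroup.zpowers_eq_closure]⟩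
  obtain ⟨c, hc⟩ := hA.exists_pow_eq_of_mem hAq hRθ
  obtain ⟨U, hU, hUZ, hUc⟩ := hroot (1 + c)
  by_cases hgood : ∃ (g : Γ) (y : A), y ^ q ^ (1 + c) = θ * ρ g
  · obtain ⟨g, hg⟩ := hgood
    have hmem : θ * ρ g ∈ ρ.range ⊔ Subgroup.zpowers θ :=
      mul_comm (ρ g) θ ▸ Subgroup.mul_mem_sup ⟨g, rfl⟩ (Subgroup.mem_zpowers θ)
    obtain ⟨b, hb, hbg⟩ := hc 1 _ hmem hg
    rw [pow_one] at hbg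
    obtain ⟨e, he, hθ⟩ := exists_pow_pow_div_self_mem hq
      (MonoidHom.mem_range.2 ⟨g, rfl⟩) hb hbg.symm
    have hAe : ∀ x : A, x ^ q ^ e = 1 → x = 1 := fun x ↦
      (pow_pow_mem_iff (V := {1}) (fun y ↦ ⟨hAq y, fun hy ↦ by rw [hy, one_pow]; rfl⟩) e).1
    rw [← isFUnion_pow_iff he]
    refine isFUnion_inter_of_pow_div_mem_range hA hAe (Nat.one_lt_pow he hq) hΓ hθ
      (fun _ ↦ pow_pow_mem_iff hV e) hZV
      (fun k ↦ pow_mul q e k ▸ hZ _) (fun k hk ↦ pow_mul q e k ▸ hLang _ (mul_ne_zero he hk))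
      fun M ↦ ?_
    simpa only [isFUnion_pow_iff he, ← pow_mul] using hroot (e * M)
  · have : Z ∩ Γ = U := Set.Subset.antisymm (fun g ⟨hgZ, hgΓ⟩ ↦ (hUc ⟨g, hgΓ⟩ hgZ).resolve_right
      fun hy ↦ hgood ⟨_, hy⟩) (Set.subset_inter hUZ hU.subset)
    rwa [this]

end FrobeniusDynamics

section LinearEquations

/-- For a tuple of characters `χ`, the set of those `g` for which the vector `χ(g)` lies in the
linear subspace `V` of `Fⁱ`. -/
def characterSolutions {G ι F : Type*} [Monoid G] [Field F] (χ : G →* (ι → Fˣ))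
    (V : Submodule F (ι → F)) : Set G :=
  {g | (fun i ↦ (χ g i : F)) ∈ V}

variable {G ι F : Type*} [CommGroup G] [Field F] {χ : G →* (ι → Fˣ)}
  {V : Submodule F (ι → F)} (p : ℕ) [ExpChar F p]

theorem frobeniusSaturated_characterSolutions [Finite ι] (m : ℕ) :
    FrobeniusSaturated (p ^ m) (characterSolutions χ V) := fun z w n h ↦ by
  have key := mul_mem_of_forall_ge_mul_pow_mem p V (m := m) (n := n)
    (z := fun i ↦ (χ z i : F)) (x := fun i ↦ (χ w i : F)) fun s hs ↦ by
      have := h s hs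
      simpa [characterSolutions, Pi.mul_def, Pi.pow_def] using this
  simpa [characterSolutions, Pi.mul_def, Pi.pow_def] using key

theorem mul_pow_mem_characterSolutions_iff (r g : G) (n : ℕ) :
    r * g ^ p ^ n ∈ characterSolutions χ V ↔ g ∈
      characterSolutions χ (V.comap (twistedFrobenius p n fun i ↦ (χ r i : F))) := by
  simp [characterSolutions, twistedFrobenius_apply, Pi.mul_def, Pi.pow_def]

/-- The coefficients `cₗᵢ` are the nonzero entries of a reduced basis of `V`. If a Frobenius twist
of `V` has full rank, its reduced basis exhibits them as `p ^ n`-th powers up to the twist. -/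
theorem exists_unit_coefficients [Finite ι] (V : Submodule F (ι → F)) :
    ∃ (s : ι → Finset ι) (c : (Σ l, s l) → Fˣ),
      (∀ x, x ∈ V ↔ ∀ l, x l = ∑ i : s l, (c ⟨l, i⟩ : F) * x i) ∧
      ∀ n (t : ι → Fˣ),
        Module.finrank F (V.comap (twistedFrobenius p n fun i ↦ (t i : F))) = Module.finrank F V →
        ∃ y : (Σ l, s l) → Fˣ, ∀ l (i : s l), y ⟨l, i⟩ ^ p ^ n = c ⟨l, i⟩ * (t i / t l) := by
  classical
  obtain ⟨P, hP⟩ := exists_isPivotSet V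
  obtain ⟨v, -, hv⟩ := hP.exists_reducedBasis
  let s (l : ι) : Finset ι := {i ∈ P | v i l ≠ 0}
  have hs {l i : ι} (hi : i ∈ s l) : i ∈ P ∧ v i l ≠ 0 := Finset.mem_filter.1 hi
  refine ⟨s, fun x ↦ Units.mk0 (v x.2 x.1) (hs x.2.2).2, fun x ↦ ?_, fun n t ht ↦ ?_⟩
  · rw [hv, funext_iff]
    refine forall_congr' fun l ↦ ?_
    simp only [Units.val_mk0, Finset.sum_apply, Pi.smul_apply, smul_eq_mul]
    rw [Finset.univ_eq_attach, Finset.sum_attach (s l) fun i ↦ v i l * x i,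
      Finset.sum_filter_of_ne fun i _ ↦ left_ne_zero_of_mul]
    simp only [mul_comm]
  · obtain ⟨w, hw⟩ := exists_mul_eq_mul_pow_of_finrank_comap_eq p (fun i ↦ (t i).ne_zero) hP
      (fun x ↦ (hv x).1) ht
    have hw0 (x : Σ l, s l) : w x.2 x.1 ≠ 0 := fun h0 ↦ by
      have := hw x.2 (hs x.2.2).1 x.1
      rw [h0, zero_pow (expChar_pow_pos F p n).ne', mul_zero] at this
      exact (mul_ne_zero (t x.2).ne_zero (hs x.2.2).2) this
    refine ⟨fun x ↦ Units.mk0 _ (hw0 x), fun l i ↦ ?_⟩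
    rw [← mul_div_assoc, eq_div_iff_mul_eq', mul_comm _ (t i)]
    ext
    simp [hw i (hs i.2).1 l, mul_comm]

variable (s : ι → Finset ι)

/-- The homomorphism recording the ratios `χᵢ / χₗ` for all `l` and all `i ∈ s l`. -/
def characterRatios (χ : G →* (ι → Fˣ)) : G →* ((Σ l, s l) → Fˣ) where
  toFun g x := χ g x.2 / χ g x.1
  map_one' := by ext; simp
  map_mul' g h := funext fun x ↦ by simp [mul_div_mul_comm]

/-- The families `y` with `∑ᵢ yₗᵢ = 1` for every `l`. -/
def rowSumsOne (F : Type*) [Field F] : Set ((Σ l, s l) → Fˣ) :=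
  {y | ∀ l, ∑ i : s l, (y ⟨l, i⟩ : F) = 1}

variable {s}

theorem pow_mem_rowSumsOne_iff (n : ℕ) (y : (Σ l, s l) → Fˣ) :
    y ^ p ^ n ∈ rowSumsOne s F ↔ y ∈ rowSumsOne s F := by
  refine forall_congr' fun l ↦ ?_
  simp only [Pi.pow_apply, Units.val_pow_eq_pow_val, ← iterateFrobenius_def, ← map_sum,
    map_eq_one_iff _ (iterateFrobenius_inj F p n)]

theorem mem_characterSolutions_iff_mul_characterRatios_mem {c : (Σ l, s l) → Fˣ}
    (hc : ∀ x, x ∈ V ↔ ∀ l, x l = ∑ i : s l, (c ⟨l, i⟩ : F) * x i) (g : G) :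
    g ∈ characterSolutions χ V ↔ c * characterRatios s χ g ∈ rowSumsOne s F := by
  refine (hc _).trans (forall_congr' fun l ↦ ?_)
  rw [eq_comm, ← div_eq_one_iff_eq (χ g l).ne_zero, Finset.sum_div]
  simp [characterRatios, mul_div_assoc]

end LinearEquations

section LinearCase

variable {T : Type*} [CommGroup T] {Γ : Subgroup T} {q : ℕ}

theorem exists_isFUnion_subset_of_forall_coset (hΓ : Γ.FG) {m : ℕ} (hm : m ≠ 0) {S D : Set Γ}
    (h : ∀ r, IsFUnion Γ q ((↑) '' {g : Γ | r * g ^ m ∈ S}) ∨ ∀ g, r * g ^ m ∈ D) :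
    ∃ U, IsFUnion Γ q U ∧ U ⊆ (↑) '' S ∧ ∀ g ∈ S, (g : T) ∈ U ∨ g ∈ D := by
  have : Group.FG Γ := (Group.fg_iff_subgroup_fg Γ).2 hΓ
  have := Subgroup.finiteIndex_range_powMonoidHom_of_fg Γ hm
  let W := (powMonoidHom m : Γ →* Γ).range
  let Y (r : Γ) : Set T := (↑) '' {g : Γ | r * g ^ m ∈ S}
  refine ⟨⋃ c ∈ {c : Γ ⧸ W | IsFUnion Γ q (Y c.out)}, (fun x ↦ (c.out : T) * x ^ m) '' Y c.out,
    .biUnion (Set.toFinite _) fun c hc ↦ IsFUnion.image_mul_pow hc c.out.2 m,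
    Set.iUnion₂_subset ?_, fun g hg ↦ ?_⟩
  · rintro c - _ ⟨_, ⟨u, hu, rfl⟩, rfl⟩
    exact ⟨_, hu, rfl⟩
  · obtain ⟨⟨_, u, rfl⟩, hu⟩ := QuotientGroup.mk_out_eq_mul W g
    have hgu : g = (g : Γ ⧸ W).out * u⁻¹ ^ m := by simp [hu]
    generalize (g : Γ ⧸ W) = c at hgu
    subst hgu
    exact (h c.out).imp (fun hc ↦ Set.mem_biUnion hc ⟨_, ⟨u⁻¹, hg, rfl⟩, rfl⟩) fun hD ↦ hD u⁻¹

variable {ι L : Type*} [Field L] {p a : ℕ} [ExpChar L p]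

theorem exists_preimage_characterSolutions_eq [Finite ι] {K : Type*} [Field K] {f : L →+* K}
    {χ : T →* (ι → Kˣ)} {χL : Γ →* (ι → Lˣ)} (hχ : ∀ g i, f (χL g i) = χ g i)
    (V : Submodule L (ι → L)) :
    ∃ U, ((↑) : Γ → T) ⁻¹' characterSolutions χ U = characterSolutions χL V := by
  obtain ⟨U, hU⟩ := exists_submodule_forall_map_mem_iff f V
  refine ⟨U, Set.ext fun g ↦ ?_⟩
  simp only [characterSolutions, Set.mem_preimage, Set.mem_ofPred_eq, ← hU, hχ]

/-- On the coset `r Γ ^ (p ^ n)` one de-twists by Frobenius. If the twist of `V` by `χ(r)` has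
smaller rank, the induction applies to it; otherwise the twist makes all values `c · χᵢ(g) / χₗ(g)`
on the coset `p ^ n`-th powers. -/
theorem exists_isFUnion_characterSolutions_or_pow_eq [Finite ι] (hΓ : Γ.FG) {χ : Γ →* (ι → Lˣ)}
    {V : Submodule L (ι → L)} {s : ι → Finset ι} {c : (Σ l, s l) → Lˣ} {n : ℕ}
    (hc : ∀ t : ι → Lˣ,
      Module.finrank L (V.comap (twistedFrobenius p n fun i ↦ (t i : L))) = Module.finrank L V →
      ∃ y : (Σ l, s l) → Lˣ, ∀ l (i : s l), y ⟨l, i⟩ ^ p ^ n = c ⟨l, i⟩ * (t i / t l))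
    (ih : ∀ W : Submodule L (ι → L), Module.finrank L W < Module.finrank L V →
      IsFUnion Γ q ((↑) '' characterSolutions χ W)) :
    ∃ U, IsFUnion Γ q U ∧ U ⊆ (↑) '' characterSolutions χ V ∧
      ∀ g ∈ characterSolutions χ V, (g : T) ∈ U ∨ ∃ y, y ^ p ^ n = c * characterRatios s χ g := by
  refine exists_isFUnion_subset_of_forall_coset
    (D := {g | ∃ y, y ^ p ^ n = c * characterRatios s χ g}) hΓ (expChar_pow_pos L p n).ne'
    fun r ↦ ?_
  obtain hlt | heq := (finrank_comap_twistedFrobenius_le p n (t := fun i ↦ (χ r i : L))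
    (fun i ↦ (χ r i).ne_zero) V).lt_or_eq
  · left
    simpa only [mul_pow_mem_characterSolutions_iff, Set.ofPred_mem_eq] using ih _ hlt
  · right
    intro g
    obtain ⟨y, hy⟩ := hc _ heq
    refine ⟨y * characterRatios s χ g, ?_⟩
    rw [mul_pow, map_mul, map_pow, ← mul_assoc]
    exact congrArg (· * _) (funext fun x ↦ hy x.1 x.2)

theorem isFUnion_image_characterSolutions [Finite ι] {K : Type*} [Field K] [ExpChar K p]
    (hq : 1 < p ^ a) (hL : HomsToIntDetectTorsion Lˣ) (hΓ : Γ.FG)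
    (hLang : ∀ k ≠ 0, ∀ x : T, ∃ β, β ^ (p ^ a) ^ k = β * x)
    {f : L →+* K} {χ : T →* (ι → Kˣ)} {χL : Γ →* (ι → Lˣ)} (hχ : ∀ g i, f (χL g i) = χ g i)
    (V : Submodule L (ι → L)) :
    IsFUnion Γ (p ^ a) ((↑) '' characterSolutions χL V) := by
  induction hd : Module.finrank L V using Nat.strong_induction_on generalizing V with
  | _ d ih =>
  subst hd
  obtain ⟨U, hU⟩ := exists_preimage_characterSolutions_eq hχ V
  obtain ⟨s, c, hc, hcroot⟩ := exists_unit_coefficients p V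
  have hinj (x : (Σ l, s l) → Lˣ) (hx : x ^ p ^ a = 1) : x = 1 := by
    ext i
    have := congrArg Units.val (congrFun hx i)
    rwa [Pi.pow_apply, Units.val_pow_eq_pow_val, ← iterateFrobenius_def, Pi.one_apply,
      Units.val_one, map_eq_one_iff _ (iterateFrobenius_inj L p a)] at this
  have hUV : Subtype.val '' characterSolutions χL V = characterSolutions χ U ∩ Γ := by
    rw [← hU, Set.inter_comm]
    exact Subtype.image_preimage_coe _ _
  rw [hUV]
  refine isFUnion_inter_of_forall_exists_pow_eq (ρ := characterRatios s χL) hL.pi hinj hq hΓ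
    (pow_mem_rowSumsOne_iff p a)
    (fun g ↦ .trans (Set.ext_iff.1 hU g) (mem_characterSolutions_iff_mul_characterRatios_mem hc g))
    (fun k ↦ pow_mul p a k ▸ frobeniusSaturated_characterSolutions p _) hLang fun M ↦ ?_
  obtain ⟨B, hB, hBV, hroot⟩ :=
    exists_isFUnion_characterSolutions_or_pow_eq hΓ (hcroot (a * M)) fun W hW ↦ ih _ hW W rfl
  rw [hUV] at hBV
  refine ⟨B, hB, hBV.trans Set.inter_subset_left, fun g hg ↦ ?_⟩
  rw [← pow_mul]
  exact hroot g (Set.ext_iff.1 hU g |>.1 hg)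

end LinearCase

section Subvarieties

open MvPolynomial

theorem exists_finset_forall_eval_eq_zero_iff {σ R : Type*} [Finite σ] [CommRing R]
    [IsNoetherianRing R] (𝒮 : Set (MvPolynomial σ R)) :
    ∃ s : Finset (MvPolynomial σ R), ∀ x,
      (∀ f ∈ 𝒮, eval x f = 0) ↔ ∀ f ∈ s, eval x f = 0 := by
  obtain ⟨s, hs⟩ := IsNoetherian.noetherian (Ideal.span 𝒮)
  have hker (S : Set (MvPolynomial σ R)) (x : σ → R) :
      (∀ f ∈ S, eval x f = 0) ↔ Ideal.span S ≤ RingHom.ker (eval x) := by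
    rw [Ideal.span_le]
    rfl
  exact ⟨s, fun x ↦ by rw [hker, ← hs]; exact (hker s x).symm⟩

theorem exists_pow_pow_eq_mul {ι K : Type*} [Field K] [IsSepClosed K] (p : ℕ)
    [Fact p.Prime] [CharP K p] {m : ℕ} (hm : m ≠ 0) (x : ι → Kˣ) : ∃ β, β ^ p ^ m = β * x := by
  have hp : 1 < p ^ m := Nat.one_lt_pow hm (Fact.out : p.Prime).one_lt
  have : NeZero ((p ^ m - 1 : ℕ) : K) := ⟨by simp [Nat.cast_sub hp.le, hm]⟩
  choose β hβ using fun i ↦ IsSepClosed.exists_pow_nat_eq (x i : K) (p ^ m - 1)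
  have hβ0 (i : ι) : β i ≠ 0 := fun h ↦ (x i).ne_zero <| by
    rw [← hβ, h, zero_pow (Nat.sub_pos_of_lt hp).ne']
  refine ⟨fun i ↦ Units.mk0 (β i) (hβ0 i), ?_⟩
  ext i
  simp [← hβ, mul_pow_sub_one (zero_lt_one.trans hp).ne']

variable {ι : Type*}

/-- The tuple of the monomial characters `x ↦ ∏ᵢ xᵢ ^ mᵢ` for the exponents `m ∈ E`. -/
def monomialCharacters [Fintype ι] {M : Type*} [CommMonoid M] (E : Finset (ι →₀ ℕ)) :
    (ι → M) →* (E → M) where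
  toFun x m := ∏ i, x i ^ m.1 i
  map_one' := by ext; simp
  map_mul' x y := by ext; simp [mul_pow, Finset.prod_mul_distrib]

theorem exists_forall_eval_eq_zero_iff_mem_characterSolutions [Fintype ι] {F κ : Type*} [Field F]
    [Finite κ] (f : κ → MvPolynomial ι F) :
    ∃ (E : Finset (ι →₀ ℕ)) (V : Submodule F (E → F)), ∀ x : ι → Fˣ,
      (∀ j, eval (fun i ↦ (x i : F)) (f j) = 0) ↔
        x ∈ characterSolutions (monomialCharacters E) V := by
  classical
  cases nonempty_fintype κ
  let E := Finset.univ.biUnion fun j ↦ (f j).support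
  refine ⟨E, LinearMap.ker (Matrix.of fun j (m : E) ↦ coeff m (f j)).mulVecLin, fun x ↦ ?_⟩
  refine .trans (forall_congr' fun j ↦ ?_) funext_iff.symm
  have hE : (f j).support ⊆ E :=
    Finset.subset_biUnion_of_mem (fun j ↦ (f j).support) (Finset.mem_univ j)
  rw [eval_eq', Finset.sum_subset hE fun m _ hm ↦ by rw [notMem_support_iff.1 hm, zero_mul],
    ← Finset.sum_coe_sort]
  simp [Matrix.mulVec, dotProduct, monomialCharacters]

variable {K : Type*} [Field K]

theorem exists_essFiniteType_lift [Finite ι] (k : Type*) [Field k] [Algebra k K]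
    {Γ : Subgroup (ι → Kˣ)} (hΓ : Γ.FG) (s : Finset (MvPolynomial ι K)) :
    ∃ L : IntermediateField k K, Algebra.EssFiniteType k L ∧
      (∃ φ : Γ →* (ι → Lˣ), ∀ g i, algebraMap L K (φ g i) = (g : ι → Kˣ) i) ∧
      ∀ f ∈ s, f ∈ Set.range (map (algebraMap L K)) := by
  classical
  cases nonempty_fintype ι
  obtain ⟨t, rfl⟩ := hΓ
  let A : Finset K :=
    s.biUnion (fun f ↦ f.coeffs) ∪ t.biUnion fun g ↦ Finset.univ.image fun i ↦ (g i : K)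
  let L := IntermediateField.adjoin k (A : Set K)
  have hAL {x : K} (hx : x ∈ A) : x ∈ L := IntermediateField.subset_adjoin k _ hx
  let j : (ι → Lˣ) →* (ι → Kˣ) := (Units.map (algebraMap L K : L →* K)).compLeft ι
  have hj : Function.Injective j := (Units.map_injective (algebraMap L K).injective).comp_left
  have hΓj : Subgroup.closure t ≤ j.range := (Subgroup.closure_le _).2 fun g hg ↦ by
    have hgL (i : ι) : (g i : K) ∈ L := hAL <| Finset.mem_union_right _ <|
      Finset.mem_biUnion.2 ⟨g, hg, Finset.mem_image_of_mem _ (Finset.mem_univ i)⟩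
    exact ⟨fun i ↦ Units.mk0 ⟨g i, hgL i⟩ fun h ↦ (g i).ne_zero (congrArg Subtype.val h),
      funext fun i ↦ Units.ext rfl⟩
  refine ⟨L, IntermediateField.essFiniteType_iff.2 ⟨A, rfl⟩,
    ⟨(MonoidHom.ofInjective hj).symm.toMonoidHom.comp (Subgroup.inclusion hΓj), fun g i ↦ ?_⟩,
    fun f hf ↦ ?_⟩
  · exact congrArg (fun x ↦ (x i : K))
      (MonoidHom.apply_ofInjective_symm hj (Subgroup.inclusion hΓj g))
  · refine mem_range_map_iff_coeffs_subset.2 fun x hx ↦ ?_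
    exact ⟨⟨x, hAL (Finset.mem_union_left _ (Finset.mem_biUnion.2 ⟨f, hf, hx⟩))⟩, rfl⟩

theorem IsTorusSubvariety.isFUnion_inter [IsSepClosed K] (p : ℕ) [Fact p.Prime] [CharP K p]
    {a N : ℕ} (ha : a ≠ 0) {X : Set (Fin N → Kˣ)} (hX : IsTorusSubvariety K X)
    {Γ : Subgroup (Fin N → Kˣ)} (hΓ : Γ.FG) : IsFUnion Γ (p ^ a) (X ∩ Γ) := by
  obtain ⟨𝒮, rfl⟩ := hX
  obtain ⟨s, hs⟩ := exists_finset_forall_eval_eq_zero_iff 𝒮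
  let : Algebra (ZMod p) K := ZMod.algebra K p
  obtain ⟨L, _, ⟨φ, hφ⟩, hsL⟩ := exists_essFiniteType_lift (ZMod p) hΓ s
  choose f hf using fun f : s ↦ hsL f f.2
  obtain ⟨E, V, hV⟩ := exists_forall_eval_eq_zero_iff_mem_characterSolutions f
  have heval (g : Γ) (j : s) : eval (fun i ↦ ((g : Fin N → Kˣ) i : K)) j =
      algebraMap L K (eval (fun i ↦ (φ g i : L)) (f j)) := by
    rw [eval₂_comp, ← eval_map, hf]
    simp only [Function.comp_def, hφ]
  have hmem (g : Γ) : (∀ f ∈ 𝒮, eval (fun i ↦ ((g : Fin N → Kˣ) i : K)) f = 0) ↔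
      g ∈ characterSolutions ((monomialCharacters E).comp φ) V := by
    refine (hs _).trans (.trans ?_ (hV (φ g)))
    simp only [← map_eq_zero (algebraMap L K), ← heval, Subtype.forall]
  have himage : {x : Fin N → Kˣ | ∀ f ∈ 𝒮, eval (fun i ↦ (x i : K)) f = 0} ∩ Γ =
      (↑) '' characterSolutions ((monomialCharacters E).comp φ) V := by
    ext x
    constructor
    · rintro ⟨hx, hxΓ⟩
      exact ⟨⟨x, hxΓ⟩, (hmem ⟨x, hxΓ⟩).1 hx, rfl⟩
    · rintro ⟨g, hg, rfl⟩
      exact ⟨(hmem g).2 hg, g.2⟩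
  rw [himage]
  refine isFUnion_image_characterSolutions (χ := monomialCharacters E) (f := algebraMap L K)
    (Nat.one_lt_pow ha (Fact.out : p.Prime).one_lt)
    (homsToIntDetectTorsion_units_of_essFiniteType (ZMod p) L) hΓ (fun k hk x ↦ ?_) (fun g m ↦ ?_) V
  · rw [← pow_mul]
    exact exists_pow_pow_eq_mul p (mul_ne_zero ha hk) x
  · simp [monomialCharacters, ← hφ]

variable {N q : ℕ} {Γ : Subgroup (Fin N → Kˣ)}

theorem IsFSet.isFqSet {k : ℕ} (hk : k ≠ 0) {C : Set (Fin N → Kˣ)} (hC : IsFSet Γ (q ^ k) C) :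
    IsFqSet q Γ C := by
  obtain ⟨hCΓ, r, α₀, α, B, hB, rfl⟩ := hC
  refine ⟨{g | ∃ n : Fin r → ℕ, g = α₀ * ∏ i, α i ^ q ^ (k * n i)}, B,
    ⟨?_, r, k, Nat.one_le_iff_ne_zero.2 hk, α₀, α, rfl⟩, hB, ?_⟩
  · rintro _ ⟨n, rfl⟩
    exact hCΓ ⟨n, 1, B.one_mem, by simp only [pow_mul, mul_one]⟩
  · ext g
    constructor
    · rintro ⟨n, b, hb, rfl⟩
      exact ⟨_, ⟨n, rfl⟩, b, hb, by simp only [pow_mul]⟩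
    · rintro ⟨_, ⟨n, rfl⟩, b, hb, rfl⟩
      exact ⟨n, b, hb, by simp only [pow_mul]⟩

theorem IsFUnion.exists_iUnion_isFqSet {S : Set (Fin N → Kˣ)} (hS : IsFUnion Γ q S) :
    ∃ (n : ℕ) (Ts : Fin n → Set (Fin N → Kˣ)), (∀ i, IsFqSet q Γ (Ts i)) ∧ S = ⋃ i, Ts i := by
  obtain ⟨𝒞, h𝒞, hC, rfl⟩ := hS
  obtain ⟨n, Ts, -, rfl⟩ := h𝒞.fin_param
  refine ⟨n, Ts, fun i ↦ ?_, Set.sUnion_range Ts⟩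
  obtain ⟨k, hk, h⟩ := hC _ (Set.mem_range_self i)
  exact h.isFqSet hk

end Subvarieties

theorem moosa_scanlon_torus_general
    (K : Type*) [Field K] [IsSepClosed K] (p : ℕ) (hp : p.Prime) [CharP K p]
    (q a : ℕ) (ha : 1 ≤ a) (hq : q = p ^ a)
    (N : ℕ) (X : Set (Fin N → Kˣ)) (hX : IsTorusSubvariety K X)
    (Γ : Subgroup (Fin N → Kˣ)) (hΓ : Γ.FG) :
    ∃ (n : ℕ) (Ts : Fin n → Set (Fin N → Kˣ)),
      (∀ i, IsFqSet q Γ (Ts i)) ∧ X ∩ ↑Γ = ⋃ i, Ts i := by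
  have : Fact p.Prime := ⟨hp⟩
  subst hq
  exact (hX.isFUnion_inter p (Nat.one_le_iff_ne_zero.1 ha) hΓ).exists_iUnion_isFqSet

/-- Moosa–Scanlon's theorem (torus case): over an algebraically closed field `K` of
characteristic `p > 0`, if `Γ` is a finitely generated subgroup of `(Kˣ)^N` invariant
under some power `F^ℓ` of the `q`-power Frobenius `F : x ↦ x^q`, then the intersection
of a subvariety `X` of `(Kˣ)^N` with `Γ` is a finite union of `F`-sets in `Γ`. -/
theorem moosa_scanlon_torus
    (K : Type*) [Field K] [IsAlgClosed K] (p : ℕ) (hp : p.Prime) [CharP K p]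
    (q a : ℕ) (ha : 1 ≤ a) (hq : q = p ^ a)
    (N : ℕ) (hN : 1 ≤ N) (X : Set (Fin N → Kˣ)) (hX : IsTorusSubvariety K X)
    (Γ : Subgroup (Fin N → Kˣ)) (hΓ : Γ.FG)
    (ℓ : ℕ) (hℓ : 1 ≤ ℓ) (hinv : ∀ γ ∈ Γ, γ ^ (q ^ ℓ) ∈ Γ) :
    ∃ (n : ℕ) (Ts : Fin n → Set (Fin N → Kˣ)),
      (∀ i, IsFqSet q Γ (Ts i)) ∧ X ∩ ↑Γ = ⋃ i, Ts i := by
  exact moosa_scanlon_torus_general K p hp q a ha hq N X hX Γ hΓ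
end

section
/- (Proposition on curves, part (i), torus case.) Let K be an algebraically closed field of characteristic p > 0, let f ∈ K[x, y] be an irreducible polynomial, and let X = {(a, b) ∈ (Kˣ)² : f(a, b) = 0}; assume X is infinite, so that X is an irreducible curve in the torus (Kˣ)². Let Γ be a finitely generated subgroup of (Kˣ)². If the stabilizer Stab(X) = {g ∈ (Kˣ)² : g·X = X} is infinite, then X ∩ Γ is either empty or a coset of a subgroup of Γ. -/
/-!
For `x, y ∈ X` and `h = x / y`, the curves `X` and `h⁻¹ • X` share the infinite set `Stab(X) • y`.
Two plane curves, one of them irreducible, meet in finitely many points unless the irreducible one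
is contained in the other, so `h • X ⊆ X`, and by symmetry `h ∈ Stab(X)`. Hence `Stab(X)` acts
transitively on `X`, and every `γ ∈ X ∩ Γ` gives `X ∩ Γ = γ • (Stab(X) ∩ Γ)`.
-/

section PlaneCurves

open MvPolynomial

lemma ringKrullDim_quotient_span_pair_add_two_le {R : Type*} [CommRing R] [IsDomain R] {f g : R}
    (hf : Prime f) (hfg : ¬ f ∣ g) :
    ringKrullDim (R ⧸ Ideal.span {f, g}) + 2 ≤ ringKrullDim R := by
  have : (Ideal.span {f}).IsPrime := (Ideal.span_singleton_prime hf.ne_zero).2 hf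
  have hg : Ideal.Quotient.mk (Ideal.span {f}) g ≠ 0 := by
    rwa [Ne, Ideal.Quotient.eq_zero_iff_dvd]
  have hmap : (Ideal.span {g}).map (Ideal.Quotient.mk (Ideal.span {f})) =
      Ideal.span {Ideal.Quotient.mk (Ideal.span {f}) g} := by
    rw [Ideal.map_span, Set.image_singleton]
  have e : ((R ⧸ Ideal.span {f}) ⧸ Ideal.span {Ideal.Quotient.mk (Ideal.span {f}) g}) ≃+*
      R ⧸ Ideal.span {f, g} :=
    (Ideal.quotEquivOfEq hmap.symm).trans <|
      (DoubleQuot.quotQuotEquivQuotSup _ _).trans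
        (Ideal.quotEquivOfEq (Ideal.span_insert f {g}).symm)
  calc ringKrullDim (R ⧸ Ideal.span {f, g}) + 2
      = ringKrullDim ((R ⧸ Ideal.span {f}) ⧸
          Ideal.span {Ideal.Quotient.mk (Ideal.span {f}) g}) + 1 + 1 := by
        rw [ringKrullDim_eq_of_ringEquiv e, add_assoc, one_add_one_eq_two]
    _ ≤ ringKrullDim (R ⧸ Ideal.span {f}) + 1 := by
        gcongr
        exact ringKrullDim_quotient_succ_le_of_nonZeroDivisor (mem_nonZeroDivisors_of_ne_zero hg)
    _ ≤ ringKrullDim R :=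
        ringKrullDim_quotient_succ_le_of_nonZeroDivisor (mem_nonZeroDivisors_of_ne_zero hf.ne_zero)

lemma finite_zeroLocus_of_krullDimLE_zero {σ k K : Type*} [Finite σ] [Field k] [Field K]
    [Algebra k K] (I : Ideal (MvPolynomial σ k)) [Ring.KrullDimLE 0 (MvPolynomial σ k ⧸ I)] :
    (zeroLocus K I).Finite := by
  have : Module.Finite k (MvPolynomial σ k ⧸ I) := (Module.finite_iff_krullDimLE_zero k _).2 ‹_›
  let evalAt (v : zeroLocus K I) : (MvPolynomial σ k ⧸ I) →ₐ[k] K :=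
    Ideal.Quotient.liftₐ I (aeval v.1) v.2
  have evalAt_injective : Function.Injective evalAt := fun v w hvw ↦
    Subtype.ext <| funext fun i ↦ by
      have hX : aeval v.1 (X i) = aeval w.1 (X i) :=
        DFunLike.congr_fun hvw (Ideal.Quotient.mk I (X i))
      simpa only [aeval_X] using hX
  exact Set.finite_coe_iff.1 (Finite.of_injective evalAt evalAt_injective)

lemma dvd_of_infinite_zeroLocus_span_pair {σ k K : Type*} [Finite σ] [Field k] [Field K]
    [Algebra k K] (hσ : Nat.card σ ≤ 2) {f g : MvPolynomial σ k} (hf : Irreducible f)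
    (hfg : (zeroLocus K (Ideal.span {f, g})).Infinite) : f ∣ g := by
  by_contra hdvd
  have hdim : ringKrullDim (MvPolynomial σ k ⧸ Ideal.span {f, g}) + 2 ≤ 0 + 2 :=
    calc ringKrullDim (MvPolynomial σ k ⧸ Ideal.span {f, g}) + 2
        ≤ ringKrullDim (MvPolynomial σ k) :=
          ringKrullDim_quotient_span_pair_add_two_le hf.prime hdvd
      _ = Nat.card σ := by
          rw [ringKrullDim_of_isNoetherianRing, ringKrullDim_eq_zero_of_field, zero_add]
      _ ≤ 0 + 2 := by
          rw [zero_add]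
          exact_mod_cast hσ
  have : Ring.KrullDimLE 0 (MvPolynomial σ k ⧸ Ideal.span {f, g}) :=
    Ring.krullDimLE_iff.2 (ENat.WithBot.add_le_add_natCast_right_iff.1 hdim)
  exact hfg (finite_zeroLocus_of_krullDimLE_zero _)

lemma eval_bind₁_C_mul_X {σ R : Type*} [CommSemiring R] (c v : σ → R) (f : MvPolynomial σ R) :
    eval v (bind₁ (fun i ↦ C (c i) * X i) f) = eval (c * v) f := by
  have h := eval₂Hom_bind₁ (RingHom.id R) v (fun i ↦ C (c i) * X i) f
  simpa [Pi.mul_def] using h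

end PlaneCurves

section Stabilizer

open scoped Pointwise

open MulAction MvPolynomial

lemma inter_subgroup_eq_op_smul_stabilizer_inf {G : Type*} [Group G] {X : Set G} {Γ : Subgroup G}
    (hX : ∀ x ∈ X, ∀ y ∈ X, x / y ∈ stabilizer G X) {γ : G} (hγX : γ ∈ X) (hγΓ : γ ∈ Γ) :
    X ∩ Γ = MulOpposite.op γ • ((stabilizer G X ⊓ Γ : Subgroup G) : Set G) := by
  ext g
  rw [mem_rightCoset_iff, SetLike.mem_coe, Subgroup.mem_inf, Γ.mul_mem_cancel_right (inv_mem hγΓ)]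
  refine and_congr_left fun _ ↦ ⟨fun hg ↦ div_eq_mul_inv g γ ▸ hX g hg γ hγX, fun hg ↦ ?_⟩
  simpa using (mem_stabilizer_set.1 hg γ).2 hγX

variable {σ K G : Type*} [Field K] [CommGroup G]

/-- The curve `f = 0` in a group `G` that is mapped multiplicatively to affine space by `ι`; for
the two-dimensional torus, `ι` is `torusCoords`. -/
def zeroSet (ι : G →* (σ → K)) (f : MvPolynomial σ K) : Set G :=
  {g | eval (ι g) f = 0}

variable [Finite σ] {ι : G →* (σ → K)} {f : MvPolynomial σ K}

lemma mul_mem_zeroSet_of_infinite (hι : Function.Injective ι) (hσ : Nat.card σ ≤ 2)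
    (hf : Irreducible f) {h : G} (hinf : {u ∈ zeroSet ι f | h * u ∈ zeroSet ι f}.Infinite)
    {z : G} (hz : z ∈ zeroSet ι f) : h * z ∈ zeroSet ι f := by
  set g := bind₁ (fun i ↦ C (ι h i) * X i) f
  have eval_g (u : G) : eval (ι u) g = eval (ι (h * u)) f := by
    rw [eval_bind₁_C_mul_X, map_mul]
  have hfg : f ∣ g := by
    refine dvd_of_infinite_zeroLocus_span_pair (K := K) hσ hf ((hinf.image hι.injOn).mono ?_)
    rintro _ ⟨u, ⟨hu, hhu⟩, rfl⟩
    rw [zeroLocus_span]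
    rintro q (rfl | rfl)
    · exact hu
    · exact (eval_g u).trans hhu
  exact (eval_g z).symm.trans (zero_dvd_iff.1 (hz ▸ map_dvd (eval (ι z)) hfg))

lemma div_mul_mem_zeroSet (hι : Function.Injective ι) (hσ : Nat.card σ ≤ 2) (hf : Irreducible f)
    (hstab : (stabilizer G (zeroSet ι f) : Set G).Infinite) {x y z : G} (hx : x ∈ zeroSet ι f)
    (hy : y ∈ zeroSet ι f) (hz : z ∈ zeroSet ι f) : x / y * z ∈ zeroSet ι f := by
  refine mul_mem_zeroSet_of_infinite hι hσ hf
    ((hstab.image (mul_left_injective y).injOn).mono ?_) hz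
  rintro _ ⟨s, hs, rfl⟩
  refine ⟨(mem_stabilizer_set.1 hs y).2 hy, ?_⟩
  rw [mul_left_comm, div_mul_cancel]
  exact (mem_stabilizer_set.1 hs x).2 hx

lemma div_mem_stabilizer_zeroSet (hι : Function.Injective ι) (hσ : Nat.card σ ≤ 2)
    (hf : Irreducible f) (hstab : (stabilizer G (zeroSet ι f) : Set G).Infinite) {x y : G}
    (hx : x ∈ zeroSet ι f) (hy : y ∈ zeroSet ι f) : x / y ∈ stabilizer G (zeroSet ι f) := by
  refine mem_stabilizer_set.2 fun z ↦ ⟨fun hz ↦ ?_, div_mul_mem_zeroSet hι hσ hf hstab hx hy⟩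
  simpa only [smul_eq_mul, ← mul_assoc, div_mul_div_cancel, div_self', one_mul] using
    div_mul_mem_zeroSet hι hσ hf hstab hy hx hz

theorem curve_intersection_coset_of_infinite_stabilizer_general (hι : Function.Injective ι)
    (hσ : Nat.card σ ≤ 2) (hf : Irreducible f) (Γ : Subgroup G)
    (hstab : (stabilizer G (zeroSet ι f) : Set G).Infinite) :
    zeroSet ι f ∩ Γ = ∅ ∨
      ∃ (γ : G) (B : Subgroup G), γ ∈ Γ ∧ B ≤ Γ ∧
        zeroSet ι f ∩ Γ = {g | ∃ b ∈ B, g = γ * b} := by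
  refine (zeroSet ι f ∩ Γ).eq_empty_or_nonempty.imp_right fun ⟨γ, hγX, hγΓ⟩ ↦
    ⟨γ, stabilizer G (zeroSet ι f) ⊓ Γ, hγΓ, inf_le_right, ?_⟩
  rw [inter_subgroup_eq_op_smul_stabilizer_inf
    (fun _ hx _ hy ↦ div_mem_stabilizer_zeroSet hι hσ hf hstab hx hy) hγX hγΓ, op_smul_eq_smul]
  ext g
  simp only [Set.mem_smul_set, SetLike.mem_coe, smul_eq_mul, Set.mem_ofPred_eq, eq_comm]

end Stabilizer

/-- The inclusion of the two-dimensional torus into the affine plane. -/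
def torusCoords (K : Type*) [CommMonoid K] : Kˣ × Kˣ →* (Fin 2 → K) where
  toFun g := ![g.1, g.2]
  map_one' := by
    ext i
    fin_cases i <;> rfl
  map_mul' g h := by
    ext i
    fin_cases i <;> rfl

lemma torusCoords_injective (K : Type*) [CommMonoid K] : Function.Injective (torusCoords K) :=
  fun _ _ h ↦ Prod.ext (Units.ext (congrFun h 0)) (Units.ext (congrFun h 1))

/-- Proposition on curves, part (i) (torus case): let `X ⊆ (Kˣ)²` be the zero set of an
irreducible polynomial `f ∈ K[x,y]`, an infinite (hence irreducible) curve in the torus,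
and `Γ` a finitely generated subgroup of `(Kˣ)²`. If the stabilizer of `X` in `(Kˣ)²`
is infinite, then `X ∩ Γ` is either empty or a coset of a subgroup of `Γ`. -/
theorem curve_intersection_coset_of_infinite_stabilizer
    (K : Type*) [Field K] [IsAlgClosed K] (p : ℕ) (hp : p.Prime) [CharP K p]
    (f : MvPolynomial (Fin 2) K) (hf : Irreducible f)
    (X : Set (Kˣ × Kˣ))
    (hX : X = {g : Kˣ × Kˣ | MvPolynomial.eval ![(g.1 : K), (g.2 : K)] f = 0})
    (hXinf : X.Infinite)
    (Γ : Subgroup (Kˣ × Kˣ)) (hΓ : Γ.FG)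
    (hstab : {g : Kˣ × Kˣ | (fun x => g * x) '' X = X}.Infinite) :
    X ∩ ↑Γ = ∅ ∨
      ∃ (γ : Kˣ × Kˣ) (B : Subgroup (Kˣ × Kˣ)), γ ∈ Γ ∧ B ≤ Γ ∧
        X ∩ ↑Γ = {g | ∃ b ∈ B, g = γ * b} := by
  subst hX
  exact curve_intersection_coset_of_infinite_stabilizer_general (torusCoords_injective K)
    (Nat.card_fin 2).le hf Γ hstab
end
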